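/- arXiv:2410.01549 — 4 statements merged into one kernel-verified Lean document; each statement's English description precedes it below -/
import Mathlib

section
/- Let k ≥ 5 be odd and let m ≥ 7 be odd. Set c = m−3 and d = m−5 if m ≡ 1 (mod 4), and c = m−2 and d = m−3 if m ≡ 3 (mod 4). Suppose there exists an edge 2-coloring of the complete graph on n vertices with no monochromatic copy of the kipas K̂_m. Then there exists a Gallai k-coloring of the complete graph on 2n + 10c(5^((k−3)/2) − 1) − 2d(k−3) vertices with no monochromatic copy of K̂_m. Consequently GR_k(K̂_m) ≥ 2(R_2(K̂_m) + 5c(5^((k−3)/2) − 1) − d(k−3)) − 1. -/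
open SimpleGraph

/-- A monochromatic copy of `H` in the graph `G` edge-colored by `c`:
an injective map sending edges of `H` to edges of `G`, all image edges of one color. -/
def IsMonoCopy {α V : Type*} {k : ℕ} (G : SimpleGraph V) (c : V → V → Fin k)
    (H : SimpleGraph α) : Prop :=
  ∃ (f : α → V) (i : Fin k), Function.Injective f ∧
    ∀ a b, H.Adj a b → G.Adj (f a) (f b) ∧ c (f a) (f b) = i

/-- The edge coloring `c` of `G` has no rainbow triangle. -/
def NoRainbowTriangle {V : Type*} {k : ℕ} (G : SimpleGraph V) (c : V → V → Fin k) : Prop :=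
  ¬ ∃ x y z : V, G.Adj x y ∧ G.Adj y z ∧ G.Adj x z ∧
    c x y ≠ c y z ∧ c y z ≠ c x z ∧ c x y ≠ c x z

/-- The Gallai–Ramsey number `GR_k(H)`: the least `N` such that every
rainbow-triangle-free `k`-edge-coloring of the complete graph on `N` vertices
contains a monochromatic copy of `H`. -/
noncomputable def GallaiRamsey (k : ℕ) {α : Type*} (H : SimpleGraph α) : ℕ :=
  sInf {N | ∀ c : Fin N → Fin N → Fin k, (∀ x y, c x y = c y x) →
    NoRainbowTriangle (⊤ : SimpleGraph (Fin N)) c →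
    IsMonoCopy (⊤ : SimpleGraph (Fin N)) c H}

/-- The diagonal two-color Ramsey number `R(H, H)`. -/
noncomputable def Ramsey2 {α : Type*} (H : SimpleGraph α) : ℕ :=
  sInf {N | ∀ c : Fin N → Fin N → Fin 2, (∀ x y, c x y = c y x) →
    IsMonoCopy (⊤ : SimpleGraph (Fin N)) c H}

/-- The fan `F_3 = K_1 + 3K_2`: vertex `0` is the center, joined to all other
vertices, together with the three disjoint edges `12`, `34`, `56`. -/
def fanF3 : SimpleGraph (Fin 7) :=
  SimpleGraph.fromRel (fun a b => a = 0 ∨ (a.val % 2 = 1 ∧ b.val = a.val + 1))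

/-- The kipas `K̂_m = K_1 + P_m`: vertex `0` is the center, joined to all other
vertices, and `1, 2, …, m` form a path. -/
def kipasG (m : ℕ) : SimpleGraph (Fin (m + 1)) :=
  SimpleGraph.fromRel (fun a b => a = 0 ∨ (1 ≤ a.val ∧ b.val = a.val + 1))

/-- The wheel `W_m = K_1 + C_m`: vertex `0` is the center, joined to all other
vertices, and `1, 2, …, m` form a cycle. -/
def wheelG (m : ℕ) : SimpleGraph (Fin (m + 1)) :=
  SimpleGraph.fromRel (fun a b =>
    a = 0 ∨ (1 ≤ a.val ∧ b.val = a.val + 1) ∨ (a.val = m ∧ b.val = 1))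

/-- The star `K_{1,n}`: vertex `0` is the center, joined to all other vertices. -/
def starG (n : ℕ) : SimpleGraph (Fin (n + 1)) :=
  SimpleGraph.fromRel (fun a _ => a = 0)

/-- `K⁺_{1,n}`, the star `K_{1,n}` with one edge subdivided: vertex `0` is joined to
`1, …, n`, and the extra vertex `n+1` is joined to `n`. -/
def starPlusG (n : ℕ) : SimpleGraph (Fin (n + 2)) :=
  SimpleGraph.fromRel (fun a b => (a = 0 ∧ b.val ≤ n) ∨ (a.val = n ∧ b.val = n + 1))

/-- The complete graph on `Fin N` with the single edge `{0, 1}` deleted. -/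
def compMinusEdge (N : ℕ) : SimpleGraph (Fin N) where
  Adj x y := x ≠ y ∧ ¬(x.val = 0 ∧ y.val = 1) ∧ ¬(x.val = 1 ∧ y.val = 0)
  symm := by
    constructor
    intro x y h
    exact ⟨h.1.symm, fun hc => h.2.2 ⟨hc.2, hc.1⟩, fun hc => h.2.1 ⟨hc.2, hc.1⟩⟩
  loopless := by constructor; intro x h; exact h.1 rfl

/-- The complete graph on `Fin M` together with one extra vertex (`none`)
joined exactly to the vertices of `A`. -/
def addVertex (M : ℕ) (A : Set (Fin M)) : SimpleGraph (Option (Fin M)) where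
  Adj x y := (∃ a b : Fin M, x = some a ∧ y = some b ∧ a ≠ b) ∨
    (∃ a ∈ A, (x = some a ∧ y = none) ∨ (x = none ∧ y = some a))
  symm := by
    constructor
    rintro x y (⟨a, b, hx, hy, hab⟩ | ⟨a, ha, (⟨hx, hy⟩ | ⟨hx, hy⟩)⟩)
    · exact Or.inl ⟨b, a, hy, hx, hab.symm⟩
    · exact Or.inr ⟨a, ha, Or.inr ⟨hy, hx⟩⟩
    · exact Or.inr ⟨a, ha, Or.inl ⟨hy, hx⟩⟩
  loopless := by
    constructor
    rintro x (⟨a, b, hx, hy, hab⟩ | ⟨a, ha, (⟨hx, hy⟩ | ⟨hx, hy⟩)⟩) <;> simp_all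

/-- The star-critical Gallai–Ramsey number `GR*_k(H)`: the least `s` such that
every rainbow-triangle-free `k`-edge-coloring of the complete graph on
`GR_k(H) - 1` vertices plus one extra vertex joined to exactly `s` of them
contains a monochromatic copy of `H`. -/
noncomputable def GRstar (k : ℕ) {α : Type*} (H : SimpleGraph α) : ℕ :=
  sInf {s | ∀ A : Finset (Fin (GallaiRamsey k H - 1)), A.card = s →
    ∀ c : Option (Fin (GallaiRamsey k H - 1)) → Option (Fin (GallaiRamsey k H - 1)) → Fin k,
      (∀ x y, c x y = c y x) →
      NoRainbowTriangle (addVertex (GallaiRamsey k H - 1) (↑A)) c →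
      IsMonoCopy (addVertex (GallaiRamsey k H - 1) (↑A)) c H}

/-- `H` is Gallai-Ramsey-full for `k` colors: the complete graph on `GR_k(H)`
vertices minus one edge admits a rainbow-triangle-free `k`-edge-coloring with
no monochromatic copy of `H`. -/
def GallaiRamseyFull (k : ℕ) {α : Type*} (H : SimpleGraph α) : Prop :=
  ∃ c : Fin (GallaiRamsey k H) → Fin (GallaiRamsey k H) → Fin k,
    (∀ x y, c x y = c y x) ∧
    NoRainbowTriangle (compMinusEdge (GallaiRamsey k H)) c ∧
    ¬ IsMonoCopy (compMinusEdge (GallaiRamsey k H)) c H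

/-- Reachability inside the vertex set `s`: there is a walk all of whose
vertices lie in `s`. -/
def ReachableWithin {V : Type*} (R : SimpleGraph V) (s : Set V) (u v : V) : Prop :=
  ∃ w : R.Walk u v, ∀ x ∈ w.support, x ∈ s


namespace KipasAux

/-- No path on `m` vertices in color `i`. -/
def NoPath {V : Type} (m : ℕ) (χ : V → V → ℕ) (i : ℕ) : Prop :=
  ∀ p : Fin m → V, Function.Injective p →
    ¬ ∀ a b : Fin m, b.val = a.val + 1 → χ (p a) (p b) = i

/-- No vertex has `h` neighbours in color `i`. -/
def NoStar {V : Type} (h : ℕ) (χ : V → V → ℕ) (i : ℕ) : Prop :=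
  ∀ (v : V) (g : Fin h → V), Function.Injective g → ¬ ∀ a, g a ≠ v ∧ χ v (g a) = i

/-- No kipas in color `i`. -/
def NoKip {V : Type} (m : ℕ) (χ : V → V → ℕ) (i : ℕ) : Prop :=
  ∀ (v : V) (p : Fin m → V), Function.Injective p → (∀ a, p a ≠ v ∧ χ v (p a) = i) →
    ¬ ∀ a b : Fin m, b.val = a.val + 1 → χ (p a) (p b) = i

/-- Color `i` is not used. -/
def Unused {V : Type} (χ : V → V → ℕ) (i : ℕ) : Prop := ∀ x y, x ≠ y → χ x y ≠ i

/-- No rainbow triangle. -/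
def Gal {V : Type} (χ : V → V → ℕ) : Prop :=
  ∀ x y z, x ≠ y → y ≠ z → x ≠ z → χ x y = χ y z ∨ χ y z = χ x z ∨ χ x y = χ x z

/-- Existence of a Gallai coloring on `N` vertices in which the colors in `S` are small (bounded
degree, no long path), the colors in `F` are kipas-free, all others are unused. -/
def Ex (m h N : ℕ) (S F : ℕ → Prop) : Prop :=
  ∃ (V : Type) (_ : Fintype V) (χ : V → V → ℕ), Fintype.card V = N ∧ (∀ x y, χ x y = χ y x) ∧
    Gal χ ∧ (∀ i, S i → NoPath m χ i ∧ NoStar h χ i) ∧ (∀ i, F i → NoKip m χ i) ∧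
    (∀ i, ¬ S i → ¬ F i → Unused χ i)

lemma NoPath.noKip {V : Type} {m : ℕ} {χ : V → V → ℕ} {i : ℕ} (H : NoPath m χ i) :
    NoKip m χ i := fun _ p hp _ => H p hp

lemma Unused.noPath {V : Type} {m : ℕ} (hm : 2 ≤ m) {χ : V → V → ℕ} {i : ℕ}
    (H : Unused χ i) : NoPath m χ i := by
  intro p hp h
  have h1 := h ⟨0, by omega⟩ ⟨1, by omega⟩ rfl
  refine H _ _ ?_ h1
  intro h2
  have := hp h2
  simp at this

lemma Unused.noStar {V : Type} {m : ℕ} (hm : 1 ≤ m) {χ : V → V → ℕ} {i : ℕ}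
    (H : Unused χ i) : NoStar m χ i := by
  intro v g hg h
  have h1 := h ⟨0, by omega⟩
  exact H _ _ h1.1.symm h1.2

section sub
variable {ι : Type} [DecidableEq ι] {V : ι → Type}

/-- Substitution of colorings into a base coloring. -/
def sub (ρ : ι → ι → ℕ) (χ : ∀ j, V j → V j → ℕ) (x y : Σ j, V j) : ℕ :=
  if h : y.1 = x.1 then χ x.1 x.2 (h ▸ y.2) else ρ x.1 y.1

lemma sub_same (ρ : ι → ι → ℕ) (χ : ∀ j, V j → V j → ℕ) (j : ι) (x y : V j) :
    sub ρ χ ⟨j, x⟩ ⟨j, y⟩ = χ j x y := by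
  simp [sub]

lemma sub_diff (ρ : ι → ι → ℕ) (χ : ∀ j, V j → V j → ℕ) (x y : Σ j, V j) (h : x.1 ≠ y.1) :
    sub ρ χ x y = ρ x.1 y.1 := by
  simp [sub, h.symm]

variable {ρ : ι → ι → ℕ} {χ : ∀ j, V j → V j → ℕ}

lemma lift_class {α : Type} {j : ι} (p : α → Σ j, V j) (hp : Function.Injective p)
    (h : ∀ a, (p a).1 = j) : ∃ q : α → V j, Function.Injective q ∧ ∀ a, p a = ⟨j, q a⟩ := by
  have : ∀ a, ∃ x : V j, p a = ⟨j, x⟩ := by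
    intro a
    have := h a
    generalize p a = y at this
    obtain ⟨l, y⟩ := y
    subst this
    exact ⟨y, rfl⟩
  choose q hq using this
  refine ⟨q, ?_, hq⟩
  intro a b hab
  apply hp
  rw [hq, hq, hab]

lemma fin_const {m : ℕ} {α : Type} (f : Fin m → α)
    (h : ∀ a b : Fin m, b.val = a.val + 1 → f a = f b) (a b : Fin m) : f a = f b := by
  have key : ∀ n (hn : n < m), f ⟨n, hn⟩ = f ⟨0, by omega⟩ := by
    intro n
    induction n with
    | zero => intro _; rfl
    | succ n ih =>
      intro hn
      rw [← ih (by omega)]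
      exact (h ⟨n, by omega⟩ ⟨n + 1, hn⟩ rfl).symm
  rw [key a.1 a.2, key b.1 b.2]

lemma sub_symm (h1 : ∀ x y, ρ x y = ρ y x) (h2 : ∀ j x y, χ j x y = χ j y x) (x y : Σ j, V j) :
    sub ρ χ x y = sub ρ χ y x := by
  by_cases h : x.1 = y.1
  · obtain ⟨j, x⟩ := x
    obtain ⟨l, y⟩ := y
    dsimp at h
    subst h
    rw [sub_same, sub_same, h2]
  · rw [sub_diff _ _ _ _ h, sub_diff _ _ _ _ (Ne.symm h), h1]

lemma sub_unused {i : ℕ} (h1 : ∀ j l, j ≠ l → ρ j l ≠ i) (h2 : ∀ j, Unused (χ j) i) :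
    Unused (sub ρ χ) i := by
  intro x y hxy
  by_cases h : x.1 = y.1
  · obtain ⟨j, x⟩ := x
    obtain ⟨l, y⟩ := y
    dsimp at h
    subst h
    rw [sub_same]
    exact h2 _ _ _ (fun h => hxy (by rw [h]))
  · rw [sub_diff _ _ _ _ h]
    exact h1 _ _ h

lemma sub_gal (hs1 : ∀ x y, ρ x y = ρ y x) (hs2 : ∀ j x y, χ j x y = χ j y x)
    (h1 : Gal ρ) (h2 : ∀ j, Gal (χ j)) : Gal (sub ρ χ) := by
  intro x y z hxy hyz hxz
  by_cases h : x.1 = y.1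
  · by_cases h' : y.1 = z.1
    · obtain ⟨j, x⟩ := x
      obtain ⟨l, y⟩ := y
      obtain ⟨t, z⟩ := z
      dsimp at h h'
      subst h
      subst h'
      simp only [sub_same]
      exact h2 _ _ _ _ (fun h => hxy (by rw [h])) (fun h => hyz (by rw [h]))
        (fun h => hxz (by rw [h]))
    · right; left
      rw [sub_diff _ _ _ _ h', sub_diff _ _ _ _ (h ▸ h'), h]
  · by_cases h' : y.1 = z.1
    · right; right
      rw [sub_diff _ _ _ _ h, sub_diff _ _ _ _ (h' ▸ h), h']
    · by_cases h'' : x.1 = z.1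
      · left
        rw [sub_diff _ _ _ _ h, sub_diff _ _ _ _ h', hs1 y.1, h'']
      · rw [sub_diff _ _ _ _ h, sub_diff _ _ _ _ h', sub_diff _ _ _ _ h'']
        exact h1 _ _ _ h h' h''

lemma sub_noPath {i m : ℕ} (hm : 1 ≤ m) (h1 : ∀ j l, j ≠ l → ρ j l ≠ i)
    (h2 : ∀ j, NoPath m (χ j) i) : NoPath m (sub ρ χ) i := by
  intro p hp h
  have hc := fin_const (fun a => (p a).1) (fun a b hab => by
    by_contra hne
    have := h a b hab
    rw [sub_diff _ _ _ _ hne] at this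
    exact h1 _ _ hne this)
  obtain ⟨q, hq, hpq⟩ := lift_class p hp (fun a => hc a ⟨0, by omega⟩)
  refine h2 _ q hq ?_
  intro a b hab
  have := h a b hab
  rwa [hpq a, hpq b, sub_same] at this

lemma sub_noStar {i h : ℕ} (h1 : ∀ j l, j ≠ l → ρ j l ≠ i)
    (h2 : ∀ j, NoStar h (χ j) i) : NoStar h (sub ρ χ) i := by
  rintro ⟨j, v⟩ p hp hh
  obtain ⟨q, hq, hpq⟩ := lift_class (j := j) p hp (fun a => by
    by_contra hne
    have := (hh a).2
    rw [sub_diff _ _ _ _ (Ne.symm hne)] at this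
    exact h1 _ _ (Ne.symm hne) this)
  refine h2 _ v q hq ?_
  intro a
  have := hh a
  rw [hpq a, sub_same] at this
  exact ⟨fun h => this.1 (by rw [h]), this.2⟩

lemma sub_noKip {i m : ℕ} (h1 : ∀ j l, j ≠ l → ρ j l ≠ i)
    (h2 : ∀ j, NoKip m (χ j) i) : NoKip m (sub ρ χ) i := by
  rintro ⟨j, v⟩ p hp hh hpath
  obtain ⟨q, hq, hpq⟩ := lift_class (j := j) p hp (fun a => by
    by_contra hne
    have := (hh a).2
    rw [sub_diff _ _ _ _ (Ne.symm hne)] at this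
    exact h1 _ _ (Ne.symm hne) this)
  refine h2 _ v q hq ?_ ?_
  · intro a
    have := hh a
    rw [hpq a, sub_same] at this
    exact ⟨fun h => this.1 (by rw [h]), this.2⟩
  · intro a b hab
    have := hpath a b hab
    rwa [hpq a, hpq b, sub_same] at this

/-- The key lemma: a triangle-free base color. -/
lemma sub_noKip_base {i m h : ℕ} (hm : m = 2 * h + 1)
    (hs1 : ∀ x y, ρ x y = ρ y x)
    (htf : ∀ j l t, j ≠ l → l ≠ t → j ≠ t → ρ j l = i → ρ l t = i → ρ j t = i → False)
    (hp : ∀ j, NoPath m (χ j) i) (hst : ∀ j, NoStar h (χ j) i)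
    (hu : ∀ j l, j ≠ l → ρ j l = i → Unused (χ j) i ∨ Unused (χ l) i) :
    NoKip m (sub ρ χ) i := by
  rintro ⟨j, v⟩ p hpi hh hpath
  have hbase : ∀ a, (p a).1 ≠ j → ρ j (p a).1 = i := by
    intro a ha
    have := (hh a).2
    rwa [sub_diff _ _ _ _ (Ne.symm ha)] at this
  by_cases hj : Unused (χ j) i
  · have hne : ∀ a, (p a).1 ≠ j := by
      intro a ha
      have h3 := hh a
      generalize p a = y at ha h3
      obtain ⟨l, y⟩ := y
      dsimp at ha
      subst ha
      rw [sub_same] at h3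
      exact hj _ _ (fun h => h3.1 (by rw [h])) h3.2
    have hc := fin_const (fun a => (p a).1) (fun a b hab => by
      by_contra hne'
      have := hpath a b hab
      rw [sub_diff _ _ _ _ hne'] at this
      exact htf j _ _ (hne a).symm hne' (hne b).symm (hbase a (hne a)) this (hbase b (hne b)))
    obtain ⟨q, hq, hpq⟩ := lift_class p hpi (fun a => hc a ⟨0, by omega⟩)
    refine hp _ q hq ?_
    intro a b hab
    have := hpath a b hab
    rwa [hpq a, hpq b, sub_same] at this
  · have key : ∀ a b : Fin m, b.val = a.val + 1 → (p a).1 = j ∨ (p b).1 = j := by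
      intro a b hab
      by_contra hcon
      push Not at hcon
      obtain ⟨ha, hb⟩ := hcon
      have h3 := hpath a b hab
      by_cases hl : (p a).1 = (p b).1
      · have hua := (hu j _ ha.symm (hbase a ha)).resolve_left hj
        have hab' : p a ≠ p b := fun h => by
          have := congrArg Fin.val (hpi h)
          omega
        generalize p a = x at *
        generalize p b = y at *
        obtain ⟨s, x⟩ := x
        obtain ⟨t, y⟩ := y
        dsimp at hl
        subst hl
        rw [sub_same] at h3
        exact hua _ _ (fun h => hab' (by rw [h])) h3
      · rw [sub_diff _ _ _ _ hl] at h3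
        exact htf j _ _ ha.symm hl hb.symm (hbase a ha) h3 (hbase b hb)
    have : ∀ t : Fin h, ∃ a : Fin m, a.val / 2 = t.val ∧ (p a).1 = j := by
      intro t
      rcases key ⟨2 * t.val, by omega⟩ ⟨2 * t.val + 1, by omega⟩ rfl with h | h
      · exact ⟨_, by dsimp; omega, h⟩
      · exact ⟨_, by dsimp; omega, h⟩
    choose f hf1 hf2 using this
    have hfi : Function.Injective f := by
      intro s t hst
      apply Fin.ext
      rw [← hf1, ← hf1, hst]
    obtain ⟨q, hq, hpq⟩ := lift_class (j := j) (fun t => p (f t)) (hpi.comp hfi) hf2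
    refine hst j v q hq ?_
    intro a
    have h3 := hh (f a)
    have h4 := hpq a
    rw [h4, sub_same] at h3
    exact ⟨fun h => h3.1 (by rw [h]), h3.2⟩

end sub

lemma ex_sub {ι : Type} [DecidableEq ι] [Fintype ι] {m h : ℕ} (hm : m = 2 * h + 1) (hh : 1 ≤ h)
    (ρ : ι → ι → ℕ) (hs : ∀ x y, ρ x y = ρ y x) (hg : Gal ρ)
    (N : ι → ℕ) (S F : ι → ℕ → Prop) (H : ∀ j, Ex m h (N j) (S j) (F j))
    (S' F' : ℕ → Prop)
    (hS : ∀ i, S' i → (∀ j l, j ≠ l → ρ j l ≠ i) ∧ ∀ j, ¬ F j i)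
    (hF : ∀ i, F' i → (∀ j l, j ≠ l → ρ j l ≠ i) ∨
      ((∀ j l t, j ≠ l → l ≠ t → j ≠ t → ρ j l = i → ρ l t = i → ρ j t = i → False) ∧
        (∀ j, ¬ F j i) ∧ ∀ j l, j ≠ l → ρ j l = i → ¬ S j i ∨ ¬ S l i))
    (hU : ∀ i, ¬ S' i → ¬ F' i → (∀ j l, j ≠ l → ρ j l ≠ i) ∧ ∀ j, ¬ S j i ∧ ¬ F j i) :
    Ex m h (∑ j, N j) S' F' := by
  choose V inst χ hcard hsym hgal hsm hfr hun using H
  have hP : ∀ j i, ¬ F j i → NoPath m (χ j) i := by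
    intro j i hi
    by_cases h1 : S j i
    · exact (hsm j i h1).1
    · exact (hun j i h1 hi).noPath (by omega)
  have hSt : ∀ j i, ¬ F j i → NoStar h (χ j) i := by
    intro j i hi
    by_cases h1 : S j i
    · exact (hsm j i h1).2
    · exact (hun j i h1 hi).noStar (by omega)
  have hK : ∀ j i, NoKip m (χ j) i := by
    intro j i
    by_cases h1 : F j i
    · exact hfr j i h1
    · exact (hP j i h1).noKip
  refine ⟨Σ j, V j, inferInstance, sub ρ χ, ?_, sub_symm hs hsym, sub_gal hs hsym hg hgal,
    ?_, ?_, ?_⟩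
  · rw [Fintype.card_sigma]
    exact Finset.sum_congr rfl (fun j _ => hcard j)
  · intro i hi
    obtain ⟨h1, h2⟩ := hS i hi
    exact ⟨sub_noPath (by omega) h1 (fun j => hP j i (h2 j)),
      sub_noStar h1 (fun j => hSt j i (h2 j))⟩
  · intro i hi
    rcases hF i hi with h1 | ⟨h1, h2, h3⟩
    · exact sub_noKip h1 (fun j => hK j i)
    · refine sub_noKip_base hm hs h1 (fun j => hP j i (h2 j)) (fun j => hSt j i (h2 j)) ?_
      intro j l hjl hr
      exact (h3 j l hjl hr).imp (fun h => hun j i h (h2 j)) (fun h => hun l i h (h2 l))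
  · intro i h1 h2
    obtain ⟨h3, h4⟩ := hU i h1 h2
    exact sub_unused h3 (fun j => hun j i (h4 j).1 (h4 j).2)

/-- adjacency in the pentagon -/
def adj5 (j l : Fin 5) : Bool := decide (j = l + 1) || decide (l = j + 1)

lemma adj5_symm : ∀ j l, adj5 j l = adj5 l j := by decide

lemma adj5_tf (b : Bool) : ∀ j l t, j ≠ l → l ≠ t → j ≠ t → adj5 j l = b → adj5 l t = b →
    adj5 j t = b → False := by
  revert b; decide

lemma ex_pent {m h : ℕ} (hm : m = 2 * h + 1) (hh : 1 ≤ h) (p q : ℕ) (hpq : p ≠ q)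
    (N0 N1 N2 : ℕ) (S0 F0 S1 F1 S2 F2 : ℕ → Prop)
    (H0 : Ex m h N0 S0 F0) (H1 : Ex m h N1 S1 F1) (H2 : Ex m h N2 S2 F2)
    (hp : ¬ S0 p ∧ ¬ F0 p ∧ ¬ F1 p ∧ ¬ S2 p ∧ ¬ F2 p)
    (hq : ¬ S0 q ∧ ¬ F0 q ∧ ¬ S1 q ∧ ¬ F1 q ∧ ¬ F2 q)
    (S' F' : ℕ → Prop)
    (hS : ∀ i, S' i → i ≠ p ∧ i ≠ q ∧ ¬ F0 i ∧ ¬ F1 i ∧ ¬ F2 i)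
    (hU : ∀ i, ¬ S' i → ¬ F' i → i ≠ p ∧ i ≠ q ∧ ¬ S0 i ∧ ¬ F0 i ∧ ¬ S1 i ∧ ¬ F1 i ∧
      ¬ S2 i ∧ ¬ F2 i) :
    Ex m h (N0 + 2 * N1 + 2 * N2) S' F' := by
  have hρ : ∀ j l i, i ≠ p → i ≠ q → (bif adj5 j l then p else q) ≠ i := by
    intro j l i h1 h2
    cases adj5 j l
    · exact h2.symm
    · exact h1.symm
  have hpe : ∀ j l, (bif adj5 j l then p else q) = p ↔ adj5 j l = true := by
    intro j l
    cases adj5 j l <;> simp [hpq.symm]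
  have hqe : ∀ j l, (bif adj5 j l then p else q) = q ↔ adj5 j l = false := by
    intro j l
    cases adj5 j l <;> simp [hpq]
  have := ex_sub hm hh (fun j l : Fin 5 => bif adj5 j l then p else q)
    (fun x y => by rw [adj5_symm]) ?_ ![N0, N1, N2, N2, N1] ![S0, S1, S2, S2, S1]
    ![F0, F1, F2, F2, F1] ?_ S' F' ?_ ?_ ?_
  · convert this using 1
    simp [Fin.sum_univ_five]
    ring
  · intro x y z _ _ _
    dsimp only
    cases adj5 x y <;> cases adj5 y z <;> cases adj5 x z <;> simp
  · intro j
    fin_cases j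
    · exact H0
    · exact H1
    · exact H2
    · exact H2
    · exact H1
  · intro i hi
    obtain ⟨h1, h2, h3, h4, h5⟩ := hS i hi
    refine ⟨fun j l _ => hρ j l i h1 h2, ?_⟩
    intro j
    fin_cases j <;> assumption
  · intro i _
    by_cases hip : i = p
    · subst hip
      right
      obtain ⟨h1, h2, h3, h4, h5⟩ := hp
      refine ⟨?_, ?_, ?_⟩
      · simp only [hpe]
        exact adj5_tf true
      · intro j
        fin_cases j <;> assumption
      · simp only [hpe]
        intro j l _ hjl
        fin_cases j <;> fin_cases l <;>
          first
          | exact Or.inl h1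
          | exact Or.inl h4
          | exact Or.inr h1
          | exact Or.inr h4
          | exact absurd hjl (by decide)
    · by_cases hiq : i = q
      · subst hiq
        right
        obtain ⟨h1, h2, h3, h4, h5⟩ := hq
        refine ⟨?_, ?_, ?_⟩
        · simp only [hqe]
          exact adj5_tf false
        · intro j
          fin_cases j <;> assumption
        · simp only [hqe]
          intro j l hne hjl
          fin_cases j <;> fin_cases l <;>
            first
            | exact Or.inl h1
            | exact Or.inl h3
            | exact Or.inr h1
            | exact Or.inr h3
            | exact absurd hjl (by decide)
            | exact absurd rfl hne
      · left
        exact fun j l _ => hρ j l i hip hiq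
  · intro i h1 h2
    obtain ⟨h1, h2, h3, h4, h5, h6, h7, h8⟩ := hU i h1 h2
    refine ⟨fun j l _ => hρ j l i h1 h2, ?_⟩
    intro j
    fin_cases j
    · exact ⟨h3, h4⟩
    · exact ⟨h5, h6⟩
    · exact ⟨h7, h8⟩
    · exact ⟨h7, h8⟩
    · exact ⟨h5, h6⟩

lemma noPath_card {V : Type} [Fintype V] {m : ℕ} (hV : Fintype.card V < m) (χ : V → V → ℕ)
    (i : ℕ) : NoPath m χ i := by
  intro p hp _
  have := Fintype.card_le_of_injective p hp
  simp at this
  omega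

/-- the leaf coloring by a circulant graph -/
lemma ex_leaf {m h c r : ℕ} (hc0 : 0 < c) (hcm : c < m) (hr1 : 2 * r < h) (hr2 : c - 1 - 2 * r < h)
    (α β : ℕ) (hab : α ≠ β) :
    Ex m h c (fun i => i = α ∨ i = β) (fun _ => False) := by
  have : NeZero c := ⟨by omega⟩
  have hcnt : ∀ (T : Finset ℕ) (_ : T.card < h) (v : ZMod c) (g : Fin h → ZMod c)
      (_ : Function.Injective g), ¬ ∀ a, (g a - v).val ∈ T := by
    intro T hT v g hg hall
    have := Finset.card_le_card_of_injOn (s := Finset.univ) (t := T)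
      (fun a : Fin h => (g a - v).val) (fun a _ => hall a) (by
        intro a _ b _ hab
        apply hg
        exact sub_left_injective (ZMod.val_injective c hab))
    simp at this
    omega
  refine ⟨ZMod c, inferInstance,
    fun x y => if (x - y).val ≤ r ∨ (y - x).val ≤ r then α else β, ZMod.card c, ?_, ?_, ?_, ?_, ?_⟩
  · intro x y
    simp only [or_comm]
  · intro x y z _ _ _
    dsimp only
    split_ifs <;> simp
  · intro i hi
    refine ⟨noPath_card (by rw [ZMod.card]; exact hcm) _ _, ?_⟩
    intro v g hg hall
    have hneg : ∀ a, (g a - v).val ≠ 0 ∧ (v - g a).val = c - (g a - v).val ∧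
        (g a - v).val < c := by
      intro a
      have h0 : g a - v ≠ 0 := sub_ne_zero.mpr (hall a).1
      refine ⟨by rwa [Ne, ZMod.val_eq_zero], ?_, ZMod.val_lt _⟩
      rw [← neg_sub (g a) v, ZMod.neg_val, if_neg h0]
    rcases hi with rfl | rfl
    · refine hcnt (Finset.Icc 1 r ∪ Finset.Ico (c - r) c) ?_ v g hg ?_
      · refine lt_of_le_of_lt (Finset.card_union_le _ _) ?_
        simp
        omega
      · intro a
        have h1 := (hall a).2
        obtain ⟨h2, h3, h4⟩ := hneg a
        dsimp only at h1
        split_ifs at h1 with hif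
        · simp only [Finset.mem_union, Finset.mem_Icc, Finset.mem_Ico]
          omega
        · exact absurd h1.symm hab
    · refine hcnt (Finset.Ico (r + 1) (c - r)) ?_ v g hg ?_
      · simp
        omega
      · intro a
        have h1 := (hall a).2
        obtain ⟨h2, h3, h4⟩ := hneg a
        dsimp only at h1
        split_ifs at h1 with hif
        · exact absurd h1 hab
        · simp only [Finset.mem_Ico]
          omega
  · intro i hi
    exact hi.elim
  · intro i hi _ x y _
    push Not at hi
    dsimp only
    split_ifs
    · exact hi.1.symm
    · exact hi.2.symm

lemma ex_T {m h c r : ℕ} (hm : m = 2 * h + 1) (hh : 1 ≤ h)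
    (hc0 : 0 < c) (hcm : c < m) (hr1 : 2 * r < h) (hr2 : c - 1 - 2 * r < h)
    (s : ℕ) (α β : ℕ) (hab : α ≠ β) (hα : 2 * s ≤ α) (hβ : 2 * s ≤ β) :
    Ex m h (c * 5 ^ s) (fun i => i = α ∨ i = β) (fun i => i < 2 * s) := by
  induction s with
  | zero => simpa using ex_leaf hc0 hcm hr1 hr2 α β hab
  | succ s ih =>
    have H := ih (by omega) (by omega)
    have := ex_pent hm hh (2 * s) (2 * s + 1) (by omega) _ _ _ _ _ _ _ _ _ H H H
      (by omega) (by omega) (fun i => i = α ∨ i = β) (fun i => i < 2 * (s + 1))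
      (by intro i; omega) (by intro i; omega)
    convert this using 1
    ring

lemma ex_S {m h c r e : ℕ} (hm : m = 2 * h + 1) (hh : 1 ≤ h)
    (hc0 : 0 < c) (hcm : c < m) (hr1 : 2 * r < h) (hr2 : c - 1 - 2 * r < h) (he : c = h + e)
    (s : ℕ) (α : ℕ) (hα : 2 * s ≤ α) :
    Ex m h (c * 5 ^ s - e) (fun i => i = α) (fun i => i < 2 * s) := by
  induction s with
  | zero =>
    refine ⟨Fin h, inferInstance, fun _ _ => α, by simp; omega, fun _ _ => rfl,
      fun _ _ _ _ _ _ => Or.inl rfl, ?_, ?_, ?_⟩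
    · intro i _
      refine ⟨noPath_card (by simp; omega) _ _, ?_⟩
      intro v g hg hall
      obtain ⟨a, ha⟩ := (Finite.injective_iff_surjective.mp hg) v
      exact (hall a).1 ha
    · intro i hi
      omega
    · intro i hi _ _ _ _ h
      exact hi h.symm
  | succ s ih =>
    have H0 := ih (by omega)
    have H1 := ex_T hm hh hc0 hcm hr1 hr2 s α (2 * s) (by omega) (by omega) (by omega)
    have H2 := ex_T hm hh hc0 hcm hr1 hr2 s α (2 * s + 1) (by omega) (by omega) (by omega)
    have := ex_pent hm hh (2 * s) (2 * s + 1) (by omega) _ _ _ _ _ _ _ _ _ H0 H1 H2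
      (by omega) (by omega) (fun i => i = α) (fun i => i < 2 * (s + 1))
      (by intro i; omega) (by intro i; omega)
    convert this using 1
    have h5 : 0 < 5 ^ s := by positivity
    have : c ≤ c * 5 ^ s := Nat.le_mul_of_pos_right _ h5
    rw [pow_succ, ← mul_assoc]
    omega

lemma ex_M {m h c r e n : ℕ} (hm : m = 2 * h + 1) (hh : 1 ≤ h)
    (hc0 : 0 < c) (hcm : c < m) (hr1 : 2 * r < h) (hr2 : c - 1 - 2 * r < h) (he : c = h + e)
    (H : Ex m h n (fun _ => False) (fun i => i < 2)) (t : ℕ) :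
    Ex m h (n + 5 * c * (5 ^ t - 1) - 4 * e * t) (fun _ => False) (fun i => i < 2 * (t + 1)) := by
  induction t with
  | zero => simpa using H
  | succ t ih =>
    have H1 := ex_S hm hh hc0 hcm hr1 hr2 he (t + 1) (2 * (t + 1)) (by omega)
    have H2 := ex_S hm hh hc0 hcm hr1 hr2 he (t + 1) (2 * (t + 1) + 1) (by omega)
    have := ex_pent hm hh (2 * (t + 1)) (2 * (t + 1) + 1) (by omega) _ _ _ _ _ _ _ _ _ ih H1 H2
      (by refine ⟨id, ?_⟩; omega) (by refine ⟨id, ?_⟩; omega)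
      (fun _ => False) (fun i => i < 2 * (t + 1 + 1)) (fun i hi => hi.elim)
      (by intro i _ hi; refine ⟨by omega, by omega, id, ?_⟩; omega)
    convert this using 1
    have h5 : t + 1 ≤ 5 ^ t := by
      have := Nat.lt_pow_self (n := t) (show 1 < 5 by norm_num)
      omega
    obtain ⟨u, hu⟩ := Nat.exists_eq_add_of_le h5
    have e1 : 5 ^ t - 1 = t + u := by omega
    have e2 : 5 ^ (t + 1) - 1 = 5 * (t + u) + 4 := by rw [pow_succ]; omega
    have e3 : 5 ^ (t + 1) = 5 * (t + u) + 5 := by rw [pow_succ]; omega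
    rw [e1, e2, e3]
    subst he
    have l1 : 4 * e * t ≤ n + 5 * (h + e) * (t + u) := by nlinarith [Nat.zero_le (e*t), Nat.zero_le (h * t), Nat.zero_le (h*u), Nat.zero_le (e*u)]
    have l2 : 4 * e * (t + 1) ≤ n + 5 * (h + e) * (5 * (t + u) + 4) := by nlinarith [Nat.zero_le (e*t), Nat.zero_le (h * t), Nat.zero_le (h*u), Nat.zero_le (e*u)]
    have l3 : e ≤ (h + e) * (5 * (t + u) + 5) := by nlinarith [Nat.zero_le (e*t), Nat.zero_le (h * t), Nat.zero_le (h*u), Nat.zero_le (e*u)]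
    zify [l1, l2, l3]
    ring

lemma kipas_adj_center {m : ℕ} (a : Fin m) : (kipasG m).Adj 0 a.succ := by
  simp [kipasG, SimpleGraph.fromRel_adj, (Fin.succ_ne_zero a).symm]

lemma kipas_adj_path {m : ℕ} (a b : Fin m) (h : b.val = a.val + 1) :
    (kipasG m).Adj a.succ b.succ := by
  rw [kipasG, SimpleGraph.fromRel_adj]
  refine ⟨?_, Or.inl (Or.inr ⟨by simp, by simp [h]⟩)⟩
  intro hab
  have := congrArg Fin.val hab
  simp at this
  omega

/-- from a kipas structure to a copy -/
lemma isMonoCopy_of {V : Type} {k m : ℕ} (χ : V → V → Fin k) (hs : ∀ x y, χ x y = χ y x)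
    (i : Fin k) (v : V)
    (p : Fin m → V) (hp : Function.Injective p) (h1 : ∀ a, p a ≠ v ∧ χ v (p a) = i)
    (h2 : ∀ a b : Fin m, b.val = a.val + 1 → χ (p a) (p b) = i) :
    IsMonoCopy (⊤ : SimpleGraph V) χ (kipasG m) := by
  have hinj : Function.Injective (Fin.cons v p : Fin (m + 1) → V) := by
    rw [Fin.cons_injective_iff]
    refine ⟨?_, hp⟩
    rintro ⟨a, ha⟩
    exact (h1 a).1 ha
  refine ⟨Fin.cons v p, i, hinj, ?_⟩
  have key : ∀ a b : Fin (m + 1), a ≠ b → (a = 0 ∨ (1 ≤ a.val ∧ b.val = a.val + 1)) →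
      χ ((Fin.cons v p : Fin (m + 1) → V) a) ((Fin.cons v p : Fin (m + 1) → V) b) = i := by
    intro a b hab hr
    rcases hr with rfl | ⟨ha, hb⟩
    · obtain ⟨b, rfl⟩ := Fin.exists_succ_eq.mpr hab.symm
      simpa using (h1 b).2
    · have ha0 : a ≠ 0 := by rintro rfl; simp at ha
      have hb0 : b ≠ 0 := by rintro rfl; simp at hb
      obtain ⟨a, rfl⟩ := Fin.exists_succ_eq.mpr ha0
      obtain ⟨b, rfl⟩ := Fin.exists_succ_eq.mpr hb0
      simp only [Fin.cons_succ]
      exact h2 a b (by simpa using hb)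
  intro a b hab
  rw [kipasG, SimpleGraph.fromRel_adj] at hab
  obtain ⟨hne, hr⟩ := hab
  refine ⟨fun h => hne (hinj h), ?_⟩
  rcases hr with hr | hr
  · exact key a b hne hr
  · rw [hs]
    exact key b a hne.symm hr

lemma ex_base {m h n : ℕ} (χ : Fin n → Fin n → Fin 2) (hs : ∀ x y, χ x y = χ y x)
    (hk : ¬ IsMonoCopy (⊤ : SimpleGraph (Fin n)) χ (kipasG m)) :
    Ex m h n (fun _ => False) (fun i => i < 2) := by
  refine ⟨Fin n, inferInstance, fun x y => (χ x y).val, by simp, fun x y => congrArg Fin.val (hs x y), ?_,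
    fun _ h => h.elim, ?_, ?_⟩
  · intro x y z _ _ _
    dsimp only
    omega
  · intro i hi v p hp h1 h2
    exact hk (isMonoCopy_of χ hs ⟨i, hi⟩ v p hp (fun a => ⟨(h1 a).1, Fin.ext (h1 a).2⟩)
      (fun a b hab => Fin.ext (h2 a b hab)))
  · intro i _ hi x y _ h
    dsimp only at h
    omega

lemma ex_double {m h N K : ℕ} (hm : m = 2 * h + 1) (hh : 1 ≤ h)
    (H : Ex m h N (fun _ => False) (fun i => i < K)) :
    Ex m h (2 * N) (fun _ => False) (fun i => i < K + 1) := by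
  have := ex_sub hm hh (fun _ _ : Fin 2 => K) (fun _ _ => rfl) (fun _ _ _ _ _ _ => Or.inl rfl)
    (fun _ => N) (fun _ _ => False) (fun _ i => i < K) (fun _ => H) (fun _ => False)
    (fun i => i < K + 1) (fun i hi => hi.elim) ?_ ?_
  · simpa using this
  · intro i hi
    by_cases hiK : i = K
    · right
      refine ⟨?_, fun _ => by omega, fun _ _ _ _ => Or.inl id⟩
      intro j l t h1 h2 h3
      omega
    · left
      exact fun _ _ _ h => hiK h.symm
  · intro i _ hi
    exact ⟨fun _ _ _ h => by omega, fun _ => ⟨id, by omega⟩⟩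

lemma ex_final {m h N k : ℕ} (hk : 0 < k) (H : Ex m h N (fun _ => False) (fun i => i < k)) :
    ∃ χ : Fin N → Fin N → Fin k, (∀ x y, χ x y = χ y x) ∧
      NoRainbowTriangle (⊤ : SimpleGraph (Fin N)) χ ∧
      ¬ IsMonoCopy (⊤ : SimpleGraph (Fin N)) χ (kipasG m) := by
  obtain ⟨V, inst, χ, hcard, hsym, hgal, -, hfr, hun⟩ := H
  have e : Fin N ≃ V := (Fintype.equivFinOfCardEq hcard).symm
  have hlt : ∀ x y, x ≠ y → χ x y < k := by
    intro x y hxy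
    by_contra hcon
    exact hun _ id hcon x y hxy rfl
  refine ⟨fun x y => ⟨min (χ (e x) (e y)) (k - 1), by omega⟩, ?_, ?_, ?_⟩
  · intro x y
    dsimp only
    simp only [hsym (e x) (e y)]
  · rintro ⟨x, y, z, hxy, hyz, hxz, h1, h2, h3⟩
    rw [SimpleGraph.top_adj] at hxy hyz hxz
    rcases hgal (e x) (e y) (e z) (e.injective.ne hxy) (e.injective.ne hyz)
      (e.injective.ne hxz) with h | h | h
    · exact h1 (by simp only [h])
    · exact h2 (by simp only [h])
    · exact h3 (by simp only [h])
  · rintro ⟨f, i, hf, hadj⟩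
    have hval : ∀ a b, (kipasG m).Adj a b → χ (e (f a)) (e (f b)) = i.val := by
      intro a b hab
      obtain ⟨h1, h2⟩ := hadj a b hab
      have h3 := hlt _ _ (e.injective.ne h1.ne)
      have h4 := congrArg Fin.val h2
      dsimp only at h4
      omega
    refine hfr i.val i.isLt (e (f 0)) (fun a => e (f a.succ)) ?_ ?_ ?_
    · intro a b hab
      exact Fin.succ_injective _ (hf (e.injective hab))
    · intro a
      refine ⟨?_, hval _ _ (kipas_adj_center a)⟩
      intro h
      exact Fin.succ_ne_zero a (hf (e.injective h))
    · intro a b hab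
      exact hval _ _ (kipas_adj_path a b hab)

/-- Multicolor Ramsey theorem. -/
lemma ramsey (k : ℕ) : ∀ (s : ℕ) (r : Fin k → ℕ), ∑ i, r i = s → ∃ N : ℕ,
    ∀ (V : Type) [DecidableEq V] (c : V → V → Fin k) (_ : ∀ x y, c x y = c y x) (A : Finset V),
      N + 1 ≤ A.card → ∃ i, ∃ B ⊆ A, B.card = r i ∧ ∀ x ∈ B, ∀ y ∈ B, x ≠ y → c x y = i := by
  intro s
  induction s with
  | zero =>
    intro r hr
    refine ⟨0, fun V _ c _ A hA => ?_⟩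
    obtain ⟨v, hv⟩ := Finset.card_pos.mp (by omega : 0 < A.card)
    refine ⟨c v v, ∅, by simp, ?_, by simp⟩
    have := Finset.sum_eq_zero_iff.mp hr (c v v) (Finset.mem_univ _)
    simp [this]
  | succ s ih =>
    intro r hr
    by_cases h0 : ∃ i, r i = 0
    · obtain ⟨i, hi⟩ := h0
      exact ⟨0, fun V _ c _ A hA => ⟨i, ∅, by simp, by simp [hi], by simp⟩⟩
    · push Not at h0
      have : ∀ i, ∃ N : ℕ, ∀ (V : Type) [DecidableEq V] (c : V → V → Fin k)
          (_ : ∀ x y, c x y = c y x) (A : Finset V), N + 1 ≤ A.card → ∃ l, ∃ B ⊆ A,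
          B.card = Function.update r i (r i - 1) l ∧
            ∀ x ∈ B, ∀ y ∈ B, x ≠ y → c x y = l := by
        intro i
        apply ih
        rw [Finset.sum_update_of_mem (Finset.mem_univ i)]
        have := Finset.add_sum_erase Finset.univ r (Finset.mem_univ i)
        rw [Finset.sdiff_singleton_eq_erase]
        have := h0 i
        omega
      choose N hN using this
      refine ⟨∑ i, (N i + 1), fun V _ c hc A hA => ?_⟩
      obtain ⟨v, hv⟩ := Finset.card_pos.mp (by omega : 0 < A.card)
      have hsum : (A.erase v).card = ∑ i, ((A.erase v).filter (fun w => c v w = i)).card :=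
        Finset.card_eq_sum_card_fiberwise (fun _ _ => Finset.mem_coe.mpr (Finset.mem_univ _))
      rw [Finset.card_erase_of_mem hv] at hsum
      obtain ⟨i, -, hi⟩ := Finset.exists_le_of_sum_le (s := (Finset.univ : Finset (Fin k)))
        (f := fun i => N i + 1) (g := fun i => ((A.erase v).filter (fun w => c v w = i)).card)
        ⟨c v v, Finset.mem_univ _⟩ (by omega)
      obtain ⟨l, B, hBA, hB, hBm⟩ := hN i V c hc _ hi
      have hBA' : B ⊆ A := fun x hx =>
        Finset.mem_of_mem_erase (Finset.mem_filter.mp (hBA hx)).1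
      by_cases hl : l = i
      · subst hl
        have hvB : v ∉ B := fun h => by
          have := hBA h
          simp at this
        refine ⟨l, insert v B, Finset.insert_subset hv hBA', ?_, ?_⟩
        · rw [Finset.card_insert_of_notMem hvB, hB, Function.update_self]
          have := h0 l
          omega
        · have hcol : ∀ x ∈ B, c v x = l := fun x hx => (Finset.mem_filter.mp (hBA hx)).2
          intro x hx y hy hxy
          rw [Finset.mem_insert] at hx hy
          rcases hx with rfl | hx <;> rcases hy with rfl | hy
          · exact absurd rfl hxy
          · exact hcol _ hy
          · rw [hc]; exact hcol _ hx
          · exact hBm x hx y hy hxy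
      · refine ⟨l, B, hBA', ?_, hBm⟩
        rw [hB, Function.update_of_ne hl]

lemma gr_nonempty (k m : ℕ) : {N | ∀ c : Fin N → Fin N → Fin k, (∀ x y, c x y = c y x) →
    NoRainbowTriangle (⊤ : SimpleGraph (Fin N)) c →
    IsMonoCopy (⊤ : SimpleGraph (Fin N)) c (kipasG m)}.Nonempty := by
  obtain ⟨N, hN⟩ := ramsey k _ (fun _ => m + 1) rfl
  refine ⟨N + 1, fun c hc _ => ?_⟩
  obtain ⟨i, B, -, hB, hBm⟩ := hN (Fin (N + 1)) c hc Finset.univ (by simp)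
  refine ⟨fun a => B.orderEmbOfFin hB a, i, (B.orderEmbOfFin hB).injective, ?_⟩
  intro a b hab
  have hne : B.orderEmbOfFin hB a ≠ B.orderEmbOfFin hB b :=
    (B.orderEmbOfFin hB).injective.ne hab.ne
  exact ⟨hne, hBm _ (Finset.orderEmbOfFin_mem _ _ _) _ (Finset.orderEmbOfFin_mem _ _ _) hne⟩

lemma gr_lower {k m N : ℕ} (h : ∃ χ : Fin N → Fin N → Fin k, (∀ x y, χ x y = χ y x) ∧
      NoRainbowTriangle (⊤ : SimpleGraph (Fin N)) χ ∧
      ¬ IsMonoCopy (⊤ : SimpleGraph (Fin N)) χ (kipasG m)) :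
    N + 1 ≤ GallaiRamsey k (kipasG m) := by
  by_contra hcon
  have hmem := Nat.sInf_mem (gr_nonempty k m)
  have hle : GallaiRamsey k (kipasG m) ≤ N := by omega
  obtain ⟨χ, hs, hr, hk⟩ := h
  apply hk
  have hinj := Fin.castLE_injective hle
  obtain ⟨f, i, hf, hadj⟩ := hmem (fun x y => χ (Fin.castLE hle x) (Fin.castLE hle y))
    (fun x y => hs _ _) (by
      rintro ⟨x, y, z, hxy, hyz, hxz, h⟩
      exact hr ⟨_, _, _, hinj.ne hxy, hinj.ne hyz, hinj.ne hxz, h⟩)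
  refine ⟨fun a => Fin.castLE hle (f a), i, hinj.comp hf, fun a b hab => ?_⟩
  obtain ⟨h1, h2⟩ := hadj a b hab
  exact ⟨hinj.ne h1, h2⟩

lemma main {k m n c d : ℕ} (hk : 5 ≤ k) (hko : k % 2 = 1)
    (hm : 7 ≤ m) (hmo : m % 2 = 1)
    (hcd : (m % 4 = 1 ∧ c = m - 3 ∧ d = m - 5) ∨ (m % 4 = 3 ∧ c = m - 2 ∧ d = m - 3))
    (h2 : ∃ χ : Fin n → Fin n → Fin 2, (∀ x y, χ x y = χ y x) ∧
      ¬ IsMonoCopy (⊤ : SimpleGraph (Fin n)) χ (kipasG m)) :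
    ∃ χ : Fin (2 * (n + 5 * c * (5 ^ ((k - 3) / 2) - 1) - d * (k - 3))) →
        Fin (2 * (n + 5 * c * (5 ^ ((k - 3) / 2) - 1) - d * (k - 3))) → Fin k,
      (∀ x y, χ x y = χ y x) ∧
      NoRainbowTriangle (⊤ : SimpleGraph
        (Fin (2 * (n + 5 * c * (5 ^ ((k - 3) / 2) - 1) - d * (k - 3))))) χ ∧
      ¬ IsMonoCopy (⊤ : SimpleGraph
        (Fin (2 * (n + 5 * c * (5 ^ ((k - 3) / 2) - 1) - d * (k - 3))))) χ (kipasG m) := by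
  obtain ⟨χ, hs, hx⟩ := h2
  obtain ⟨t, rfl⟩ : ∃ t, k = 2 * t + 3 := ⟨(k - 3) / 2, by omega⟩
  obtain ⟨h, hh⟩ : ∃ h, m = 2 * h + 1 := ⟨m / 2, by omega⟩
  obtain ⟨e, rfl⟩ : ∃ e, d = 2 * e := ⟨d / 2, by omega⟩
  have e1 : (2 * t + 3 - 3) / 2 = t := by omega
  have e2 : 2 * e * (2 * t + 3 - 3) = 4 * e * t := by
    rw [Nat.add_sub_cancel]; ring
  rw [e1, e2]
  refine ex_final (h := h) (by omega) ?_
  exact ex_double hh (by omega) (ex_M (r := (h - 1) / 2) hh (by omega) (by omega) (by omega)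
    (by omega) (by omega) (by omega) (ex_base χ hs hx) t)

end KipasAux

/-- Odd `k ≥ 5`, odd `m ≥ 7`: from a 2-coloring of `K_n` with no monochromatic
kipas `K̂_m`, one gets a Gallai `k`-coloring of a larger complete graph with no
monochromatic `K̂_m`; consequently the Gallai–Ramsey lower bound. -/
theorem kipas_gallai_lower_odd_k_odd_m (k m n c d : ℕ) (hk : 5 ≤ k) (hko : k % 2 = 1)
    (hm : 7 ≤ m) (hmo : m % 2 = 1)
    (hcd : (m % 4 = 1 ∧ c = m - 3 ∧ d = m - 5) ∨ (m % 4 = 3 ∧ c = m - 2 ∧ d = m - 3))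
    (h2 : ∃ χ : Fin n → Fin n → Fin 2, (∀ x y, χ x y = χ y x) ∧
      ¬ IsMonoCopy (⊤ : SimpleGraph (Fin n)) χ (kipasG m)) :
    (∃ χ : Fin (2 * n + 10 * c * (5 ^ ((k - 3) / 2) - 1) - 2 * d * (k - 3)) →
        Fin (2 * n + 10 * c * (5 ^ ((k - 3) / 2) - 1) - 2 * d * (k - 3)) → Fin k,
      (∀ x y, χ x y = χ y x) ∧
      NoRainbowTriangle (⊤ : SimpleGraph (Fin (2 * n + 10 * c * (5 ^ ((k - 3) / 2) - 1) - 2 * d * (k - 3)))) χ ∧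
      ¬ IsMonoCopy (⊤ : SimpleGraph (Fin (2 * n + 10 * c * (5 ^ ((k - 3) / 2) - 1) - 2 * d * (k - 3)))) χ (kipasG m)) ∧
    2 * (Ramsey2 (kipasG m) + 5 * c * (5 ^ ((k - 3) / 2) - 1) - d * (k - 3)) - 1 ≤
      GallaiRamsey k (kipasG m) := by
  have hmain := KipasAux.main hk hko hm hmo hcd h2
  have hR : ∃ χ : Fin (Ramsey2 (kipasG m) - 1) → Fin (Ramsey2 (kipasG m) - 1) → Fin 2,
      (∀ x y, χ x y = χ y x) ∧
      ¬ IsMonoCopy (⊤ : SimpleGraph (Fin (Ramsey2 (kipasG m) - 1))) χ (kipasG m) := by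
    rcases Nat.eq_zero_or_pos (Ramsey2 (kipasG m)) with h0 | hpos
    · rw [h0]
      refine ⟨fun _ _ => 0, fun _ _ => rfl, ?_⟩
      rintro ⟨f, -⟩
      exact (f 0).elim0
    · have hnot := Nat.notMem_of_lt_sInf (show Ramsey2 (kipasG m) - 1 < sInf _ from
        Nat.sub_lt hpos Nat.one_pos)
      simp only [Set.mem_ofPred_eq] at hnot
      push Not at hnot
      exact hnot
  have hlow := KipasAux.gr_lower (KipasAux.main hk hko hm hmo hcd hR)
  have e1 : 2 * n + 10 * c * (5 ^ ((k - 3) / 2) - 1) - 2 * d * (k - 3) =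
      2 * (n + 5 * c * (5 ^ ((k - 3) / 2) - 1) - d * (k - 3)) := by
    generalize 5 ^ ((k - 3) / 2) - 1 = X
    generalize k - 3 = Y
    rw [Nat.mul_sub, Nat.mul_add]
    congr 1 <;> ring
  rw [e1]
  refine ⟨hmain, ?_⟩
  omega
end

section
/- For every even integer n ≥ 4, there exists an edge 2-coloring of the graph obtained from the complete graph on 2n−1 vertices by deleting one edge, containing no monochromatic copy of K^+_{1,n}. Together with the fact that every edge 2-coloring of the complete graph on 2n−1 vertices contains a monochromatic K^+_{1,n}, this shows that K^+_{1,n} is Ramsey-full. -/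
open SimpleGraph

lemma starPlus_build {N n : ℕ} (hn : 1 ≤ n) (c : Fin N → Fin N → Fin 2)
    (hc : ∀ x y, c x y = c y x) (i : Fin 2) (v a w : Fin N) (L : Finset (Fin N))
    (hL : L.card = n) (hv : v ∉ L) (hvl : ∀ l ∈ L, c v l = i) (ha : a ∈ L)
    (hw : w ∉ L) (hwv : w ≠ v) (haw : c a w = i) :
    IsMonoCopy (⊤ : SimpleGraph (Fin N)) c (starPlusG n) := by
  obtain ⟨e, he⟩ : ∃ e : Fin n ≃ L, (e ⟨n - 1, by omega⟩ : Fin N) = a := by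
    let e0 : Fin n ≃ L := (L.equivFinOfCardEq hL).symm
    refine ⟨(Equiv.swap ⟨n - 1, by omega⟩ (e0.symm ⟨a, ha⟩)).trans e0, ?_⟩
    simp
  let f : Fin (n + 2) → Fin N := fun k =>
    if k.val = 0 then v else if h : k.val ≤ n ∧ 1 ≤ k.val then e ⟨k.val - 1, by omega⟩ else w
  have f0 : ∀ k : Fin (n+2), k.val = 0 → f k = v := by intro k hk; simp only [f]; rw [if_pos hk]
  have f1 : ∀ (k : Fin (n+2)) (h : 1 ≤ k.val) (h' : k.val ≤ n),
      f k = e ⟨k.val - 1, by omega⟩ := by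
    intro k h h'
    simp only [f]
    rw [if_neg (by omega), dif_pos ⟨h', h⟩]
  have f2 : ∀ k : Fin (n+2), k.val = n + 1 → f k = w := by
    intro k hk
    simp only [f]
    rw [if_neg (by omega), dif_neg (by omega)]
  have fL : ∀ (k : Fin (n+2)), 1 ≤ k.val → k.val ≤ n → f k ∈ L := by
    intro k h h'
    rw [f1 k h h']; exact (e _).2
  have fa : ∀ k : Fin (n+2), k.val = n → f k = a := by
    intro k hk
    rw [f1 k (by omega) (by omega), ← he]
    simp [hk]
  have tri : ∀ k : Fin (n+2), k.val = 0 ∨ (1 ≤ k.val ∧ k.val ≤ n) ∨ k.val = n + 1 := by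
    intro k; have := k.2; omega
  have inj : Function.Injective f := by
    intro k l hkl
    rcases tri k with hk | hk | hk <;> rcases tri l with hl | hl | hl
    · ext; omega
    · exact absurd (fL l hl.1 hl.2) (by rw [← hkl, f0 k hk]; exact hv)
    · rw [f0 k hk, f2 l hl] at hkl; exact absurd hkl.symm hwv
    · exact absurd (fL k hk.1 hk.2) (by rw [hkl, f0 l hl]; exact hv)
    · rw [f1 k hk.1 hk.2, f1 l hl.1 hl.2] at hkl
      have := e.injective (Subtype.ext hkl)
      simp only [Fin.mk.injEq] at this
      ext; omega
    · exact absurd (fL k hk.1 hk.2) (by rw [hkl, f2 l hl]; exact hw)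
    · rw [f2 k hk, f0 l hl] at hkl; exact absurd hkl hwv
    · exact absurd (fL l hl.1 hl.2) (by rw [← hkl, f2 k hk]; exact hw)
    · ext; omega
  have key : ∀ x y : Fin (n+2), x ≠ y →
      ((x = 0 ∧ y.val ≤ n) ∨ (x.val = n ∧ y.val = n + 1)) → c (f x) (f y) = i := by
    rintro x y hxy (⟨hx, hy⟩ | ⟨hx, hy⟩)
    · subst hx
      have : 1 ≤ y.val := by
        rcases Nat.eq_zero_or_pos y.val with h | h
        · exact absurd (Fin.ext (by simp [h])) hxy
        · exact h
      rw [f0 0 (by simp)]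
      exact hvl _ (fL y this hy)
    · rw [fa x hx, f2 y hy]; exact haw
  refine ⟨f, i, inj, ?_⟩
  intro x y hxy
  rw [starPlusG, SimpleGraph.fromRel_adj] at hxy
  refine ⟨?_, ?_⟩
  · rw [SimpleGraph.top_adj]; exact fun h => hxy.1 (inj h)
  · rcases hxy.2 with h | h
    · exact key x y hxy.1 h
    · rw [hc]; exact key y x hxy.1.symm h

lemma starPlus_of_degree {n : ℕ} (hn : 4 ≤ n) (c : Fin (2*n-1) → Fin (2*n-1) → Fin 2)
    (hc : ∀ x y, c x y = c y x) (i : Fin 2) (v : Fin (2*n-1))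
    (hv : n ≤ (Finset.univ.filter (fun w => w ≠ v ∧ c v w = i)).card) :
    IsMonoCopy (⊤ : SimpleGraph (Fin (2*n-1))) c (starPlusG n) := by
  set A := Finset.univ.filter (fun w => w ≠ v ∧ c v w = i) with hA
  have memA : ∀ w, w ∈ A ↔ w ≠ v ∧ c v w = i := by intro w; simp [hA]
  have hvA : v ∉ A := by simp [memA]
  by_contra hno
  have two : ∀ p q r : Fin 2, p ≠ q → r ≠ q → p = r := by decide
  obtain ⟨j, hj⟩ : ∃ j : Fin 2, j ≠ i := by
    have : ∀ i : Fin 2, ∃ j : Fin 2, j ≠ i := by decide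
    exact this i
  -- edges leaving A
  have step : ∀ a ∈ A, ∀ w, w ≠ v → w ≠ a → (w ∉ A ∨ n + 1 ≤ A.card) → c a w = j := by
    intro a ha w hwv hwa hor
    by_contra hne
    have hi : c a w = i := by
      by_contra h
      exact hne (two _ _ _ h hj)
    have hsub : n ≤ (A.erase w).card := by
      rcases hor with h | h
      · rw [Finset.erase_eq_of_notMem h]; exact hv
      · have := Finset.pred_card_le_card_erase (s := A) (a := w); omega
    obtain ⟨L, haL, hLA, hLc⟩ := Finset.exists_subsuperset_card_eq
      (s := {a}) (t := A.erase w) (n := n) (by simp [ha, hwa.symm]) (by simp; omega) hsub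
    refine hno (starPlus_build (by omega) c hc i v a w L hLc ?_ ?_ (by simpa using haL) ?_ hwv hi)
    · intro h; exact hvA (Finset.mem_of_mem_erase (hLA h))
    · intro l hl; exact ((memA l).1 (Finset.mem_of_mem_erase (hLA hl))).2
    · intro h; exact absurd (hLA h) (by simp)
  by_cases hbig : n + 1 ≤ A.card
  · obtain ⟨a, ha⟩ := Finset.card_pos.1 (show 0 < A.card by omega)
    have h1 : n ≤ (A.erase a).card := by rw [Finset.card_erase_of_mem ha]; omega
    obtain ⟨L, hLA, hLc⟩ := Finset.exists_subset_card_eq h1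
    obtain ⟨l, hl⟩ := Finset.card_pos.1 (show 0 < L.card by omega)
    have : ((insert v (insert a L))).card < (Finset.univ : Finset (Fin (2*n-1))).card := by
      have h2 := Finset.card_insert_le v (insert a L)
      have h3 := Finset.card_insert_le a L
      rw [Finset.card_univ, Fintype.card_fin]; omega
    obtain ⟨b, -, hb⟩ := Finset.exists_mem_notMem_of_card_lt_card this
    simp only [Finset.mem_insert, not_or] at hb
    have hLA' : ∀ l ∈ L, l ≠ a ∧ l ∈ A := fun l hl => Finset.mem_erase.1 (hLA hl)
    refine hno (starPlus_build (by omega) c hc j a l b L hLc ?_ ?_ hl hb.2.2 hb.2.1 ?_)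
    · intro h; exact (hLA' a h).1 rfl
    · intro m hm
      exact step a ha m (fun h => hvA (h ▸ (hLA' m hm).2)) (hLA' m hm).1 (Or.inr hbig)
    · exact step l (hLA' l hl).2 b hb.1 (fun h => hb.2.2 (h ▸ hl)) (Or.inr hbig)
  · have hcard : A.card = n := by omega
    have h1 : (insert v A).card < (Finset.univ : Finset (Fin (2*n-1))).card := by
      have h2 := Finset.card_insert_le v A
      rw [Finset.card_univ, Fintype.card_fin]; omega
    obtain ⟨b, -, hb⟩ := Finset.exists_mem_notMem_of_card_lt_card h1
    have h1' : (insert b (insert v A)).card < (Finset.univ : Finset (Fin (2*n-1))).card := by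
      have h2 := Finset.card_insert_le v A
      have h3 := Finset.card_insert_le b (insert v A)
      rw [Finset.card_univ, Fintype.card_fin]; omega
    obtain ⟨b', -, hb'⟩ := Finset.exists_mem_notMem_of_card_lt_card h1'
    simp only [Finset.mem_insert, not_or] at hb hb'
    obtain ⟨a, ha⟩ := Finset.card_pos.1 (show 0 < A.card by omega)
    refine hno (starPlus_build (by omega) c hc j b a b' A hcard hb.2 ?_ ha hb'.2.2 hb'.1 ?_)
    · intro l hl
      rw [hc]
      exact step l hl b hb.1 (fun h => hb.2 (h ▸ hl)) (Or.inl hb.2)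
    · exact step a ha b' hb'.2.1 (fun h => hb'.2.2 (h ▸ ha)) (Or.inl hb'.2.2)

lemma starPlus_upper {n : ℕ} (hn : 4 ≤ n) (hne : n % 2 = 0)
    (c : Fin (2*n-1) → Fin (2*n-1) → Fin 2) (hc : ∀ x y, c x y = c y x) :
    IsMonoCopy (⊤ : SimpleGraph (Fin (2*n-1))) c (starPlusG n) := by
  classical
  by_contra hno
  have hlt : ∀ i v, (Finset.univ.filter (fun w => w ≠ v ∧ c v w = i)).card < n := by
    intro i v
    by_contra h
    exact hno (starPlus_of_degree hn c hc i v (not_lt.1 h))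
  have hsum : ∀ v, (Finset.univ.filter (fun w => w ≠ v ∧ c v w = 0)).card
      + (Finset.univ.filter (fun w => w ≠ v ∧ c v w = 1)).card = 2*n-1-1 := by
    intro v
    rw [← Finset.card_union_of_disjoint]
    · have : (Finset.univ.filter (fun w => w ≠ v ∧ c v w = 0))
          ∪ (Finset.univ.filter (fun w => w ≠ v ∧ c v w = 1)) = Finset.univ.erase v := by
        ext w
        have : c v w = 0 ∨ c v w = 1 := by
          generalize c v w = p; revert p; decide
        simp only [Finset.mem_union, Finset.mem_filter, Finset.mem_univ, true_and,
          Finset.mem_erase]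
        tauto
      rw [this, Finset.card_erase_of_mem (Finset.mem_univ _), Finset.card_univ, Fintype.card_fin]
    · rw [Finset.disjoint_left]
      intro w h1 h2
      simp only [Finset.mem_filter, Finset.mem_univ, true_and] at h1 h2
      exact absurd (h1.2.symm.trans h2.2) (by decide)
  let G : SimpleGraph (Fin (2*n-1)) :=
    { Adj := fun x y => y ≠ x ∧ c x y = 0
      symm := by
        constructor
        intro x y h
        exact ⟨h.1.symm, by rw [hc]; exact h.2⟩
      loopless := by constructor; intro x h; exact h.1 rfl }
  have hdeg : ∀ v, G.degree v = n - 1 := by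
    intro v
    have h0 := hlt 0 v
    have h1 := hlt 1 v
    have h2 := hsum v
    have : G.degree v = (Finset.univ.filter (fun w => w ≠ v ∧ c v w = 0)).card := by
      rw [← SimpleGraph.card_neighborFinset_eq_degree]
      congr 1
      ext w
      simp [G]
    omega
  have hev := G.even_card_odd_degree_vertices
  have : (Finset.univ.filter (fun v => Odd (G.degree v))) = Finset.univ := by
    ext v
    simp only [Finset.mem_filter, Finset.mem_univ, true_and, iff_true]
    rw [hdeg, Nat.odd_iff]; omega
  rw [this, Finset.card_univ, Fintype.card_fin, Nat.even_iff] at hev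
  omega

/-- The red relation for `x < y`. -/
def redRel (n x y : ℕ) : Prop :=
  (x + 2 ≤ y ∧ y ≤ x + n / 2) ∨ (2 * n - 1 ≤ y - x + n / 2 ∧ y - x + 2 ≤ 2 * n - 1) ∨
    (y = x + 1 ∧ x % 2 = 1)

lemma starPlus_card_bound (n : ℕ) (hn : 4 ≤ n)
    (S : Finset ℕ) (g : ℕ → ℕ) (hS : S.card ≤ n - 1) (T : Finset (Fin (2*n-1)))
    (hT : ∀ y ∈ T, ∃ j ∈ S, g j = y.val) : T.card < n := by
  have : (T.image (fun y => y.val)) ⊆ S.image g := by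
    intro y hy
    obtain ⟨z, hz, rfl⟩ := Finset.mem_image.1 hy
    obtain ⟨j, hj, h⟩ := hT z hz
    exact Finset.mem_image.2 ⟨j, hj, h⟩
  have h1 := Finset.card_le_card this
  rw [Finset.card_image_of_injective _ Fin.val_injective] at h1
  have h2 := Finset.card_image_le (s := S) (f := g)
  omega

lemma starPlus_lower {n : ℕ} (hn : 4 ≤ n) (hne : n % 2 = 0) :
    ∃ c : Fin (2 * n - 1) → Fin (2 * n - 1) → Fin 2, (∀ x y, c x y = c y x) ∧
      ¬ IsMonoCopy (compMinusEdge (2 * n - 1)) c (starPlusG n) := by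
  classical
  let c : Fin (2 * n - 1) → Fin (2 * n - 1) → Fin 2 := fun x y =>
    if redRel n (min x.val y.val) (max x.val y.val) then 0 else 1
  refine ⟨c, fun x y => by simp only [c, min_comm, max_comm], ?_⟩
  have hdeg : ∀ (i : Fin 2) (x : Fin (2*n-1)),
      (Finset.univ.filter (fun y => (compMinusEdge (2*n-1)).Adj x y ∧ c x y = i)).card < n := by
    intro i x
    have hx := x.2
    fin_cases i
    · -- red
      refine starPlus_card_bound n hn
        (Finset.Icc 2 (n/2) ∪ Finset.Icc (2*n-1 - n/2) (2*n-1-2) ∪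
          {if x.val % 2 = 1 then 1 else 2*n-1-1})
        (fun j => if x.val + j < 2*n-1 then x.val + j else x.val + j - (2*n-1)) ?_ _ ?_
      · refine (Finset.card_union_le _ _).trans ?_
        have := Finset.card_union_le (Finset.Icc 2 (n/2)) (Finset.Icc (2*n-1 - n/2) (2*n-1-2))
        simp only [Nat.card_Icc, Finset.card_singleton] at *
        omega
      · intro y hy
        have hy2 := y.2
        obtain ⟨⟨hxy, h1, h2⟩, hcol⟩ := (Finset.mem_filter.1 hy).2
        simp only [c] at hcol
        have hxy' : x.val ≠ y.val := fun h => hxy (Fin.ext h)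
        have hr : redRel n (min x.val y.val) (max x.val y.val) := by
          by_contra h; simp [h] at hcol
        unfold redRel at hr
        refine ⟨if x.val < y.val then y.val - x.val else y.val + (2*n-1) - x.val, ?_, ?_⟩
        · simp only [Finset.mem_union, Finset.mem_Icc, Finset.mem_singleton]
          rcases lt_or_gt_of_ne hxy' with h | h
          · rw [min_eq_left h.le, max_eq_right h.le] at hr
            split_ifs <;> omega
          · rw [min_eq_right h.le, max_eq_left h.le] at hr
            split_ifs <;> omega
        · skip
          split_ifs <;> omega
    · refine starPlus_card_bound n hn
        (Finset.Icc (n/2+1) (2*n-1 - n/2 - 1) ∪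
          {if x.val % 2 = 1 ∨ x.val = 0 then 2*n-1-1 else 1})
        (fun j => if x.val + j < 2*n-1 then x.val + j else x.val + j - (2*n-1)) ?_ _ ?_
      · refine (Finset.card_union_le _ _).trans ?_
        simp only [Nat.card_Icc, Finset.card_singleton] at *
        omega
      · intro y hy
        have hy2 := y.2
        obtain ⟨⟨hxy, h1, h2⟩, hcol⟩ := (Finset.mem_filter.1 hy).2
        simp only [c] at hcol
        have hxy' : x.val ≠ y.val := fun h => hxy (Fin.ext h)
        have hr : ¬ redRel n (min x.val y.val) (max x.val y.val) := by
          intro h; simp [h] at hcol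
        unfold redRel at hr
        refine ⟨if x.val < y.val then y.val - x.val else y.val + (2*n-1) - x.val, ?_, ?_⟩
        · simp only [Finset.mem_union, Finset.mem_Icc, Finset.mem_singleton]
          rcases lt_or_gt_of_ne hxy' with h | h
          · rw [min_eq_left h.le, max_eq_right h.le] at hr
            split_ifs <;> omega
          · rw [min_eq_right h.le, max_eq_left h.le] at hr
            split_ifs <;> omega
        · skip
          split_ifs <;> omega
  rintro ⟨f, i, hf, hadj⟩
  have h := hdeg i (f 0)
  have hle : (Finset.univ : Finset (Fin n)).card ≤ (Finset.univ.filter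
      (fun y => (compMinusEdge (2*n-1)).Adj (f 0) y ∧ c (f 0) y = i)).card := by
    refine Finset.card_le_card_of_injOn (fun k : Fin n => f ⟨k.val + 1, by omega⟩) ?_ ?_
    · intro k _
      have := hadj 0 ⟨k.val + 1, by omega⟩ (by
        rw [starPlusG, SimpleGraph.fromRel_adj]
        refine ⟨fun h => ?_, Or.inl (Or.inl ⟨rfl, ?_⟩)⟩
        · have := congrArg Fin.val h
          simp at this
        · have := k.2
          simp only; omega)
      simpa using this
    · intro k _ l _ hkl
      have := hf hkl
      simp only [Fin.mk.injEq] at this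
      ext; omega
  rw [Finset.card_univ, Fintype.card_fin] at hle
  omega

lemma starPlus_ramsey {n : ℕ} (hn : 4 ≤ n) (hne : n % 2 = 0) :
    Ramsey2 (starPlusG n) = 2 * n - 1 := by
  have hmem := fun c hc => starPlus_upper hn hne c hc
  refine le_antisymm (Nat.sInf_le hmem) (le_csInf ⟨_, hmem⟩ ?_)
  intro N hN
  by_contra hlt
  obtain ⟨c, hc, hno⟩ := starPlus_lower hn hne
  let g : Fin N → Fin (2*n-1) := fun x => ⟨x.val + 1, by omega⟩
  obtain ⟨f, i, hf, hadj⟩ := hN (fun x y => c (g x) (g y)) (fun x y => hc _ _)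
  have hg : Function.Injective g := by
    intro x y h
    simp only [g, Fin.mk.injEq] at h
    ext; omega
  refine hno ⟨g ∘ f, i, hg.comp hf, fun a b hab => ?_⟩
  obtain ⟨h1, h2⟩ := hadj a b hab
  rw [SimpleGraph.top_adj] at h1
  refine ⟨⟨fun h => h1 (hg h), ?_, ?_⟩, h2⟩
  · simp [g]
  · simp [g]

/-- For every even `n ≥ 4`, the complete graph on `2n − 1` vertices minus one
edge admits a 2-coloring with no monochromatic copy of `K⁺_{1,n}`; together
with `K_{2n-1} → (K⁺_{1,n}, K⁺_{1,n})` this shows `K⁺_{1,n}` is Ramsey-full,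
i.e. `K` on `R(K⁺_{1,n}, K⁺_{1,n})` vertices minus an edge admits such a
coloring. -/
theorem starPlus_ramsey_full (n : ℕ) (hn : 4 ≤ n) (hne : n % 2 = 0) :
    (∃ c : Fin (2 * n - 1) → Fin (2 * n - 1) → Fin 2, (∀ x y, c x y = c y x) ∧
      ¬ IsMonoCopy (compMinusEdge (2 * n - 1)) c (starPlusG n)) ∧
    (∃ c : Fin (Ramsey2 (starPlusG n)) → Fin (Ramsey2 (starPlusG n)) → Fin 2,
      (∀ x y, c x y = c y x) ∧
      ¬ IsMonoCopy (compMinusEdge (Ramsey2 (starPlusG n))) c (starPlusG n)) := by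
  refine ⟨starPlus_lower hn hne, ?_⟩
  rw [starPlus_ramsey hn hne]
  exact starPlus_lower hn hne
end

section
/- For every integer k ≥ 3 and every even integer n ≥ 12, there exists a Gallai k-coloring of the complete graph on 5n/2 + k − 7 vertices with no monochromatic copy of K^+_{1,n}. Consequently GR_k(K^+_{1,n}) ≥ 5n/2 + k − 6. -/
open SimpleGraph

/-- The index of the part containing `x` in the five-part blow-up. -/
def bpart (m x : ℕ) : ℕ := min (x / m) 4

/-- The two-coloring of `K_5` by pentagons, with color `2` inside the parts. -/
def bcol (q r : ℕ) : ℕ :=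
  if q = r then 2 else if (q + 1) % 5 = r ∨ (r + 1) % 5 = q then 0 else 1

/-- The full coloring on natural numbers. -/
def ncol (m x y : ℕ) : ℕ :=
  if max x y < 5 * m + 1 then bcol (bpart m x) (bpart m y) else 3 + (max x y - (5 * m + 1))

theorem bcol_symm (q r : ℕ) : bcol q r = bcol r q := by
  unfold bcol
  grind

theorem bcol_lt (q r : ℕ) : bcol q r < 3 := by
  unfold bcol
  grind

theorem ncol_symm (m x y : ℕ) : ncol m x y = ncol m y x := by
  unfold ncol
  rw [max_comm, bcol_symm]

theorem bcol_tri (p q r : ℕ) :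
    bcol p q = bcol q r ∨ bcol q r = bcol p r ∨ bcol p q = bcol p r := by
  by_cases h1 : p = q
  · subst h1; right; left; rfl
  by_cases h2 : q = r
  · subst h2; right; right; rfl
  by_cases h3 : p = r
  · subst h3; left; exact bcol_symm _ _
  unfold bcol
  rw [if_neg h1, if_neg h2, if_neg h3]
  split_ifs <;> simp

theorem ncol_tri (m x y z : ℕ) (hxy : x ≠ y) (hyz : y ≠ z) (hxz : x ≠ z) :
    ncol m x y = ncol m y z ∨ ncol m y z = ncol m x z ∨ ncol m x y = ncol m x z := by
  by_cases h : x < 5 * m + 1 ∧ y < 5 * m + 1 ∧ z < 5 * m + 1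
  · obtain ⟨hx, hy, hz⟩ := h
    unfold ncol
    rw [if_pos (by omega), if_pos (by omega), if_pos (by omega)]
    exact bcol_tri _ _ _
  · rcases le_total x y with h1 | h1 <;> rcases le_total y z with h2 | h2 <;>
      rcases le_total x z with h3 | h3 <;> unfold ncol <;>
      simp only [max_eq_left, max_eq_right, h1, h2, h3] <;> grind

/-- The interval of vertices in part `a`. -/
def bint (m a : ℕ) : Finset ℕ := Finset.Ico (m * a) (m * a + m + (if a = 4 then 1 else 0))

theorem bint_card (m a : ℕ) : (bint m a).card = m + (if a = 4 then 1 else 0) := by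
  simp [bint]; omega

theorem mem_bint (m y : ℕ) (hm : 0 < m) (hy : y < 5 * m + 1) : y ∈ bint m (bpart m y) := by
  have h1 := Nat.div_mul_le_self y m
  have h2 := Nat.lt_div_mul_add (a := y) hm
  unfold bint bpart
  generalize y / m = q at *
  rcases Nat.lt_or_ge q 4 with h | h
  · rw [min_eq_left h.le, if_neg (by omega), Finset.mem_Ico]
    rw [mul_comm] at h1 h2
    omega
  · rw [min_eq_right h, if_pos rfl, Finset.mem_Ico]
    have : 4 * m ≤ q * m := Nat.mul_le_mul_right m h
    omega

theorem bint_two (m a b : ℕ) (h : a ≠ b) : (bint m a ∪ bint m b).card ≤ 2 * m + 1 := by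
  refine (Finset.card_union_le _ _).trans ?_
  rw [bint_card, bint_card]
  split_ifs <;> omega

theorem base_nbrs (m p i : ℕ) (hp : p ≤ 4) : ∃ a b, a ≠ b ∧
    ∀ r, r ≤ 4 → bcol p r = i → r = a ∨ r = b := by
  by_cases h0 : i = 0
  · refine ⟨(p + 1) % 5, (p + 4) % 5, by omega, ?_⟩
    intro r hr h
    unfold bcol at h
    split_ifs at h <;> omega
  by_cases h1 : i = 1
  · refine ⟨(p + 2) % 5, (p + 3) % 5, by omega, ?_⟩
    intro r hr h
    unfold bcol at h
    split_ifs at h <;> omega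
  · refine ⟨p, p + 1, by omega, ?_⟩
    intro r hr h
    unfold bcol at h
    split_ifs at h <;> omega

theorem starPlus_adj_zero (n : ℕ) (b : Fin (n + 2)) (h0 : b ≠ 0) (hb : b.val ≤ n) :
    (starPlusG n).Adj 0 b := by
  simp [starPlusG, SimpleGraph.fromRel_adj, hb, h0.symm]

theorem starPlus_adj_last (n : ℕ) :
    (starPlusG n).Adj ⟨n, by omega⟩ ⟨n + 1, by omega⟩ := by
  simp [starPlusG, SimpleGraph.fromRel_adj]

theorem lower_coloring (k m : ℕ) (hk : 3 ≤ k) (hm : 1 ≤ m) (N : ℕ)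
    (hN : N = 5 * m + 1 + (k - 3)) :
    ∃ c : Fin N → Fin N → Fin k,
      (∀ x y, c x y = c y x) ∧
      NoRainbowTriangle (⊤ : SimpleGraph (Fin N)) c ∧
      ¬ IsMonoCopy (⊤ : SimpleGraph (Fin N)) c (starPlusG (2 * m + 2)) := by
  have hlt : ∀ x y : Fin N, ncol m x y < k := by
    intro x y
    unfold ncol
    have := bcol_lt (bpart m x) (bpart m y)
    have := x.2
    have := y.2
    split_ifs <;> omega
  refine ⟨fun x y => ⟨ncol m x y, hlt x y⟩, ?_, ?_, ?_⟩
  · intro x y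
    simp only [Fin.mk.injEq]
    exact ncol_symm _ _ _
  · rintro ⟨x, y, z, hxy, hyz, hxz, h1, h2, h3⟩
    simp only [SimpleGraph.top_adj, ne_eq, Fin.mk.injEq] at *
    have := ncol_tri m x y z (by omega) (by omega) (by omega)
    tauto
  · rintro ⟨f, i, hf, h⟩
    have key : ∀ b : Fin (2 * m + 2 + 2), b ≠ 0 → b.val ≤ 2 * m + 2 →
        ncol m (f 0) (f b) = i := by
      intro b h0 hb
      have := (h 0 b (starPlus_adj_zero _ b h0 hb)).2
      exact congrArg Fin.val this
    have hlast := (h _ _ (starPlus_adj_last (2 * m + 2))).2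
    replace hlast := congrArg Fin.val hlast
    simp only at hlast
    have hfv : ∀ a b, a ≠ b → (f a).val ≠ (f b).val := fun a b hab he =>
      hab (hf (Fin.ext he))
    by_cases hi : i.val < 3
    · have hsm : ∀ x y : ℕ, ncol m x y = i → x < 5 * m + 1 ∧ y < 5 * m + 1 ∧
          bcol (bpart m x) (bpart m y) = i := by
        intro x y hxy
        unfold ncol at hxy
        split_ifs at hxy with hc
        · exact ⟨by omega, by omega, hxy⟩
        · omega
      obtain ⟨a, b, hab, hr⟩ := base_nbrs m (bpart m (f 0)) i (by unfold bpart; omega)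
      let g : Fin (2 * m + 2) → ℕ := fun j => (f ⟨j.val + 1, by omega⟩).val
      have hg : Function.Injective g := by
        intro j j' hj
        have := hf (Fin.ext hj)
        simp only [Fin.mk.injEq] at this
        exact Fin.ext (by omega)
      have hsub : Finset.univ.image g ⊆ bint m a ∪ bint m b := by
        intro y hy
        obtain ⟨j, -, rfl⟩ := Finset.mem_image.1 hy
        obtain ⟨_, hlt2, hc⟩ := hsm _ _ (key ⟨j.val + 1, by omega⟩
          (fun he => Nat.succ_ne_zero _ (congrArg Fin.val he)) (by simp only; omega))
        have hmem := mem_bint m _ hm hlt2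
        rcases hr _ (by unfold bpart; omega) hc with he | he
        · rw [he] at hmem; exact Finset.mem_union_left _ hmem
        · rw [he] at hmem; exact Finset.mem_union_right _ hmem
      have hcard := Finset.card_le_card hsub
      rw [Finset.card_image_of_injective _ hg, Finset.card_univ, Fintype.card_fin] at hcard
      have := bint_two m a b hab
      omega
    · have hbig : ∀ x y : ℕ, ncol m x y = i → max x y = i - 3 + (5 * m + 1) := by
        intro x y hxy
        unfold ncol at hxy
        have := bcol_lt (bpart m x) (bpart m y)
        split_ifs at hxy with hc <;> omega
      have e1 := hbig _ _ (key ⟨1, by omega⟩ (by simp [Fin.ext_iff]) (by simp only; omega))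
      have e2 := hbig _ _ hlast
      have d1 := hfv 0 ⟨2 * m + 2, by omega⟩ (by simp [Fin.ext_iff])
      have d2 := hfv 0 ⟨2 * m + 2 + 1, by omega⟩ (by simp [Fin.ext_iff])
      have d3 := hfv ⟨1, by omega⟩ ⟨2 * m + 2, by omega⟩ (by simp only [ne_eq, Fin.mk.injEq]; omega)
      have d4 := hfv ⟨1, by omega⟩ ⟨2 * m + 2 + 1, by omega⟩
        (by simp only [ne_eq, Fin.mk.injEq]; omega)
      omega

/-- A big monochromatic star with one extra edge at a leaf contains the subdivided star. -/
theorem copy_of_star {N k n : ℕ} (hn : 2 ≤ n) (c : Fin N → Fin N → Fin k)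
    (hc : ∀ x y, c x y = c y x) (i : Fin k) (v u w : Fin N) (T : Finset (Fin N))
    (hvT : v ∉ T) (hT : ∀ t ∈ T, c v t = i) (hcard : n + 1 ≤ T.card)
    (hu : u ∈ T) (huw : u ≠ w) (hvw : v ≠ w) (hcw : c u w = i) :
    IsMonoCopy (⊤ : SimpleGraph (Fin N)) c (starPlusG n) := by
  have hcard' : n - 1 ≤ ((T.erase u).erase w).card := by
    have h1 := Finset.pred_card_le_card_erase (s := T.erase u) (a := w)
    have h2 := Finset.pred_card_le_card_erase (s := T) (a := u)
    omega
  obtain ⟨S, hS, hScard⟩ := Finset.exists_subset_card_eq hcard'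
  let g : Fin (n - 1) → Fin N := fun j => S.orderEmbOfFin hScard j
  have hginj : Function.Injective g := (S.orderEmbOfFin hScard).injective
  have hg : ∀ j, g j ≠ w ∧ g j ≠ u ∧ g j ∈ T := by
    intro j
    have := hS (S.orderEmbOfFin_mem hScard j)
    simpa [Finset.mem_erase] using this
  have hgv : ∀ j, g j ≠ v := fun j he => hvT (he ▸ (hg j).2.2)
  have huv : u ≠ v := fun he => hvT (he ▸ hu)
  let f : Fin (n + 2) → Fin N := fun a =>
    if a.val = 0 then v else if h2 : a.val < n then g ⟨a.val - 1, by omega⟩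
    else if a.val = n then u else w
  have f0 : ∀ a : Fin (n + 2), a.val = 0 → f a = v := fun a h => if_pos h
  have f1 : ∀ a : Fin (n + 2), a.val ≠ 0 → ∀ h : a.val < n, f a = g ⟨a.val - 1, by omega⟩ :=
    fun a h h' => (if_neg h).trans (dif_pos h')
  have f2 : ∀ a : Fin (n + 2), a.val = n → f a = u := fun a h =>
    (if_neg (by omega)).trans ((dif_neg (by omega)).trans (if_pos h))
  have f3 : ∀ a : Fin (n + 2), a.val = n + 1 → f a = w := fun a h =>
    (if_neg (by omega)).trans ((dif_neg (by omega)).trans (if_neg (by omega)))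
  have cases4 : ∀ a : Fin (n + 2), a.val = 0 ∨ (a.val ≠ 0 ∧ a.val < n) ∨ a.val = n ∨
    a.val = n + 1 := fun a => by omega
  have hinj : Function.Injective f := by
    intro a b hab
    rcases cases4 a with ha | ⟨ha, ha'⟩ | ha | ha <;>
    rcases cases4 b with hb | ⟨hb, hb'⟩ | hb | hb
    all_goals first
      | exact Fin.ext (by omega)
      | skip
    · rw [f0 a ha, f1 b hb hb'] at hab; exact absurd hab.symm (hgv _)
    · rw [f0 a ha, f2 b hb] at hab; exact absurd hab.symm huv
    · rw [f0 a ha, f3 b hb] at hab; exact absurd hab hvw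
    · rw [f1 a ha ha', f0 b hb] at hab; exact absurd hab (hgv _)
    · rw [f1 a ha ha', f1 b hb hb'] at hab
      have := hginj hab
      simp only [Fin.mk.injEq] at this
      exact Fin.ext (by omega)
    · rw [f1 a ha ha', f2 b hb] at hab; exact absurd hab (hg _).2.1
    · rw [f1 a ha ha', f3 b hb] at hab; exact absurd hab (hg _).1
    · rw [f2 a ha, f0 b hb] at hab; exact absurd hab huv
    · rw [f2 a ha, f1 b hb hb'] at hab; exact absurd hab.symm (hg _).2.1
    · rw [f2 a ha, f3 b hb] at hab; exact absurd hab huw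
    · rw [f3 a ha, f0 b hb] at hab; exact absurd hab.symm hvw
    · rw [f3 a ha, f1 b hb hb'] at hab; exact absurd hab.symm (hg _).1
    · rw [f3 a ha, f2 b hb] at hab; exact absurd hab.symm huw
  have hrel : ∀ a b : Fin (n + 2), a ≠ b →
      ((a = 0 ∧ b.val ≤ n) ∨ (a.val = n ∧ b.val = n + 1)) → c (f a) (f b) = i := by
    rintro a b hab (⟨ha, hb⟩ | ⟨ha, hb⟩)
    · subst ha
      rw [f0 0 rfl]
      rcases cases4 b with hb0 | ⟨hb0, hb'⟩ | hb0 | hb0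
      · exact absurd (Fin.ext hb0.symm) hab
      · rw [f1 b hb0 hb']; exact hT _ (hg _).2.2
      · rw [f2 b hb0]; exact hT _ hu
      · omega
    · rw [f2 a ha, f3 b hb]; exact hcw
  refine ⟨f, i, hinj, fun a b hadj => ?_⟩
  rw [starPlusG, SimpleGraph.fromRel_adj] at hadj
  obtain ⟨hab, h | h⟩ := hadj
  · exact ⟨by simpa using fun he => hab (hinj he), hrel a b hab h⟩
  · exact ⟨by simpa using fun he => hab (hinj he), by rw [hc]; exact hrel b a hab.symm h⟩

theorem ramsey_finite (k n : ℕ) (hn : 2 ≤ n) (s : ℕ) : ∃ M, ∀ (N : ℕ)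
    (c : Fin N → Fin N → Fin k), (∀ x y, c x y = c y x) →
    ∀ (C : Finset (Fin k)) (S : Finset (Fin N)), C.card = s → M ≤ S.card →
    (∀ x ∈ S, ∀ y ∈ S, x ≠ y → c x y ∈ C) →
    IsMonoCopy (⊤ : SimpleGraph (Fin N)) c (starPlusG n) := by
  induction s with
  | zero =>
    refine ⟨2, fun N c hc C S hC hS h => ?_⟩
    obtain ⟨x, hx, y, hy, hxy⟩ := Finset.one_lt_card.1 hS
    have := h x hx y hy hxy
    rw [Finset.card_eq_zero.1 hC] at this
    simp at this
  | succ s ih =>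
    obtain ⟨M, hM⟩ := ih
    refine ⟨(s + 1) * (M + n + 1) + 2, fun N c hc C S hC hS h => ?_⟩
    obtain ⟨v, hv⟩ : S.Nonempty := Finset.card_pos.1 (by omega)
    have hcv : (S.erase v).card = S.card - 1 := Finset.card_erase_of_mem hv
    obtain ⟨i, hiC, hi⟩ := Finset.exists_lt_card_fiber_of_mul_lt_card_of_maps_to
      (s := S.erase v) (t := C) (f := fun y => c v y) (n := M + n + 1)
      (fun y hy => h v hv y (Finset.mem_of_mem_erase hy) (Finset.ne_of_mem_erase hy).symm)
      (by rw [hC, hcv]; omega)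
    set T := {x ∈ S.erase v | c v x = i} with hTdef
    have hTm : ∀ t ∈ T, t ≠ v ∧ t ∈ S ∧ c v t = i := by
      intro t ht
      simpa [hTdef, and_assoc] using ht
    by_cases hex : ∃ u ∈ T, ∃ w ∈ T, u ≠ w ∧ c u w = i
    · obtain ⟨u, hu, w, hw, huw, hcw⟩ := hex
      exact copy_of_star hn c hc i v u w T (fun hvT => (hTm v hvT).1 rfl)
        (fun t ht => (hTm t ht).2.2) (by omega) hu huw (hTm w hw).1.symm hcw
    · push Not at hex
      refine hM N c hc (C.erase i) T (by rw [Finset.card_erase_of_mem hiC]; omega) (by omega) ?_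
      intro x hx y hy hxy
      exact Finset.mem_erase.2 ⟨hex x hx y hy hxy, h x (hTm x hx).2.1 y (hTm y hy).2.1 hxy⟩

theorem gallai_gt (k n : ℕ) (hn : 2 ≤ n) (N : ℕ)
    (hex : ∃ c : Fin N → Fin N → Fin k, (∀ x y, c x y = c y x) ∧
      NoRainbowTriangle (⊤ : SimpleGraph (Fin N)) c ∧
      ¬ IsMonoCopy (⊤ : SimpleGraph (Fin N)) c (starPlusG n)) :
    N + 1 ≤ GallaiRamsey k (starPlusG n) := by
  obtain ⟨c, hc, hr, hm⟩ := hex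
  unfold GallaiRamsey
  apply le_csInf
  · obtain ⟨M, hM⟩ := ramsey_finite k n hn k
    exact ⟨M, fun c hc _ => hM M c hc Finset.univ Finset.univ (by simp) (by simp) (by simp)⟩
  · intro L hL
    by_contra hlt
    have hle : L ≤ N := by omega
    apply hm
    obtain ⟨f, i, hf, h⟩ := hL (fun x y => c (Fin.castLE hle x) (Fin.castLE hle y))
      (fun x y => hc _ _) (by
        rintro ⟨x, y, z, h1, h2, h3, h4⟩
        exact hr ⟨Fin.castLE hle x, Fin.castLE hle y, Fin.castLE hle z,
          by simpa using h1, by simpa using h2, by simpa using h3, h4⟩)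
    refine ⟨fun a => Fin.castLE hle (f a), i, (Fin.castLE_injective hle).comp hf, ?_⟩
    intro a b hab
    obtain ⟨h1, h2⟩ := h a b hab
    exact ⟨by simpa using h1, h2⟩

/-- For every `k ≥ 3` and even `n ≥ 12`, there is a Gallai `k`-coloring of the
complete graph on `5n/2 + k − 7` vertices with no monochromatic copy of
`K⁺_{1,n}`; consequently `GR_k(K⁺_{1,n}) ≥ 5n/2 + k − 6`. -/
theorem starPlus_gallai_lower (k n : ℕ) (hk : 3 ≤ k) (hn : 12 ≤ n) (hne : n % 2 = 0) :
    (∃ c : Fin (5 * n / 2 + k - 7) → Fin (5 * n / 2 + k - 7) → Fin k,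
      (∀ x y, c x y = c y x) ∧
      NoRainbowTriangle (⊤ : SimpleGraph (Fin (5 * n / 2 + k - 7))) c ∧
      ¬ IsMonoCopy (⊤ : SimpleGraph (Fin (5 * n / 2 + k - 7))) c (starPlusG n)) ∧
    5 * n / 2 + k - 6 ≤ GallaiRamsey k (starPlusG n) := by
  have hex := lower_coloring k (n / 2 - 1) hk (by omega) (5 * n / 2 + k - 7) (by omega)
  have e : 2 * (n / 2 - 1) + 2 = n := by omega
  rw [e] at hex
  refine ⟨hex, ?_⟩
  have := gallai_gt k n (by omega) _ hex
  omega
end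

section
/- For every integer k ≥ 3 and every even integer n ≥ 12, let G be the graph obtained from the complete graph on 5n/2 + k − 7 vertices by adding one new vertex w adjacent to exactly 2n + k − 5 of these vertices. Then every edge k-coloring of G with no rainbow triangle contains a monochromatic copy of K^+_{1,n}. Consequently GR*_k(K^+_{1,n}) = 2n + k − 5; since 2n + k − 5 < (5n/2 + k − 6) − 1 for n ≥ 12, the graph K^+_{1,n} is not Gallai-Ramsey-full. -/
open SimpleGraph

/-- the color class `e` restricted to `S` -/
def colGraph {β κ : Type*} (r : β → β → κ) (e : κ) (S : Set β) : SimpleGraph β where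
  Adj a b := a ≠ b ∧ a ∈ S ∧ b ∈ S ∧ r a b = e ∧ r b a = e
  symm := by
    constructor
    intro x y h
    exact ⟨h.1.symm, h.2.2.1, h.2.1, h.2.2.2.2, h.2.2.2.1⟩
  loopless := by constructor; intro x h; exact h.1 rfl

/-- complete coloring without rainbow triangles -/
def GalCol {β κ : Type*} (r : β → β → κ) : Prop :=
  (∀ x y, r x y = r y x) ∧
  ∀ x y z, x ≠ y → y ≠ z → x ≠ z → r x y = r y z ∨ r y z = r x z ∨ r x y = r x z

lemma colGraph_mem {β κ : Type*} {r : β → β → κ} {e : κ} {S : Set β} {a b : β}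
    (ha : a ∈ S) (h : (colGraph r e S).Reachable a b) : b ∈ S := by
  obtain ⟨p⟩ := h
  induction p with
  | nil => exact ha
  | cons h' p ih => exact ih h'.2.2.1

lemma homog1 {β κ : Type*} {r : β → β → κ} (hG : GalCol r) {e : κ} {S : Set β} {a b b' : β}
    (ha : a ∈ S) (hb : b ∈ S) (hr : ¬ (colGraph r e S).Reachable a b)
    (h : (colGraph r e S).Reachable b b') : r a b = r a b' := by
  obtain ⟨p⟩ := h
  induction p with
  | nil => rfl
  | @cons u v z h' p ih =>
    have hv : ¬ (colGraph r e S).Reachable a v := fun h2 => hr (h2.trans h'.symm.reachable)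
    rw [← ih h'.2.2.1 hv]
    have hau : a ≠ u := fun h2 => hr (h2 ▸ SimpleGraph.Reachable.refl _)
    have hav : a ≠ v := fun h2 => hv (h2 ▸ SimpleGraph.Reachable.refl _)
    have h1 : r a u ≠ e := fun h2 => hr
      (SimpleGraph.Adj.reachable (show (colGraph r e S).Adj a u from
        ⟨hau, ha, hb, h2, by rw [hG.1, h2]⟩))
    have h3 : r a v ≠ e := fun h2 => hv
      (SimpleGraph.Adj.reachable (show (colGraph r e S).Adj a v from
        ⟨hav, ha, h'.2.2.1, h2, by rw [hG.1, h2]⟩))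
    have h4 := h'.2.2.2.1
    rcases hG.2 a u v hau h'.1 hav with h | h | h
    · exact absurd (h.trans h4) h1
    · exact absurd (h.symm.trans h4) h3
    · exact h

lemma homog2 {β κ : Type*} {r : β → β → κ} (hG : GalCol r) {e : κ} {S : Set β} {a a' b b' : β}
    (ha : a ∈ S) (hb : b ∈ S) (hr : ¬ (colGraph r e S).Reachable a b)
    (h1 : (colGraph r e S).Reachable a a')
    (h : (colGraph r e S).Reachable b b') : r a b = r a' b' := by
  have h2 := homog1 hG ha hb hr h
  have h3 : r b' a = r b' a' := homog1 hG (colGraph_mem hb h) ha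
    (fun h4 => hr (h.trans h4).symm) h1
  rw [h2, hG.1, h3, hG.1]

/-- connected color class on `S` -/
def ColConn {β κ : Type*} (r : β → β → κ) (e : κ) (S : Set β) : Prop :=
  ∀ a ∈ S, ∀ b ∈ S, (colGraph r e S).Reachable a b

lemma conn_ext {β κ : Type*} {r : β → β → κ} {e : κ} {S : Set β} {x : β} (hx : x ∉ S)
    (hc : ColConn r e (insert x S)) {a : β} (ha : a ∈ S) :
    ∃ y ∈ S, (colGraph r e S).Reachable a y ∧ r x y = e := by
  by_contra hno
  push Not at hno
  have key : ∀ u v, (colGraph r e (insert x S)).Reachable u v →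
      (colGraph r e S).Reachable a u → (colGraph r e S).Reachable a v := by
    intro u v h
    obtain ⟨p⟩ := h
    induction p with
    | nil => exact id
    | @cons u v z h' p ih =>
      intro hu
      apply ih
      have hus := colGraph_mem ha hu
      have hvs : v ∈ S := by
        rcases h'.2.2.1 with rfl | h
        · exact absurd h'.2.2.2.2 (hno u hus hu)
        · exact h
      exact hu.trans (SimpleGraph.Adj.reachable ⟨h'.1, hus, hvs, h'.2.2.2⟩)
  have := key a x (hc a (Or.inr ha) x (Or.inl rfl)) (SimpleGraph.Reachable.refl _)
  exact hx (colGraph_mem ha this)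

/-- one step: color `i` is disconnected on `S`, connected on `insert x S`. -/
lemma gal_step {β κ : Type*} {r : β → β → κ} (hG : GalCol r) {i j l : κ} (hij : i ≠ j)
    (hil : i ≠ l) (hjl : j ≠ l) {S : Set β} {x : β} (hx : x ∉ S)
    (hi : ColConn r i (insert x S)) (hni : ¬ ColConn r i S)
    {z z' : β} (hz : z ∈ S) (hz' : z' ∈ S) (hxz : r x z = j) (hxz' : r x z' = l) : False := by
  have main : ∀ z ∈ S, r x z ≠ i → ∀ y ∈ S, r x y = i →
      ¬ (colGraph r i S).Reachable z y → r z y = r x z := by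
    intro z hz hzi y hy hyi hr
    have hzy : z ≠ y := fun h => hr (h ▸ SimpleGraph.Reachable.refl _)
    have hxz : x ≠ z := fun h => hx (h ▸ hz)
    have hxy : x ≠ y := fun h => hx (h ▸ hy)
    rcases hG.2 x z y hxz hzy hxy with h | h | h
    · exact h.symm
    · exfalso; apply hr
      exact SimpleGraph.Adj.reachable ⟨hzy, hz, hy, h.trans hyi, by rw [hG.1]; exact h.trans hyi⟩
    · exact absurd (h.trans hyi) hzi
  by_cases hzz : (colGraph r i S).Reachable z z'
  · obtain ⟨a, ha, hza⟩ : ∃ a ∈ S, ¬ (colGraph r i S).Reachable z a := by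
      by_contra h
      push Not at h
      exact hni fun a ha b hb => (h a ha).symm.trans (h b hb)
    obtain ⟨y, hy, hay, hxy⟩ := conn_ext hx hi ha
    have h1 : ¬ (colGraph r i S).Reachable z y := fun h => hza (h.trans hay.symm)
    have h2 : ¬ (colGraph r i S).Reachable z' y := fun h => h1 (hzz.trans h)
    have e1 := main z hz (by rw [hxz]; exact hij.symm) y hy hxy h1
    have e2 := main z' hz' (by rw [hxz']; exact hil.symm) y hy hxy h2
    have e3 := homog2 hG hz hy h1 hzz (SimpleGraph.Reachable.refl _)
    exact hjl (by rw [← hxz, ← hxz', ← e1, ← e2, e3])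
  · obtain ⟨y, hy, hzy, hxy⟩ := conn_ext hx hi hz
    obtain ⟨y', hy', hzy', hxy'⟩ := conn_ext hx hi hz'
    have e1 := main z hz (by rw [hxz]; exact hij.symm) y' hy' hxy'
      (fun h => hzz (h.trans hzy'.symm))
    have e2 := main z' hz' (by rw [hxz']; exact hil.symm) y hy hxy
      (fun h => hzz (hzy.trans h.symm))
    have e3 := homog2 hG hz hz' hzz (SimpleGraph.Reachable.refl _) hzy'
    have e4 := homog2 hG hz hz' hzz hzy (SimpleGraph.Reachable.refl _)
    exact hjl (by rw [← hxz, ← hxz', ← e1, ← e2, ← e3, hG.1 z' y, ← e4])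

lemma three_colors {β κ : Type*} [DecidableEq β] {r : β → β → κ} (hG : GalCol r) {i j l : κ}
    (hij : i ≠ j) (hil : i ≠ l) (hjl : j ≠ l) (S : Finset β) :
    2 ≤ S.card → ¬ (ColConn r i (S : Set β) ∧ ColConn r j (S : Set β) ∧ ColConn r l (S : Set β)) := by
  induction S using Finset.induction_on with
  | empty => simp
  | @insert x S hx ih =>
    intro hcard ⟨hi, hj, hl⟩
    rw [Finset.card_insert_of_notMem hx] at hcard
    have hx' : x ∉ (S : Set β) := by simpa using hx
    rw [Finset.coe_insert] at hi hj hl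
    obtain ⟨s, hs⟩ : S.Nonempty := Finset.card_pos.1 (by omega)
    obtain ⟨yi, hyi, -, ei⟩ := conn_ext hx' hi (a := s) hs
    obtain ⟨yj, hyj, -, ej⟩ := conn_ext hx' hj (a := s) hs
    obtain ⟨yl, hyl, -, el⟩ := conn_ext hx' hl (a := s) hs
    by_cases h2 : 2 ≤ S.card
    · have := ih h2
      by_cases h1 : ColConn r i (S : Set β)
      · by_cases h3 : ColConn r j (S : Set β)
        · by_cases h4 : ColConn r l (S : Set β)
          · exact this ⟨h1, h3, h4⟩
          · exact gal_step hG hil.symm hjl.symm hij hx' hl h4 hyi hyj ei ej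
        · exact gal_step hG hij.symm hjl hil hx' hj h3 hyi hyl ei el
      · exact gal_step hG hij hil hjl hx' hi h1 hyj hyl ej el
    · have hS : S.card = 1 := by omega
      obtain ⟨a, rfl⟩ := Finset.card_eq_one.1 hS
      simp at hyi hyj
      subst hyi; subst hyj
      exact hij (ei.symm.trans ej)

/-- `p` is a homogeneous partition of `V` into `t` parts -/
def HomPart {α κ : Type*} (c : α → α → κ) (V : Finset α) (t : ℕ) (p : α → Fin t) : Prop :=
  (∀ a, ∃ x ∈ V, p x = a) ∧
  ∀ x ∈ V, ∀ y ∈ V, ∀ x' ∈ V, ∀ y' ∈ V, p x = p x' → p y = p y' → p x ≠ p y → c x y = c x' y'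

theorem gallai_partition {α κ : Type*} [DecidableEq α] (c : α → α → κ) (V : Finset α)
    (hV : 2 ≤ V.card) (hs : ∀ x y, c x y = c y x)
    (hG : ∀ x ∈ V, ∀ y ∈ V, ∀ z ∈ V, x ≠ y → y ≠ z → x ≠ z →
      c x y = c y z ∨ c y z = c x z ∨ c x y = c x z) :
    ∃ (t : ℕ) (p : α → Fin t) (r : Fin t → Fin t → κ) (R B : κ), 2 ≤ t ∧
      (∀ a, ∃ x ∈ V, p x = a) ∧ (∀ a b, r a b = r b a) ∧
      (∀ x ∈ V, ∀ y ∈ V, p x ≠ p y → c x y = r (p x) (p y)) ∧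
      (∀ a b, a ≠ b → r a b = R ∨ r a b = B) := by
  classical
  have hex : ∃ t, 2 ≤ t ∧ ∃ p : α → Fin t, HomPart c V t p := by
    refine ⟨V.card, hV, fun x => if h : x ∈ V then V.equivFin ⟨x, h⟩ else ⟨0, by omega⟩, ?_, ?_⟩
    · intro a
      refine ⟨(V.equivFin.symm a).1, (V.equivFin.symm a).2, ?_⟩
      simp
    · intro x hx y hy x' hx' y' hy' h1 h2 _
      simp only [hx, hy, hx', hy', dif_pos] at h1 h2
      have h1 := V.equivFin.injective h1
      have h2 := V.equivFin.injective h2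
      simp only [Subtype.mk.injEq] at h1 h2
      rw [h1, h2]
  obtain ⟨ht2, p, hp⟩ := Nat.find_spec hex
  have hmin := fun s (hs : s < Nat.find hex) => Nat.find_min hex hs
  generalize Nat.find hex = t at *
  choose q hq using hp.1
  set r : Fin t → Fin t → κ := fun a b => c (q a) (q b) with hr
  have hrG : GalCol r := by
    refine ⟨fun x y => hs _ _, fun x y z h1 h2 h3 => ?_⟩
    refine hG _ (hq x).1 _ (hq y).1 _ (hq z).1 ?_ ?_ ?_
    · intro h; apply h1; rw [← (hq x).2, ← (hq y).2, h]
    · intro h; apply h2; rw [← (hq y).2, ← (hq z).2, h]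
    · intro h; apply h3; rw [← (hq x).2, ← (hq z).2, h]
  have hcr : ∀ x ∈ V, ∀ y ∈ V, p x ≠ p y → c x y = r (p x) (p y) := by
    intro x hx y hy h
    exact hp.2 x hx y hy _ (hq _).1 _ (hq _).1 (hq _).2.symm (hq _).2.symm h
  -- every used color is connected
  have hconn : ∀ a b, a ≠ b → ColConn r (r a b) Set.univ := by
    intro a b hab
    by_contra hnc
    set H := colGraph r (r a b) Set.univ with hH
    have hadj : H.Adj a b := ⟨hab, trivial, trivial, rfl, hs _ _⟩
    have : Fintype H.ConnectedComponent := Fintype.ofFinite _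
    let e := Fintype.equivFin H.ConnectedComponent
    refine hmin (Fintype.card H.ConnectedComponent) ?_ ⟨?_, fun x => e (H.connectedComponentMk (p x)), ?_, ?_⟩
    · have := Fintype.card_lt_of_surjective_not_injective H.connectedComponentMk
        (fun x => by obtain ⟨v, hv⟩ := x.exists_rep; exact ⟨v, hv⟩)
        (fun hi => hab (hi (SimpleGraph.ConnectedComponent.sound hadj.reachable)))
      simpa using this
    · unfold ColConn at hnc
      push Not at hnc
      obtain ⟨x, -, y, -, hxy⟩ := hnc
      have : H.connectedComponentMk x ≠ H.connectedComponentMk y :=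
        fun h => hxy (SimpleGraph.ConnectedComponent.exact h)
      exact Fintype.one_lt_card_iff.2 ⟨_, _, this⟩
    · intro d
      obtain ⟨v, hv⟩ := (e.symm d).exists_rep
      refine ⟨q v, (hq v).1, ?_⟩
      change e (H.connectedComponentMk (p (q v))) = d
      rw [(hq v).2]
      rw [← e.apply_symm_apply d, ← hv]; rfl
    · intro x hx y hy x' hx' y' hy' h1 h2 h3
      have h1 := SimpleGraph.ConnectedComponent.exact (e.injective h1)
      have h2 := SimpleGraph.ConnectedComponent.exact (e.injective h2)
      have h3 : ¬ H.Reachable (p x) (p y) :=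
        fun h => h3 (congrArg e (SimpleGraph.ConnectedComponent.sound h))
      have h4 := homog2 hrG (Set.mem_univ _) (Set.mem_univ _) h3 h1 h2
      have h5 : ¬ H.Reachable (p x') (p y') := fun h => h3 ((h1.trans h).trans h2.symm)
      rw [hcr x hx y hy (fun h => h3 (h ▸ SimpleGraph.Reachable.refl _)), h4,
        hcr x' hx' y' hy' (fun h => h5 (h ▸ SimpleGraph.Reachable.refl _))]
  let a0 : Fin t := ⟨0, by omega⟩
  let a1 : Fin t := ⟨1, by omega⟩
  have h01 : a0 ≠ a1 := by simp [a0, a1]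
  by_cases hB : ∃ a b, a ≠ b ∧ r a b ≠ r a0 a1
  · obtain ⟨a, b, hab, hne⟩ := hB
    refine ⟨t, p, r, r a0 a1, r a b, ht2, hp.1, hrG.1, hcr, ?_⟩
    intro x y hxy
    by_contra hno
    push Not at hno
    have := three_colors hrG hne hno.2.symm hno.1.symm (Finset.univ : Finset (Fin t)) (by simpa using ht2)
    simp only [Finset.coe_univ] at this
    exact this ⟨hconn a b hab, hconn a0 a1 h01, hconn x y hxy⟩
  · push Not at hB
    exact ⟨t, p, r, r a0 a1, r a0 a1, ht2, hp.1, hrG.1, hcr, fun a b hab => Or.inl (hB a b hab)⟩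


open Classical in
/-- the neighbours of `x` in `U` in color `e` -/
noncomputable def nb {α κ : Type*} (G : SimpleGraph α) (c : α → α → κ) (U : Finset α) (e : κ)
    (x : α) : Finset α := U.filter (fun y => G.Adj x y ∧ c x y = e)

/-- triangle condition in an arbitrary graph -/
def TriOK {α κ : Type*} (G : SimpleGraph α) (c : α → α → κ) : Prop :=
  ∀ x y z, G.Adj x y → G.Adj y z → G.Adj x z → c x y = c y z ∨ c y z = c x z ∨ c x y = c x z

open Classical in
lemma c5_final {α κ ι : Type*} (G : SimpleGraph α) (c : α → α → κ)
    (hs : ∀ x y, c x y = c y x) (hT : TriOK G c) (U : Finset α) (w : α) (hwU : w ∈ U) (m : ℕ)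
    (hm : 6 ≤ m) (hcomp : ∀ x ∈ U, ∀ y ∈ U, x ≠ w → y ≠ w → x ≠ y → G.Adj x y)
    (hdeg : ∀ x ∈ U, ∀ e, (nb G c U e x).card ≤ 2 * m - 1)
    (hw : ((U.erase w).filter (fun y => ¬ G.Adj w y)).card ≤ m - 2)
    (hcard : 5 * m - 4 ≤ (U.erase w).card)
    (p : α → ι) (r : ι → ι → κ) (hrs : ∀ a b, r a b = r b a)
    (hcr : ∀ x ∈ U.erase w, ∀ y ∈ U.erase w, p x ≠ p y → c x y = r (p x) (p y))
    (R B : κ) (hRB : R ≠ B) (l1 l2 l3 l4 l5 : ι) (hall : ∀ l, l = l1 ∨ l = l2 ∨ l = l3 ∨ l = l4 ∨ l = l5)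
    (d12 : l1 ≠ l2) (d13 : l1 ≠ l3) (d14 : l1 ≠ l4) (d15 : l1 ≠ l5) (d23 : l2 ≠ l3)
    (d24 : l2 ≠ l4) (d25 : l2 ≠ l5) (d34 : l3 ≠ l4) (d35 : l3 ≠ l5) (d45 : l4 ≠ l5)
    (r12 : r l1 l2 = R) (r23 : r l2 l3 = R) (_r34 : r l3 l4 = R) (r45 : r l4 l5 = R)
    (r15 : r l1 l5 = R) (r13 : r l1 l3 = B) (r14 : r l1 l4 = B) (r24 : r l2 l4 = B)
    (_r25 : r l2 l5 = B) (r35 : r l3 l5 = B)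
    (P : ι → Finset α) (hP : ∀ l x, x ∈ P l ↔ x ∈ U.erase w ∧ p x = l)
    (c1 : (P l1).card = m) (c2 : (P l2).card = m - 1) (c3 : (P l3).card = m - 1)
    (c4 : (P l4).card = m - 1) (c5 : (P l5).card = m - 1) : False := by
  have memP : ∀ {x l}, x ∈ P l → x ∈ U ∧ x ≠ w ∧ p x = l := by
    intro x l h
    rw [hP] at h
    simp only [Finset.mem_erase] at h
    tauto
  have inP : ∀ {x}, x ∈ U → x ≠ w → x ∈ P (p x) := by
    intro x h1 h2
    rw [hP]
    simp [h1, h2]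
  have sat : ∀ y ∈ U, ∀ e, ∀ T : Finset α, T ⊆ U → (∀ t ∈ T, G.Adj y t ∧ c y t = e) →
      2 * m - 1 ≤ T.card → ∀ z ∈ U, z ∉ T → G.Adj y z → c y z ≠ e := by
    intro y hy e T hTU hTe hTc z hz hzT hyz he
    have h1 : insert z T ⊆ nb G c U e y := by
      intro t ht
      rw [Finset.mem_insert] at ht
      unfold nb
      rw [Finset.mem_filter]
      rcases ht with rfl | ht
      · exact ⟨hz, hyz, he⟩
      · exact ⟨hTU ht, hTe t ht⟩
    have h2 := Finset.card_le_card h1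
    rw [Finset.card_insert_of_notMem hzT] at h2
    have := hdeg y hy e
    omega
  have cross : ∀ {a b x y}, a ≠ b → x ∈ P a → y ∈ P b → G.Adj x y ∧ c x y = r a b := by
    intro a b x y hab hx hy
    obtain ⟨hx1, hx2, hx3⟩ := memP hx
    obtain ⟨hy1, hy2, hy3⟩ := memP hy
    have hne : p x ≠ p y := by rw [hx3, hy3]; exact hab
    refine ⟨hcomp x hx1 y hy1 hx2 hy2 (fun h => hne (h ▸ rfl)), ?_⟩
    rw [hcr x (Finset.mem_erase.2 ⟨hx2, hx1⟩) y (Finset.mem_erase.2 ⟨hy2, hy1⟩) hne, hx3, hy3]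
  have cardU : ∀ {a b}, a ≠ b → (P a ∪ P b).card = (P a).card + (P b).card := by
    intro a b hab
    apply Finset.card_union_of_disjoint
    rw [Finset.disjoint_left]
    intro x hx hy
    exact hab ((memP hx).2.2.symm.trans (memP hy).2.2)
  have subU : ∀ {a b}, P a ∪ P b ⊆ U := by
    intro a b x hx
    rcases Finset.mem_union.1 hx with h | h <;> exact (memP h).1
  have wnot : ∀ {a b}, w ∉ P a ∪ P b := by
    intro a b hx
    rcases Finset.mem_union.1 hx with h | h <;> exact (memP h).2.1 rfl
  have satw : ∀ {a b d : ι} (e : κ), a ≠ b → a ≠ d → b ≠ d → r a b = e → r a d = e →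
      2 * m - 1 ≤ (P b).card + (P d).card → ∀ y ∈ P a, G.Adj w y → c w y ≠ e := by
    intro a b d e hab had hbd h1 h2 hc y hy hwy
    rw [hs]
    refine sat y (memP hy).1 e (P b ∪ P d) subU ?_ (by rw [cardU hbd]; exact hc) w hwU wnot hwy.symm
    intro t ht
    rcases Finset.mem_union.1 ht with h | h
    · have := cross hab hy h
      rwa [h1] at this
    · have := cross had hy h
      rwa [h2] at this
  have s2 := satw (a := l2) (b := l1) (d := l3) R d12.symm d23 d13 (by rw [hrs, r12]) r23 (by omega)
  have s5 := satw (a := l5) (b := l1) (d := l4) R d15.symm d45.symm d14 (by rw [hrs, r15]) (by rw [hrs, r45]) (by omega)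
  have s3 := satw (a := l3) (b := l1) (d := l5) B d13.symm d35 d15 (by rw [hrs, r13]) r35 (by omega)
  have s4 := satw (a := l4) (b := l1) (d := l2) B d14.symm d24.symm d12 (by rw [hrs, r14]) (by rw [hrs, r24]) (by omega)
  have exn : ∀ l, m - 1 ≤ (P l).card → ∃ y ∈ P l, G.Adj w y := by
    intro l hl
    by_contra hno
    push Not at hno
    have : P l ⊆ (U.erase w).filter (fun y => ¬ G.Adj w y) := by
      intro y hy
      obtain ⟨h1, h2, h3⟩ := memP hy
      simp [h1, h2, hno y hy]
    have := Finset.card_le_card this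
    omega
  have hN : 4 * m - 2 ≤ ((U.erase w).filter (fun y => G.Adj w y)).card := by
    have := Finset.card_filter_add_card_filter_not (s := U.erase w) (fun y => G.Adj w y)
    omega
  have tri : ∀ {a b y z}, a ≠ b → y ∈ P a → z ∈ P b → G.Adj w y → G.Adj w z →
      c w y = c w z ∨ c w y = r a b ∨ c w z = r a b := by
    intro a b y z hab hy hz hwy hwz
    obtain ⟨h1, h2⟩ := cross hab hy hz
    rcases hT w y z hwy h1 hwz with h | h | h
    · right; left; rw [h, h2]
    · right; right; rw [← h, h2]
    · left; exact h
  by_cases hI : ∃ y ∈ P l3, G.Adj w y ∧ c w y = R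
  · obtain ⟨y3, hy3, hwy3, hy3R⟩ := hI
    have k5 : ∀ y ∈ P l5, G.Adj w y → c w y = B := by
      intro y hy hwy
      have h1 := s5 y hy hwy
      have h2 := tri d35 hy3 hy hwy3 hwy
      rw [r35, hy3R] at h2
      grind
    obtain ⟨y5, hy5, hwy5⟩ := exn l5 (by omega)
    have k4 : ∀ y ∈ P l4, G.Adj w y → c w y = R := by
      intro y hy hwy
      have h1 := s4 y hy hwy
      have h2 := tri d45 hy hy5 hwy hwy5
      rw [r45, k5 y5 hy5 hwy5] at h2
      grind
    obtain ⟨y4, hy4, hwy4⟩ := exn l4 (by omega)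
    have k2 : ∀ y ∈ P l2, G.Adj w y → c w y = B := by
      intro y hy hwy
      have h1 := s2 y hy hwy
      have h2 := tri d24 hy hy4 hwy hwy4
      rw [r24, k4 y4 hy4 hwy4] at h2
      grind
    obtain ⟨y2, hy2, hwy2⟩ := exn l2 (by omega)
    have k3 : ∀ y ∈ P l3, G.Adj w y → c w y = R := by
      intro y hy hwy
      have h1 := s3 y hy hwy
      have h2 := tri d23 hy2 hy hwy2 hwy
      rw [r23, k2 y2 hy2 hwy2] at h2
      grind
    have k1 : ∀ y ∈ P l1, G.Adj w y → c w y = R ∨ c w y = B := by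
      intro y hy hwy
      have h2 := tri d12 hy hy2 hwy hwy2
      rw [r12, k2 y2 hy2 hwy2] at h2
      grind
    have sat1 : ∀ {a b : ι} (e : κ), l1 ≠ a → l1 ≠ b → a ≠ b → r l1 a = e → r l1 b = e →
        2 * m - 2 ≤ (P a).card + (P b).card → ∀ y ∈ P l1, G.Adj w y → c w y = e →
        ∀ z ∈ P l1, G.Adj y z → c y z ≠ e := by
      intro a b e ha hb hab h1 h2 hc y hy hwy hwe z hz hyz
      refine sat y (memP hy).1 e (insert w (P a ∪ P b)) ?_ ?_ ?_ z (memP hz).1 ?_ hyz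
      · intro t ht
        rcases Finset.mem_insert.1 ht with rfl | ht
        · exact hwU
        · exact subU ht
      · intro t ht
        rcases Finset.mem_insert.1 ht with rfl | ht
        · exact ⟨hwy.symm, by rw [hs, hwe]⟩
        rcases Finset.mem_union.1 ht with h | h
        · have := cross ha hy h
          rwa [h1] at this
        · have := cross hb hy h
          rwa [h2] at this
      · rw [Finset.card_insert_of_notMem wnot, cardU hab]; omega
      · intro ht
        obtain ⟨hz1, hz2, hz3⟩ := memP hz
        rcases Finset.mem_insert.1 ht with h | ht
        · exact hz2 h
        rcases Finset.mem_union.1 ht with h | h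
        · exact ha (hz3.symm.trans (memP h).2.2)
        · exact hb (hz3.symm.trans (memP h).2.2)
    have mono : (∀ y ∈ P l1, G.Adj w y → c w y = R) ∨ (∀ y ∈ P l1, G.Adj w y → c w y = B) := by
      by_contra hno
      push Not at hno
      obtain ⟨⟨y, hy, hwy, hyR⟩, ⟨z, hz, hwz, hzB⟩⟩ := hno
      have hyB : c w y = B := (k1 y hy hwy).resolve_left hyR
      have hzR : c w z = R := (k1 z hz hwz).resolve_right hzB
      have hyz : y ≠ z := by rintro rfl; exact hyR hzR
      have hadj := hcomp y (memP hy).1 z (memP hz).1 (memP hy).2.1 (memP hz).2.1 hyz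
      have h1 := sat1 B d13 d14 d34 r13 r14 (by omega) y hy hwy hyB z hz hadj
      have h2 := sat1 R d12 d15 d25 r12 r15 (by omega) z hz hwz hzR y hy hadj.symm
      rw [hs] at h2
      rcases hT w y z hwy hadj hwz with h | h | h
      · exact h1 (by rw [← h, hyB])
      · exact h2 (by rw [h, hzR])
      · exact hRB (by rw [← hzR, ← h, hyB])
    rcases mono with hR | hB
    · have : (U.erase w).filter (fun y => G.Adj w y) ⊆ nb G c U R w ∪ (P l2 ∪ P l5) := by
        intro y hy
        rw [Finset.mem_filter, Finset.mem_erase] at hy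
        obtain ⟨⟨h1, h2⟩, h3⟩ := hy
        have h4 := inP h2 h1
        unfold nb
        rw [Finset.mem_union, Finset.mem_union, Finset.mem_filter]
        rcases hall (p y) with h | h | h | h | h <;> rw [h] at h4
        · exact Or.inl ⟨h2, h3, hR y h4 h3⟩
        · exact Or.inr (Or.inl h4)
        · exact Or.inl ⟨h2, h3, k3 y h4 h3⟩
        · exact Or.inl ⟨h2, h3, k4 y h4 h3⟩
        · exact Or.inr (Or.inr h4)
      have h1 := Finset.card_le_card this
      have h2 := Finset.card_union_le (nb G c U R w) (P l2 ∪ P l5)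
      rw [cardU d25] at h2
      have := hdeg w hwU R
      omega
    · have : (U.erase w).filter (fun y => G.Adj w y) ⊆ nb G c U B w ∪ (P l3 ∪ P l4) := by
        intro y hy
        rw [Finset.mem_filter, Finset.mem_erase] at hy
        obtain ⟨⟨h1, h2⟩, h3⟩ := hy
        have h4 := inP h2 h1
        unfold nb
        rw [Finset.mem_union, Finset.mem_union, Finset.mem_filter]
        rcases hall (p y) with h | h | h | h | h <;> rw [h] at h4
        · exact Or.inl ⟨h2, h3, hB y h4 h3⟩
        · exact Or.inl ⟨h2, h3, k2 y h4 h3⟩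
        · exact Or.inr (Or.inl h4)
        · exact Or.inr (Or.inr h4)
        · exact Or.inl ⟨h2, h3, k5 y h4 h3⟩
      have h1 := Finset.card_le_card this
      have h2 := Finset.card_union_le (nb G c U B w) (P l3 ∪ P l4)
      rw [cardU d34] at h2
      have := hdeg w hwU B
      omega
  · push Not at hI
    obtain ⟨y2, hy2, hwy2⟩ := exn l2 (by omega)
    obtain ⟨y3, hy3, hwy3⟩ := exn l3 (by omega)
    obtain ⟨y4, hy4, hwy4⟩ := exn l4 (by omega)
    have g2 := s2 y2 hy2 hwy2
    have k3 : ∀ y ∈ P l3, G.Adj w y → c w y = c w y2 := by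
      intro y hy hwy
      have h1 := hI y hy hwy
      have h2 := tri d23 hy2 hy hwy2 hwy
      rw [r23] at h2
      grind
    have gB : c w y2 ≠ B := by rw [← k3 y3 hy3 hwy3]; exact s3 y3 hy3 hwy3
    have k2 : ∀ y ∈ P l2, G.Adj w y → c w y = c w y2 := by
      intro y hy hwy
      have h1 := hI y3 hy3 hwy3
      have h3 := s2 y hy hwy
      have h2 := tri d23 hy hy3 hwy hwy3
      rw [r23] at h2
      rw [← k3 y3 hy3 hwy3]
      grind
    have k4 : ∀ y ∈ P l4, G.Adj w y → c w y = c w y2 := by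
      intro y hy hwy
      have h1 := s4 y hy hwy
      have h2 := tri d24 hy2 hy hwy2 hwy
      rw [r24] at h2
      grind
    have k5 : ∀ y ∈ P l5, G.Adj w y → c w y = c w y2 := by
      intro y hy hwy
      have h1 := s5 y hy hwy
      have h2 := tri d45 hy4 hy hwy4 hwy
      rw [r45, k4 y4 hy4 hwy4] at h2
      grind
    have : (U.erase w).filter (fun y => G.Adj w y) ⊆ nb G c U (c w y2) w ∪ P l1 := by
      intro y hy
      rw [Finset.mem_filter, Finset.mem_erase] at hy
      obtain ⟨⟨h1, h2⟩, h3⟩ := hy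
      have h4 := inP h2 h1
      unfold nb
      rw [Finset.mem_union, Finset.mem_filter]
      rcases hall (p y) with h | h | h | h | h <;> rw [h] at h4
      · exact Or.inr h4
      · exact Or.inl ⟨h2, h3, k2 y h4 h3⟩
      · exact Or.inl ⟨h2, h3, k3 y h4 h3⟩
      · exact Or.inl ⟨h2, h3, k4 y h4 h3⟩
      · exact Or.inl ⟨h2, h3, k5 y h4 h3⟩
    have h1 := Finset.card_le_card this
    have h2 := Finset.card_union_le (nb G c U (c w y2) w) (P l1)
    have := hdeg w hwU (c w y2)
    omega

lemma sizes_aux {m N i b f d e : ℕ} (hm : 6 ≤ m) (hN : 5 * m - 4 ≤ N) (hs : N = i + b + e + f + d)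
    (p1 : i + b ≤ 2 * m - 1) (p2 : i + f ≤ 2 * m - 1) (p3 : i + d ≤ 2 * m - 1)
    (p4 : i + e ≤ 2 * m - 1) (i1 : b ≤ i) (i2 : e ≤ i) (i3 : f ≤ i) (i4 : d ≤ i) :
    i = m ∧ b = m - 1 ∧ f = m - 1 ∧ d = m - 1 ∧ e = m - 1 := by
  have h1 : i ≤ m := by omega
  have h2 : m ≤ i := by omega
  have h3 : i = m := by omega
  subst h3
  refine ⟨rfl, ?_, ?_, ?_, ?_⟩ <;> omega

set_option maxHeartbeats 400000 in
open Classical in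
theorem no_small_degrees {α κ : Type*} (G : SimpleGraph α) (c : α → α → κ)
    (hs : ∀ x y, c x y = c y x) (hT : TriOK G c) (U : Finset α) (w : α) (hwU : w ∈ U) (m : ℕ)
    (hm : 6 ≤ m) (hcomp : ∀ x ∈ U, ∀ y ∈ U, x ≠ w → y ≠ w → x ≠ y → G.Adj x y)
    (hdeg : ∀ x ∈ U, ∀ e, (nb G c U e x).card ≤ 2 * m - 1)
    (hw : ((U.erase w).filter (fun y => ¬ G.Adj w y)).card ≤ m - 2)
    (hcard : 5 * m - 3 ≤ U.card) : False := by
  have hcV : 5 * m - 4 ≤ (U.erase w).card := by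
    rw [Finset.card_erase_of_mem hwU]; omega
  obtain ⟨t, p, r, R, B, ht2, hsurj, hrs, hcr, hRB⟩ := gallai_partition c (U.erase w)
    (by omega) hs (by
      intro x hx y hy z hz hxy hyz hxz
      rw [Finset.mem_erase] at hx hy hz
      exact hT x y z (hcomp x hx.2 y hy.2 hx.1 hy.1 hxy) (hcomp y hy.2 z hz.2 hy.1 hz.1 hyz)
        (hcomp x hx.2 z hz.2 hx.1 hz.1 hxz))
  set P : Fin t → Finset α := fun l => (U.erase w).filter (fun x => p x = l) with hP
  have hPm : ∀ l x, x ∈ P l ↔ x ∈ U.erase w ∧ p x = l := by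
    intro l x
    simp only [hP, Finset.mem_filter]
  set a : Fin t → ℕ := fun l => (P l).card with ha
  have hsum : (U.erase w).card = ∑ l, a l :=
    Finset.card_eq_sum_card_fiberwise (fun x _ => Finset.mem_coe.2 (Finset.mem_univ (p x)))
  have hD : ∀ (l : Fin t) (e : κ) (D : Finset (Fin t)), (∀ l' ∈ D, l ≠ l' ∧ r l l' = e) →
      ∑ l' ∈ D, a l' ≤ 2 * m - 1 := by
    intro l e D hDe
    obtain ⟨x, hx, hxl⟩ := hsurj l
    have hx' := Finset.mem_erase.1 hx
    refine le_trans ?_ (hdeg x hx'.2 e)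
    have h1 : ∑ l' ∈ D, a l' = ((U.erase w).filter (fun y => p y ∈ D)).card := by
      rw [Finset.card_eq_sum_card_fiberwise (f := p) (t := D)]
      · apply Finset.sum_congr rfl
        intro l' hl'
        simp only [ha, hP]
        congr 1
        ext y
        simp only [Finset.mem_filter]
        constructor
        · rintro ⟨h1, h2⟩; exact ⟨⟨h1, h2 ▸ hl'⟩, h2⟩
        · rintro ⟨⟨h1, _⟩, h2⟩; exact ⟨h1, h2⟩
      · intro y hy
        exact (Finset.mem_filter.1 hy).2
    rw [h1]
    apply Finset.card_le_card
    intro y hy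
    rw [Finset.mem_filter] at hy
    obtain ⟨hy1, hy2⟩ := hy
    obtain ⟨h3, h4⟩ := hDe _ hy2
    have hy' := Finset.mem_erase.1 hy1
    have hne : p x ≠ p y := by rw [hxl]; exact h3
    unfold nb
    rw [Finset.mem_filter]
    refine ⟨hy'.2, hcomp x hx'.2 y hy'.2 hx'.1 hy'.1 (fun h => hne (h ▸ rfl)), ?_⟩
    rw [hcr x hx y hy1 hne, hxl, h4]
  have hac : ∀ l, (P l).card = a l := fun _ => rfl
  clear_value a
  clear_value P
  set Rn : Fin t → Finset (Fin t) := fun l => Finset.univ.filter (fun l' => l ≠ l' ∧ r l l' = R) with hRn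
  set Bn : Fin t → Finset (Fin t) := fun l => Finset.univ.filter (fun l' => l ≠ l' ∧ ¬ r l l' = R) with hBn
  have hRs : ∀ l, ∑ l' ∈ Rn l, a l' ≤ 2 * m - 1 := fun l =>
    hD l R _ (fun l' h => (Finset.mem_filter.1 h).2)
  have hBs : ∀ l, ∑ l' ∈ Bn l, a l' ≤ 2 * m - 1 := fun l =>
    hD l B _ (fun l' h => by
      have := (Finset.mem_filter.1 h).2
      exact ⟨this.1, (hRB _ _ this.1).resolve_left this.2⟩)
  have hsplit : ∀ (f : Fin t → ℕ) (l : Fin t), ∑ l', f l' = f l + ∑ l' ∈ Rn l, f l' + ∑ l' ∈ Bn l, f l' := by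
    intro f l
    rw [← Finset.add_sum_erase _ _ (Finset.mem_univ l),
      ← Finset.sum_filter_add_sum_filter_not (Finset.univ.erase l) (fun l' => r l l' = R), add_assoc]
    congr 2
    · apply Finset.sum_congr _ (fun _ _ => rfl)
      ext y; simp [hRn, eq_comm]
    · apply Finset.sum_congr _ (fun _ _ => rfl)
      ext y; simp [hBn, eq_comm]
  have halow : ∀ l, m - 2 ≤ a l := by
    intro l
    have h1 := hsplit a l
    have h2 := hRs l
    have h3 := hBs l
    omega
  have hc2 : ∀ D : Finset (Fin t), ∑ l' ∈ D, a l' ≤ 2 * m - 1 → D.card ≤ 2 := by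
    intro D h
    by_contra hlt
    have h1 : D.card * (m - 2) ≤ ∑ l' ∈ D, a l' := by
      have := Finset.card_nsmul_le_sum D a (m - 2) (fun l _ => halow l)
      simpa using this
    have h2 : 3 * (m - 2) ≤ D.card * (m - 2) := Nat.mul_le_mul_right _ (by omega)
    omega
  have hRc := fun l => hc2 _ (hRs l)
  have hBc := fun l => hc2 _ (hBs l)
  have htc : ∀ l, t = 1 + (Rn l).card + (Bn l).card := by
    intro l
    have := hsplit (fun _ => 1) l
    simpa using this
  have ht5 : t ≤ 5 := by
    have := htc ⟨0, by omega⟩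
    have := hRc ⟨0, by omega⟩
    have := hBc ⟨0, by omega⟩
    omega
  have hone : ∀ l b, l ≠ b → a b ≤ 2 * m - 1 := by
    intro l b h
    have := hD l (r l b) {b} (by simp [h])
    simpa using this
  have hpair : ∀ l b d, l ≠ b → l ≠ d → b ≠ d → r l b = r l d → a b + a d ≤ 2 * m - 1 := by
    intro l b d h1 h2 h3 h
    have := hD l (r l b) {b, d} (by
      intro x hx
      rcases Finset.mem_insert.1 hx with rfl | hx
      · exact ⟨h1, rfl⟩
      · rw [Finset.mem_singleton] at hx; subst hx; exact ⟨h2, h.symm⟩)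
    rwa [Finset.sum_pair h3] at this
  have htrip : ∀ l b d f, l ≠ b → l ≠ d → l ≠ f → b ≠ d → b ≠ f → d ≠ f →
      r l b = r l d → r l b = r l f → False := by
    intro l b d f h1 h2 h3 h4 h5 h6 e1 e2
    have := hc2 {b, d, f} (hD l (r l b) {b, d, f} (by
      intro x hx
      simp only [Finset.mem_insert, Finset.mem_singleton] at hx
      rcases hx with rfl | rfl | rfl
      · exact ⟨h1, rfl⟩
      · exact ⟨h2, e1.symm⟩
      · exact ⟨h3, e2.symm⟩))
    rw [Finset.card_eq_three.2 ⟨b, d, f, h4, h5, h6, rfl⟩] at this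
    omega
  obtain h | h | h | h : t = 2 ∨ t = 3 ∨ t = 4 ∨ t = 5 := by omega
  · clear hD hsplit hRc hBc htc hRs hBs hc2
    subst h
    rw [Fin.sum_univ_two] at hsum
    have := hone 0 1 (by decide)
    have := hone 1 0 (by decide)
    omega
  · clear hD hsplit hRc hBc htc hRs hBs hc2
    subst h
    rw [Fin.sum_univ_three] at hsum
    have o0 := hone 1 0 (by decide)
    have o1 := hone 0 1 (by decide)
    have o2 := hone 0 2 (by decide)
    have h01 := hRB 0 1 (by decide)
    have h02 := hRB 0 2 (by decide)
    have h12 := hRB 1 2 (by decide)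
    have p0 := hpair 0 1 2 (by decide) (by decide) (by decide)
    have p1 := hpair 1 0 2 (by decide) (by decide) (by decide)
    have p2 := hpair 2 0 1 (by decide) (by decide) (by decide)
    rw [hrs 1 0] at p1
    rw [hrs 2 0, hrs 2 1] at p2
    have : r 0 1 = r 0 2 ∨ r 0 1 = r 1 2 ∨ r 0 2 = r 1 2 := by grind
    rcases this with h | h | h
    · have := p0 h; omega
    · have := p1 h; omega
    · have := p2 h; omega
  · clear hD hsplit hRc hBc htc hRs hBs hc2
    subst h
    rw [Fin.sum_univ_four] at hsum
    have key : ∀ x y z : Fin 4, (0 : Fin 4) ≠ x → (0 : Fin 4) ≠ y → (0 : Fin 4) ≠ z → x ≠ y → x ≠ z → y ≠ z →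
        a 0 + a x + a y + a z = a 0 + a 1 + a 2 + a 3 → r 0 x = r 0 y → False := by
      intro x y z h0x h0y h0z hxy hxz hyz hsm he
      have e1 := hpair 0 x y h0x h0y hxy he
      have e2 : r x 0 ≠ r x z := fun h => by
        have := hpair x 0 z h0x.symm hxz h0z h
        omega
      have e3 : r y 0 ≠ r y z := fun h => by
        have := hpair y 0 z h0y.symm hyz h0z h
        omega
      have e4 := htrip 0 x y z h0x h0y h0z hxy hxz hyz he
      have e5 := htrip z 0 x y h0z.symm hxz.symm hyz.symm h0x h0y hxy
      have b1 := hRB 0 x h0x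
      have b2 := hRB 0 z h0z
      have b3 := hRB x z hxz
      have b4 := hRB y z hyz
      rw [hrs x 0] at e2
      rw [hrs y 0, ← he] at e3
      rw [hrs z 0, hrs z x, hrs z y] at e5
      grind
    have h01 := hRB 0 1 (by decide)
    have h02 := hRB 0 2 (by decide)
    have h03 := hRB 0 3 (by decide)
    have : r 0 1 = r 0 2 ∨ r 0 1 = r 0 3 ∨ r 0 2 = r 0 3 := by grind
    rcases this with h | h | h
    · exact key 1 2 3 (by decide) (by decide) (by decide) (by decide) (by decide) (by decide) (by omega) h
    · exact key 1 3 2 (by decide) (by decide) (by decide) (by decide) (by decide) (by decide) (by omega) h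
    · exact key 2 3 1 (by decide) (by decide) (by decide) (by decide) (by decide) (by decide) (by omega) h
  · obtain ⟨i, -, hi⟩ := Finset.exists_max_image (Finset.univ : Finset (Fin t)) a ⟨⟨0, by omega⟩, Finset.mem_univ _⟩
    have hR2 : (Rn i).card = 2 := by have := htc i; have := hRc i; have := hBc i; omega
    have hB2 : (Bn i).card = 2 := by have := htc i; have := hRc i; have := hBc i; omega
    obtain ⟨b, e, hbe, hbeq⟩ := Finset.card_eq_two.1 hR2
    obtain ⟨f, d, hfd, hfdq⟩ := Finset.card_eq_two.1 hB2
    have hb : i ≠ b ∧ r i b = R := by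
      have : b ∈ Rn i := by rw [hbeq]; simp
      exact (Finset.mem_filter.1 this).2
    have he : i ≠ e ∧ r i e = R := by
      have : e ∈ Rn i := by rw [hbeq]; simp
      exact (Finset.mem_filter.1 this).2
    have hf : i ≠ f ∧ ¬ r i f = R := by
      have : f ∈ Bn i := by rw [hfdq]; simp
      exact (Finset.mem_filter.1 this).2
    have hd : i ≠ d ∧ ¬ r i d = R := by
      have : d ∈ Bn i := by rw [hfdq]; simp
      exact (Finset.mem_filter.1 this).2
    have hfB := (hRB _ _ hf.1).resolve_left hf.2
    have hdB := (hRB _ _ hd.1).resolve_left hd.2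
    have hRneB : R ≠ B := fun h => hf.2 (hfB.trans h.symm)
    have hbf : b ≠ f := by rintro rfl; exact hf.2 hb.2
    have hbd : b ≠ d := by rintro rfl; exact hd.2 hb.2
    have hef : e ≠ f := by rintro rfl; exact hf.2 he.2
    have hed : e ≠ d := by rintro rfl; exact hd.2 he.2
    have hall : ∀ l, l = i ∨ l = b ∨ l = e ∨ l = f ∨ l = d := by
      intro l
      by_cases h1 : i = l
      · exact Or.inl h1.symm
      by_cases h2 : r i l = R
      · have : l ∈ Rn i := Finset.mem_filter.2 ⟨Finset.mem_univ _, h1, h2⟩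
        rw [hbeq] at this
        simp at this
        tauto
      · have : l ∈ Bn i := Finset.mem_filter.2 ⟨Finset.mem_univ _, h1, h2⟩
        rw [hfdq] at this
        simp at this
        tauto
    have hsm : (U.erase w).card = a i + a b + a e + a f + a d := by
      have := hsplit a i
      rw [hbeq, hfdq, Finset.sum_pair hbe, Finset.sum_pair hfd] at this
      omega
    have main : ∀ f d, i ≠ f → i ≠ d → r i f = B → r i d = B → f ≠ d → b ≠ f → b ≠ d → e ≠ f → e ≠ d →
        (∀ l, l = i ∨ l = b ∨ l = f ∨ l = d ∨ l = e) →
        (U.erase w).card = a i + a b + a e + a f + a d → r b e = B → r b f = R → r b d = B → False := by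
      intro f d hif hid rif rid hfd hbf hbd hef hed hall hsm rbe rbf rbd
      have rfd : r f d = R := by
        refine (hRB f d hfd).resolve_right fun h => ?_
        exact htrip d i b f hid.symm hbd.symm hfd.symm hb.1 hif hbf
          (by rw [hrs d i, hrs d b, rid, rbd]) (by rw [hrs d i, hrs d f, rid, h])
      have rde : r d e = R := by
        refine (hRB d e hed.symm).resolve_right fun h => ?_
        exact htrip d i b e hid.symm hbd.symm hed.symm hb.1 he.1 hbe
          (by rw [hrs d i, hrs d b, rid, rbd]) (by rw [hrs d i, rid, h])
      have rfe : r f e = B := by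
        refine (hRB f e hef.symm).resolve_left fun h => ?_
        exact htrip e i d f he.1.symm hed hef hid hif hfd.symm
          (by rw [hrs e i, hrs e d, he.2, rde]) (by rw [hrs e i, hrs e f, he.2, h])
      have p1 := hpair d i b hid.symm hbd.symm hb.1 (by rw [hrs d i, hrs d b, rid, rbd])
      have p2 := hpair b i f hb.1.symm hbf hif (by rw [hrs b i, hb.2, rbf])
      have p3 := hpair e i d he.1.symm hed hid (by rw [hrs e i, hrs e d, he.2, rde])
      have p4 := hpair f i e hif.symm hef.symm he.1 (by rw [hrs f i, rif, rfe])
      have i1 := hi b (Finset.mem_univ _)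
      have i2 := hi e (Finset.mem_univ _)
      have i3 := hi f (Finset.mem_univ _)
      have i4 := hi d (Finset.mem_univ _)
      obtain ⟨q1, q2, q3, q4, q5⟩ := sizes_aux hm hcV hsm p1 p2 p3 p4 i1 i2 i3 i4
      refine c5_final G c hs hT U w hwU m hm hcomp hdeg hw hcV p r hrs hcr R B hRneB i b f d e hall
        hb.1 hif hid he.1 hbf hbd hbe hfd hef.symm hed.symm hb.2 rbf rfd rde he.2 rif rid rbd rbe rfe
        P hPm ?_ ?_ ?_ ?_ ?_
      · rw [hac]; exact q1
      · rw [hac]; exact q2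
      · rw [hac]; exact q3
      · rw [hac]; exact q4
      · rw [hac]; exact q5
    have rbe : r b e = B := by
      refine (hRB b e hbe).resolve_left fun h => ?_
      have h1 : r b f = B := (hRB b f hbf).resolve_left fun h' =>
        htrip b i e f hb.1.symm hbe hbf he.1 hf.1 hef (by rw [hrs b i, hb.2, h]) (by rw [hrs b i, hb.2, h'])
      have h2 : r e f = B := (hRB e f hef).resolve_left fun h' =>
        htrip e i b f he.1.symm hbe.symm hef hb.1 hf.1 hbf (by rw [hrs e i, he.2, hrs e b, h]) (by rw [hrs e i, he.2, h'])
      exact htrip f i b e hf.1.symm hbf.symm hef.symm hb.1 he.1 hbe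
        (by rw [hrs f i, hfB, hrs f b, h1]) (by rw [hrs f i, hfB, hrs f e, h2])
    rcases hRB b f hbf with h1 | h1
    · refine main f d hf.1 hd.1 hfB hdB hfd hbf hbd hef hed (fun l => by have := hall l; tauto) hsm rbe h1 ?_
      exact (hRB b d hbd).resolve_left fun h' =>
        htrip b i f d hb.1.symm hbf hbd hf.1 hd.1 hfd (by rw [hrs b i, hb.2, h1]) (by rw [hrs b i, hb.2, h'])
    · refine main d f hd.1 hf.1 hdB hfB hfd.symm hbd hbf hed hef (fun l => by have := hall l; tauto) (by omega) rbe ?_ h1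
      exact (hRB b d hbd).resolve_right fun hbd2 =>
        htrip b e f d hbe hbf hbd hef hed hfd (by rw [rbe, h1]) (by rw [rbe, hbd2])


/-- no monochromatic subdivided star, in unfolded form -/
def FreeC {α κ : Type*} (G : SimpleGraph α) (c : α → α → κ) (n : ℕ) : Prop :=
  ∀ (e : κ) (x s z : α) (T : Finset α), T.card = n - 1 → x ∉ T → s ∉ T → z ∉ T →
    x ≠ z → (∀ t ∈ T, G.Adj x t ∧ c x t = e) → G.Adj x s → c x s = e →
    G.Adj s z → c s z = e → False

lemma mem_nb {α κ : Type*} {G : SimpleGraph α} {c : α → α → κ} {U : Finset α} {e : κ} {x y : α} :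
    y ∈ nb G c U e x ↔ y ∈ U ∧ G.Adj x y ∧ c x y = e := by
  unfold nb; simp

open Classical in
lemma free_leaf {α κ : Type*} {G : SimpleGraph α} {c : α → α → κ} {n : ℕ} (hF : FreeC G c n)
    {U : Finset α} {e : κ} {x s z : α} (hsx : s ∈ nb G c U e x) (hzx : z ≠ x)
    (hsz : G.Adj s z) (hc : c s z = e) : (((nb G c U e x).erase s).erase z).card < n - 1 := by
  by_contra hlt
  push Not at hlt
  obtain ⟨T, hT, hTc⟩ := Finset.exists_subset_card_eq hlt
  rw [mem_nb] at hsx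
  have hT' : ∀ t ∈ T, t ≠ z ∧ t ≠ s ∧ t ∈ nb G c U e x := by
    intro t ht
    have := hT ht
    simp only [Finset.mem_erase] at this
    exact this
  refine hF e x s z T hTc ?_ ?_ ?_ hzx.symm ?_ hsx.2.1 hsx.2.2 hsz hc
  · intro h; exact (mem_nb.1 (hT' x h).2.2).2.1.ne rfl
  · intro h; exact (hT' s h).2.1 rfl
  · intro h; exact (hT' z h).1 rfl
  · intro t ht; exact (mem_nb.1 (hT' t ht).2.2).2

open Classical in
lemma free_L1 {α κ : Type*} {G : SimpleGraph α} {c : α → α → κ} {n : ℕ} (hF : FreeC G c n)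
    {U : Finset α} {e : κ} {x s z : α} (hbig : n ≤ (nb G c U e x).card)
    (hsx : s ∈ nb G c U e x) (hzx : z ≠ x)
    (hsz : G.Adj s z) (hc : c s z = e) : z ∈ nb G c U e x := by
  by_contra hz
  have := free_leaf hF hsx hzx hsz hc
  rw [Finset.erase_eq_of_notMem (fun h => hz (Finset.mem_of_mem_erase h)),
    Finset.card_erase_of_mem hsx] at this
  omega

open Classical in
lemma free_L2 {α κ : Type*} {G : SimpleGraph α} {c : α → α → κ} {n : ℕ} (hF : FreeC G c n)
    {U : Finset α} {e : κ} {x s z : α} (hbig : n + 1 ≤ (nb G c U e x).card)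
    (hsx : s ∈ nb G c U e x) (hzx : z ≠ x)
    (hsz : G.Adj s z) (hc : c s z = e) : False := by
  have := free_leaf hF hsx hzx hsz hc
  have h1 := Finset.pred_card_le_card_erase (s := (nb G c U e x).erase s) (a := z)
  rw [Finset.card_erase_of_mem hsx] at h1
  omega

open Classical in
lemma deg_bound {α κ : Type*} {G : SimpleGraph α} {c : α → α → κ} {U W : Finset α} {v : α} {D : ℕ}
    (hW : W ⊆ U) (K : Finset κ) (hadj : ∀ y ∈ W, G.Adj v y) (hK : ∀ y ∈ W, c v y ∈ K)
    (hdeg : ∀ e, (nb G c U e v).card ≤ D) : W.card ≤ K.card * D := by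
  rw [Finset.card_eq_sum_card_fiberwise (f := fun y => c v y) (t := K) (fun y hy => hK y hy)]
  have := Finset.sum_le_card_nsmul K (fun b => (W.filter (fun y => c v y = b)).card) D (by
    intro e _
    refine le_trans (Finset.card_le_card ?_) (hdeg e)
    intro y hy
    rw [Finset.mem_filter] at hy
    exact mem_nb.2 ⟨hW hy.1, hadj y hy.1, hy.2⟩)
  simpa using this

open Classical in
theorem upper_main {α κ : Type*} (G : SimpleGraph α) (c : α → α → κ)
    (hs : ∀ x y, c x y = c y x) (hT : TriOK G c) (w : α) (m : ℕ) (hm : 6 ≤ m)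
    (hF : FreeC G c (2 * m)) (K : Finset κ) : ∀ (U : Finset α), w ∈ U →
    (∀ x ∈ U, ∀ y ∈ U, x ≠ w → y ≠ w → x ≠ y → G.Adj x y) →
    ((U.erase w).filter (fun y => ¬ G.Adj w y)).card ≤ m - 2 →
    5 * m + K.card ≤ U.card + 6 →
    (∀ x ∈ U, ∀ y ∈ U, G.Adj x y → c x y ∈ K) → False := by
  induction K using Finset.strongInduction with
  | H K ih =>
  intro U hwU hcomp hw hcard hK
  by_cases hbig : ∃ u ∈ U, u ≠ w ∧ ∃ i, 2 * m ≤ (nb G c U i u).card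
  · obtain ⟨u, huU, huw, i, hui⟩ := hbig
    set S := insert u (nb G c U i u) with hS
    have hunb : u ∉ nb G c U i u := fun h => (mem_nb.1 h).2.1.ne rfl
    have hScard : S.card = (nb G c U i u).card + 1 := Finset.card_insert_of_notMem hunb
    have hSU : S ⊆ U := by
      intro s h
      rcases Finset.mem_insert.1 h with rfl | h
      · exact huU
      · exact (mem_nb.1 h).1
    have noleave : ∀ s ∈ S, ∀ z ∈ U, z ∉ S → G.Adj s z → c s z ≠ i := by
      intro s hsS z hz hzS hadj hc
      rcases Finset.mem_insert.1 hsS with rfl | h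
      · exact hzS (Finset.mem_insert_of_mem (mem_nb.2 ⟨hz, hadj, hc⟩))
      · exact hzS (Finset.mem_insert_of_mem (free_L1 hF hui h
          (fun h' => hzS (h' ▸ Finset.mem_insert_self _ _)) hadj hc))
    have hOu : ∀ x ∈ U, x ∉ S → x ≠ w → G.Adj x u ∧ c x u ≠ i := by
      intro x hx hxS hxw
      have hne : x ≠ u := fun h => hxS (h ▸ Finset.mem_insert_self _ _)
      have hadj := hcomp x hx u huU hxw huw hne
      refine ⟨hadj, ?_⟩
      rw [hs]
      exact noleave u (Finset.mem_insert_self _ _) x hx hxS hadj.symm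
    have hOs : ∀ x ∈ U, x ∉ S → x ≠ w → ∀ s ∈ S, G.Adj x s → c x s = c x u := by
      intro x hx hxS hxw s hsS hadj
      obtain ⟨h1, h2⟩ := hOu x hx hxS hxw
      rcases Finset.mem_insert.1 hsS with rfl | h
      · rfl
      · have h3 := mem_nb.1 h
        have h4 := noleave s hsS x hx hxS hadj.symm
        rw [hs] at h4
        rcases hT x u s h1 h3.2.1 hadj with h | h | h
        · exact absurd (h.trans h3.2.2) h2
        · exact absurd (h.symm.trans h3.2.2) h4
        · exact h.symm
    have hOsub : ∀ x ∈ U, x ∉ S → x ≠ w → S.erase w ⊆ nb G c U (c x u) x := by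
      intro x hx hxS hxw s hs'
      obtain ⟨h1, h2⟩ := Finset.mem_erase.1 hs'
      have hadj := hcomp x hx s (hSU h2) hxw h1 (fun h => hxS (h ▸ h2))
      exact mem_nb.2 ⟨hSU h2, hadj, hOs x hx hxS hxw s h2 hadj⟩
    have hSe : 2 * m ≤ (S.erase w).card := by
      have := Finset.pred_card_le_card_erase (s := S) (a := w)
      omega
    have hObig : ∀ x ∈ U, x ∉ S → x ≠ w → 2 * m ≤ (nb G c U (c x u) x).card :=
      fun x hx hxS hxw => hSe.trans (Finset.card_le_card (hOsub x hx hxS hxw))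
    have hinj : ∀ x ∈ U, x ∉ S → x ≠ w → ∀ y ∈ U, y ∉ S → y ≠ w → c x u = c y u → x = y := by
      intro x hx hxS hxw y hy hyS hyw he
      by_contra hne
      have hux : u ∈ nb G c U (c x u) x := mem_nb.2 ⟨huU, (hOu x hx hxS hxw).1, rfl⟩
      have huy := (hOu y hy hyS hyw).1.symm
      have hcuy : c u y = c x u := by rw [hs u y, he]
      have hyn := free_L1 hF (hObig x hx hxS hxw) hux (Ne.symm hne) huy hcuy
      refine free_L2 hF ?_ hux (Ne.symm hne) huy hcuy
      have hsub : insert y (S.erase w) ⊆ nb G c U (c x u) x := by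
        intro t ht
        rcases Finset.mem_insert.1 ht with rfl | h
        · exact hyn
        · exact hOsub x hx hxS hxw h
      have h5 := Finset.card_le_card hsub
      rw [Finset.card_insert_of_notMem (fun h => hyS (Finset.mem_of_mem_erase h))] at h5
      omega
    have hOcard : ((U.erase w) \ S).card ≤ K.card := by
      apply Finset.card_le_card_of_injOn (fun x => c x u)
      · intro x hx
        have hx := Finset.mem_coe.1 hx
        rw [Finset.mem_sdiff, Finset.mem_erase] at hx
        exact hK x hx.1.2 u huU (hOu x hx.1.2 hx.2 hx.1.1).1
      · intro x hx y hy h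
        have hx := Finset.mem_coe.1 hx
        have hy := Finset.mem_coe.1 hy
        rw [Finset.mem_sdiff, Finset.mem_erase] at hx hy
        exact hinj x hx.1.2 hx.2 hx.1.1 y hy.1.2 hy.2 hy.1.1 h
    have hU1 : (U.erase w).card = U.card - 1 := Finset.card_erase_of_mem hwU
    have hbig1 : 2 * m + 1 ≤ (nb G c U i u).card := by
      have := Finset.le_card_sdiff S (U.erase w)
      omega
    have hiK : i ∈ K := by
      obtain ⟨y, hy⟩ : (nb G c U i u).Nonempty := Finset.card_pos.1 (by omega)
      have := mem_nb.1 hy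
      rw [← this.2.2]
      exact hK u huU y this.1 this.2.1
    have hout : ∀ y ∈ U, y ∉ S → y ≠ w → ∀ z ∈ U, z ∉ S → G.Adj y z → c y z ≠ i := by
      intro y hy hyS hyw z hz hzS hyz hc
      obtain ⟨s, hsS, hsw, hsz⟩ : ∃ s ∈ S, s ≠ w ∧ G.Adj s z := by
        by_cases hzw : z = w
        · subst hzw
          by_contra hno
          push Not at hno
          have : nb G c U i u ⊆ (U.erase z).filter (fun y => ¬ G.Adj z y) := by
            intro t ht
            have htS : t ∈ S := Finset.mem_insert_of_mem ht
            have htz : t ≠ z := fun h => hzS (h ▸ htS)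
            rw [Finset.mem_filter, Finset.mem_erase]
            exact ⟨⟨htz, hSU htS⟩, fun h => hno t htS htz h.symm⟩
          have := Finset.card_le_card this
          omega
        · exact ⟨u, Finset.mem_insert_self _ _, huw, (hOu z hz hzS hzw).1.symm⟩
      have h1 := noleave s hsS z hz hzS hsz
      have hsn := hOsub y hy hyS hyw (Finset.mem_erase.2 ⟨hsw, hsS⟩)
      obtain ⟨-, hys, hcys⟩ := mem_nb.1 hsn
      have hj := (hOu y hy hyS hyw).2
      have hcsz : c s z = c y u := by
        rcases hT y s z hys hsz hyz with h | h | h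
        · rw [← h, hcys]
        · exact absurd (h.trans hc) h1
        · exact absurd ((hcys.symm.trans h).trans hc) hj
      have := free_L1 hF (hObig y hy hyS hyw) hsn hyz.ne' hsz hcsz
      exact hj ((mem_nb.1 this).2.2.symm.trans hc)
    refine ih (K.erase i) (Finset.erase_ssubset hiK) (U.erase u) (Finset.mem_erase.2 ⟨huw.symm, hwU⟩) ?_ ?_ ?_ ?_
    · intro x hx y hy
      exact hcomp x (Finset.mem_of_mem_erase hx) y (Finset.mem_of_mem_erase hy)
    · refine le_trans (Finset.card_le_card ?_) hw
      apply Finset.filter_subset_filter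
      exact Finset.erase_subset_erase _ (Finset.erase_subset _ _)
    · rw [Finset.card_erase_of_mem hiK, Finset.card_erase_of_mem huU]
      have := Finset.card_pos.2 ⟨i, hiK⟩
      omega
    · intro x hx y hy hxy
      rw [Finset.mem_erase] at hx hy ⊢
      refine ⟨fun hc => ?_, hK x hx.2 y hy.2 hxy⟩
      by_cases hxS : x ∈ S
      · have := (Finset.mem_insert.1 hxS).resolve_left hx.1
        exact free_L2 hF hbig1 this hy.1 hxy hc
      by_cases hyS : y ∈ S
      · have := (Finset.mem_insert.1 hyS).resolve_left hy.1
        exact free_L2 hF hbig1 this hx.1 hxy.symm (by rw [hs, hc])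
      by_cases hxw : x = w
      · have hyw : y ≠ w := fun h => hxy.ne (hxw.trans h.symm)
        exact hout y hy.2 hyS hyw x hx.2 hxS hxy.symm (by rw [hs, hc])
      · exact hout x hx.2 hxS hxw y hy.2 hyS hxy hc
  · push Not at hbig
    have hsmall : ∀ u ∈ U, u ≠ w → ∀ i, (nb G c U i u).card ≤ 2 * m - 1 := by
      intro u hu huw i
      have := hbig u hu huw i
      omega
    have hU1 : (U.erase w).card = U.card - 1 := Finset.card_erase_of_mem hwU
    have hWc : ∀ v ∈ U, v ≠ w → ((U.erase w).erase v).card = U.card - 2 := by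
      intro v hv hvw
      rw [Finset.card_erase_of_mem (Finset.mem_erase.2 ⟨hvw, hv⟩)]
      omega
    have hWa : ∀ v ∈ U, v ≠ w → ∀ y ∈ (U.erase w).erase v, G.Adj v y := by
      intro v hv hvw y hy
      simp only [Finset.mem_erase] at hy
      exact hcomp v hv y hy.2.2 hvw hy.2.1 (Ne.symm hy.1)
    have hWs : ∀ v, (U.erase w).erase v ⊆ U := fun v =>
      (Finset.erase_subset _ _).trans (Finset.erase_subset _ _)
    by_cases hwbig : ∃ i, 2 * m ≤ (nb G c U i w).card
    · obtain ⟨i, hi⟩ := hwbig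
      have hout : U \ (insert w (nb G c U i w)) ⊆ (U.erase w).filter (fun y => ¬ G.Adj w y) := by
        intro x hx
        rw [Finset.mem_sdiff, Finset.mem_insert] at hx
        push Not at hx
        obtain ⟨hxU, hxw, hxn⟩ := hx
        rw [Finset.mem_filter, Finset.mem_erase]
        refine ⟨⟨hxw, hxU⟩, fun hwx => ?_⟩
        have hci : c w x ≠ i := fun h => hxn (mem_nb.2 ⟨hxU, hwx, h⟩)
        have hsub : nb G c U i w ⊆ nb G c U (c w x) x := by
          intro l hl
          obtain ⟨hlU, hwl, hcl⟩ := mem_nb.1 hl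
          have hxl := hcomp x hxU l hlU hxw hwl.ne' (fun h => hxn (h ▸ hl))
          refine mem_nb.2 ⟨hlU, hxl, ?_⟩
          rcases hT w x l hwx hxl hwl with h | h | h
          · exact h.symm
          · exact absurd (free_L1 hF hi hl hxw hxl.symm (by rw [hs, h, hcl])) hxn
          · exact absurd (h.trans hcl) hci
        have := Finset.card_le_card hsub
        have := hsmall x hxU hxw (c w x)
        omega
      have hbig1 : 2 * m + 1 ≤ (nb G c U i w).card := by
        have h1 := Finset.card_le_card hout
        have h2 := Finset.le_card_sdiff (insert w (nb G c U i w)) U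
        have h3 := Finset.card_insert_le w (nb G c U i w)
        omega
      obtain ⟨v, hv⟩ : (nb G c U i w).Nonempty := Finset.card_pos.1 (by omega)
      obtain ⟨hvU, hwv, hcv⟩ := mem_nb.1 hv
      have hiK : i ∈ K := by rw [← hcv]; exact hK w hwU v hvU hwv
      have hb := deg_bound (G := G) (c := c) (v := v) (D := 2 * m - 1) (hWs v) (K.erase i)
        (hWa v hvU hwv.ne')
        (by
          intro y hy
          have hvy := hWa v hvU hwv.ne' y hy
          simp only [Finset.mem_erase] at hy
          rw [Finset.mem_erase]
          exact ⟨fun h => free_L2 hF hbig1 hv hy.2.1 hvy h, hK v hvU y hy.2.2 hvy⟩)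
        (fun e => hsmall v hvU hwv.ne' e)
      rw [hWc v hvU hwv.ne', Finset.card_erase_of_mem hiK] at hb
      by_cases hK4 : K.card ≤ 3
      · have h1 : (K.card - 1) * (2 * m - 1) ≤ 2 * (2 * m - 1) := Nat.mul_le_mul_right _ (by omega)
        have h2 := Finset.card_pos.2 ⟨i, hiK⟩
        omega
      · refine no_small_degrees G c hs hT (U.erase w) v (Finset.mem_erase.2 ⟨hwv.ne', hvU⟩) m hm ?_ ?_ ?_ ?_
        · intro x hx y hy _ _ hxy
          rw [Finset.mem_erase] at hx hy
          exact hcomp x hx.2 y hy.2 hx.1 hy.1 hxy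
        · intro x hx e
          rw [Finset.mem_erase] at hx
          refine le_trans (Finset.card_le_card ?_) (hsmall x hx.2 hx.1 e)
          intro y hy
          rw [mem_nb] at hy ⊢
          exact ⟨Finset.mem_of_mem_erase hy.1, hy.2⟩
        · rw [Finset.filter_false_of_mem]
          · simp
          · intro y hy
            rw [not_not]
            exact hWa v hvU hwv.ne' y hy
        · omega
    · push Not at hwbig
      by_cases hK3 : K.card ≤ 2
      · obtain ⟨v, hv⟩ : (U.erase w).Nonempty := Finset.card_pos.1 (by omega)
        obtain ⟨hvw, hvU⟩ := Finset.mem_erase.1 hv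
        have hb := deg_bound (G := G) (c := c) (v := v) (D := 2 * m - 1) (hWs v) K
          (hWa v hvU hvw)
          (fun y hy => hK v hvU y (hWs v hy) (hWa v hvU hvw y hy))
          (fun e => hsmall v hvU hvw e)
        rw [hWc v hvU hvw] at hb
        have h1 : K.card * (2 * m - 1) ≤ 2 * (2 * m - 1) := Nat.mul_le_mul_right _ (by omega)
        by_cases hK0 : K.card = 0
        · rw [hK0] at hb
          omega
        · omega
      · refine no_small_degrees G c hs hT U w hwU m hm hcomp ?_ hw (by omega)
        intro x hx e
        by_cases hxw : x = w
        · subst hxw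
          have := hwbig e
          omega
        · exact hsmall x hx hxw e


/-- class label of a vertex code -/
def labN (K m x : ℕ) : ℕ :=
  if x < K + m then 0 else if x < K + (2 * m - 1) then 1 else if x < K + (3 * m - 2) then 2
  else if x < K + (4 * m - 3) then 3 else if x < K + (5 * m - 4) then 4 else 1

/-- color between two labels -/
def labC (a b : ℕ) : ℕ :=
  if a = b then 2 else if (a + 1) % 5 = b ∨ (b + 1) % 5 = a then 0 else 1

/-- the extremal coloring on vertex codes -/
def colN (K m x y : ℕ) : ℕ :=
  if x < K ∨ y < K then 3 + min x y else labC (labN K m x) (labN K m y)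

lemma labC_symm (a b : ℕ) : labC a b = labC b a := by
  unfold labC
  split_ifs <;> first | rfl | omega

lemma labC_lt (a b : ℕ) : labC a b < 3 := by
  unfold labC
  split_ifs <;> omega

lemma labN_lt (K m x : ℕ) : labN K m x < 5 := by
  unfold labN
  split_ifs <;> omega

lemma colN_symm (K m x y : ℕ) : colN K m x y = colN K m y x := by
  unfold colN
  rw [labC_symm, min_comm]
  simp only [or_comm]

lemma colN_lt (K m x y : ℕ) : colN K m x y < K + 3 := by
  unfold colN
  have := labC_lt (labN K m x) (labN K m y)
  split_ifs with h
  · rcases h with h | h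
    · have := min_le_left x y; omega
    · have := min_le_right x y; omega
  · omega

lemma labC_tri (a b d : ℕ) : labC a b = labC b d ∨ labC b d = labC a d ∨ labC a b = labC a d := by
  by_cases h1 : a = b
  · subst h1; tauto
  by_cases h2 : b = d
  · subst h2; tauto
  by_cases h3 : a = d
  · subst h3; rw [labC_symm b a]; tauto
  unfold labC
  rw [if_neg h1, if_neg h2, if_neg h3]
  split_ifs <;> omega

lemma colN_tri (K m x y z : ℕ) : colN K m x y = colN K m y z ∨ colN K m y z = colN K m x z ∨
    colN K m x y = colN K m x z := by
  by_cases h : x < K ∨ y < K ∨ z < K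
  · rcases le_total x y with h1 | h1 <;> rcases le_total y z with h2 | h2 <;>
      rcases le_total x z with h3 | h3 <;> unfold colN <;>
      simp only [min_eq_left, min_eq_right, h1, h2, h3] <;> split_ifs <;> omega
  · push Not at h
    unfold colN
    rw [if_neg (by omega), if_neg (by omega), if_neg (by omega)]
    exact labC_tri _ _ _

/-- the codes with a given label -/
def clsN (K m l : ℕ) : Finset ℕ :=
  (Finset.Icc K (K + (5 * m - 4))).filter (fun x => labN K m x = l)

lemma mem_clsN {K m l x : ℕ} : x ∈ clsN K m l ↔ (K ≤ x ∧ x ≤ K + (5 * m - 4)) ∧ labN K m x = l := by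
  unfold clsN
  rw [Finset.mem_filter, Finset.mem_Icc]

lemma clsN_card (K m l : ℕ) (hm : 6 ≤ m) :
    (clsN K m l).card ≤ m ∧ (2 ≤ l → (clsN K m l).card ≤ m - 1) := by
  have h : ∀ a b, clsN K m l ⊆ Finset.Ico a b → (clsN K m l).card ≤ b - a := by
    intro a b h
    have := Finset.card_le_card h
    simpa using this
  have hl : l = 0 ∨ l = 1 ∨ l = 2 ∨ l = 3 ∨ l = 4 ∨ 5 ≤ l := by omega
  rcases hl with rfl | rfl | rfl | rfl | rfl | hl
  · have := h K (K + m) (by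
      intro x hx
      obtain ⟨hx0, hx⟩ := mem_clsN.1 hx
      unfold labN at hx
      rw [Finset.mem_Ico]
      split_ifs at hx <;> omega)
    omega
  · have h1 : clsN K m 1 ⊆ insert (K + (5 * m - 4)) (Finset.Ico (K + m) (K + (2 * m - 1))) := by
      intro x hx
      obtain ⟨hx0, hx⟩ := mem_clsN.1 hx
      unfold labN at hx
      rw [Finset.mem_insert, Finset.mem_Ico]
      split_ifs at hx <;> omega
    have h2 := Finset.card_le_card h1
    have h3 := Finset.card_insert_le (K + (5 * m - 4)) (Finset.Ico (K + m) (K + (2 * m - 1)))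
    rw [Nat.card_Ico] at h3
    omega
  · have := h (K + (2 * m - 1)) (K + (3 * m - 2)) (by
      intro x hx
      obtain ⟨hx0, hx⟩ := mem_clsN.1 hx
      unfold labN at hx
      rw [Finset.mem_Ico]
      split_ifs at hx <;> omega)
    omega
  · have := h (K + (3 * m - 2)) (K + (4 * m - 3)) (by
      intro x hx
      obtain ⟨hx0, hx⟩ := mem_clsN.1 hx
      unfold labN at hx
      rw [Finset.mem_Ico]
      split_ifs at hx <;> omega)
    omega
  · have := h (K + (4 * m - 3)) (K + (5 * m - 4)) (by
      intro x hx
      obtain ⟨hx0, hx⟩ := mem_clsN.1 hx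
      unfold labN at hx
      rw [Finset.mem_Ico]
      split_ifs at hx <;> omega)
    omega
  · have := h 0 0 (by
      intro x hx
      rw [mem_clsN] at hx
      have := labN_lt K m x
      omega)
    omega

lemma clsN_one_erase (K m : ℕ) (hm : 6 ≤ m) :
    ((clsN K m 1).erase (K + (5 * m - 4))).card ≤ m - 1 := by
  have h1 : (clsN K m 1).erase (K + (5 * m - 4)) ⊆ Finset.Ico (K + m) (K + (2 * m - 1)) := by
    intro x hx
    rw [Finset.mem_erase, mem_clsN] at hx
    unfold labN at hx
    rw [Finset.mem_Ico]
    obtain ⟨h0, h1, h2⟩ := hx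
    split_ifs at h2 <;> omega
  have h2 := Finset.card_le_card h1
  rw [Nat.card_Ico] at h2
  omega

/-- degree bound in the extremal coloring, for colors below three -/
lemma low_deg (K m : ℕ) (hm : 6 ≤ m) (i x : ℕ) (hi : i < 3) (T : Finset ℕ)
    (hT : ∀ y ∈ T, y ≤ K + (5 * m - 4) ∧ colN K m x y = i ∧
      ¬ (y = K + (5 * m - 4) ∧ labN K m x = 3)) : T.card ≤ 2 * m - 1 := by
  have h0 : ∀ y ∈ T, K ≤ y ∧ y ≤ K + (5 * m - 4) ∧ labC (labN K m x) (labN K m y) = i := by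
    intro y hy
    obtain ⟨h1, h2, -⟩ := hT y hy
    unfold colN at h2
    split_ifs at h2 with h
    · omega
    · exact ⟨by omega, h1, h2⟩
  have hx := labN_lt K m x
  have two : ∀ a b, a ≠ b → 1 ≤ a → 1 ≤ b →
      (∀ y, y < 5 → labC (labN K m x) y = i → y = a ∨ y = b) → T.card ≤ 2 * m - 1 := by
    intro a b hab ha hb h
    have hsub : T ⊆ clsN K m a ∪ clsN K m b := by
      intro y hy
      obtain ⟨h1, h2, h3⟩ := h0 y hy
      have := h _ (labN_lt K m y) h3
      simp only [clsN, Finset.mem_union, Finset.mem_filter, Finset.mem_Icc]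
      tauto
    have h1 := Finset.card_le_card hsub
    have h2 := Finset.card_union_le (clsN K m a) (clsN K m b)
    have h3 := clsN_card K m a hm
    have h4 := clsN_card K m b hm
    have h5 : 2 ≤ a ∨ 2 ≤ b := by omega
    rcases h5 with h5 | h5
    · have := h3.2 h5; omega
    · have := h4.2 h5; omega
  have two0 : ∀ b, 2 ≤ b →
      (∀ y, y < 5 → labC (labN K m x) y = i → y = 0 ∨ y = b) → T.card ≤ 2 * m - 1 := by
    intro b hb h
    have hsub : T ⊆ clsN K m 0 ∪ clsN K m b := by
      intro y hy
      obtain ⟨h1, h2, h3⟩ := h0 y hy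
      have := h _ (labN_lt K m y) h3
      simp only [clsN, Finset.mem_union, Finset.mem_filter, Finset.mem_Icc]
      tauto
    have h1 := Finset.card_le_card hsub
    have h2 := Finset.card_union_le (clsN K m 0) (clsN K m b)
    have h3 := clsN_card K m 0 hm
    have h4 := clsN_card K m b hm
    have := h4.2 hb
    omega
  have three : labN K m x = 3 → i = 1 → T.card ≤ 2 * m - 1 := by
    intro hx3 hi1
    have hsub : T ⊆ clsN K m 0 ∪ (clsN K m 1).erase (K + (5 * m - 4)) := by
      intro y hy
      obtain ⟨h1, h2, h3⟩ := h0 y hy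
      have h4 := (hT y hy).2.2
      have h5 : labN K m y = 0 ∨ labN K m y = 1 := by
        have h6 := labN_lt K m y
        rw [hx3, hi1] at h3
        revert h6 h3
        generalize labN K m y = l
        intro h3 h6
        interval_cases l <;> revert h3 <;> decide
      simp only [clsN, Finset.mem_union, Finset.mem_filter, Finset.mem_Icc, Finset.mem_erase]
      tauto
    have h1 := Finset.card_le_card hsub
    have h2 := Finset.card_union_le (clsN K m 0) ((clsN K m 1).erase (K + (5 * m - 4)))
    have h3 := clsN_card K m 0 hm
    have h4 := clsN_one_erase K m hm
    omega
  have same : i = 2 → T.card ≤ 2 * m - 1 := by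
    intro hi2
    have hsub : T ⊆ clsN K m (labN K m x) := by
      intro y hy
      obtain ⟨h1, h2, h3⟩ := h0 y hy
      have h5 : labN K m y = labN K m x := by
        rw [hi2] at h3
        unfold labC at h3
        split_ifs at h3 <;> omega
      simp only [clsN, Finset.mem_filter, Finset.mem_Icc]
      tauto
    have h1 := Finset.card_le_card hsub
    have h3 := clsN_card K m (labN K m x) hm
    omega
  clear hT h0
  generalize labN K m x = l at *
  interval_cases i
  · interval_cases l
    · exact two 1 4 (by omega) (by omega) (by omega) (by decide)
    · exact two0 2 (by omega) (by decide)
    · exact two 1 3 (by omega) (by omega) (by omega) (by decide)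
    · exact two 2 4 (by omega) (by omega) (by omega) (by decide)
    · exact two0 3 (by omega) (by decide)
  · interval_cases l
    · exact two 2 3 (by omega) (by omega) (by omega) (by decide)
    · exact two 3 4 (by omega) (by omega) (by omega) (by decide)
    · exact two0 4 (by omega) (by decide)
    · exact three rfl rfl
    · exact two 1 2 (by omega) (by omega) (by omega) (by decide)
  · exact same rfl

/-- vertex codes -/
def codeN (M : ℕ) : Option (Fin M) → ℕ
  | none => M
  | some j => j.val

lemma codeN_inj (M : ℕ) : Function.Injective (codeN M) := by
  intro x y h
  rcases x with _ | x <;> rcases y with _ | y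
  · rfl
  · simp only [codeN] at h; omega
  · simp only [codeN] at h; omega
  · simp only [codeN] at h; exact congrArg some (Fin.ext h)

lemma codeN_le (M : ℕ) (x : Option (Fin M)) : codeN M x ≤ M := by
  rcases x with _ | x
  · exact le_rfl
  · exact x.isLt.le

/-- the neighborhood of the extra vertex in the extremal example -/
def lowA (K m M : ℕ) : Finset (Fin M) := Finset.univ.filter (fun j => labN K m j.val ≠ 3)

lemma lowA_card (K m M : ℕ) (hm : 6 ≤ m) (hM : M = K + (5 * m - 4)) :
    4 * m + K - 3 ≤ (lowA K m M).card := by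
  have h1 : (Finset.univ.filter (fun j : Fin M => ¬ labN K m j.val ≠ 3)).card ≤ m - 1 := by
    refine le_trans ?_ ((clsN_card K m 3 hm).2 (by omega))
    refine Finset.card_le_card_of_injOn (fun j => j.val) ?_ (fun a _ b _ h => Fin.ext h)
    intro j hj
    have hj := (Finset.mem_filter.1 hj).2
    push Not at hj
    have h2 := j.isLt
    refine Finset.mem_filter.2 ⟨Finset.mem_Icc.2 ⟨?_, ?_⟩, hj⟩
    · unfold labN at hj
      dsimp only
      split_ifs at hj <;> omega
    · dsimp only; omega
  have h2 := Finset.card_filter_add_card_filter_not (s := (Finset.univ : Finset (Fin M)))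
    (fun j : Fin M => labN K m j.val ≠ 3)
  rw [Finset.card_univ, Fintype.card_fin] at h2
  unfold lowA
  omega

/-- the extremal coloring -/
def lowC (K m M k : ℕ) (hk : k = K + 3) (x y : Option (Fin M)) : Fin k :=
  ⟨colN K m (codeN M x) (codeN M y), hk ▸ colN_lt K m _ _⟩

lemma lowC_symm (K m M k : ℕ) (hk : k = K + 3) (x y : Option (Fin M)) :
    lowC K m M k hk x y = lowC K m M k hk y x := Fin.ext (colN_symm _ _ _ _)

lemma lowC_tri (K m M k : ℕ) (hk : k = K + 3) (G : SimpleGraph (Option (Fin M))) :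
    NoRainbowTriangle G (lowC K m M k hk) := by
  rintro ⟨x, y, z, -, -, -, h1, h2, h3⟩
  rcases colN_tri K m (codeN M x) (codeN M y) (codeN M z) with h | h | h
  · exact h1 (Fin.ext h)
  · exact h2 (Fin.ext h)
  · exact h3 (Fin.ext h)

lemma starPlus_adj0 (n : ℕ) (j : Fin (n + 2)) (h1 : 1 ≤ j.val) (h2 : j.val ≤ n) :
    (starPlusG n).Adj 0 j := by
  unfold starPlusG
  rw [SimpleGraph.fromRel_adj]
  refine ⟨?_, Or.inl (Or.inl ⟨rfl, h2⟩)⟩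
  rintro rfl
  simp at h1

lemma starPlus_adj1 (n : ℕ) (a b : Fin (n + 2)) (h1 : a.val = n) (h2 : b.val = n + 1) :
    (starPlusG n).Adj a b := by
  unfold starPlusG
  rw [SimpleGraph.fromRel_adj]
  refine ⟨?_, Or.inl (Or.inr ⟨h1, h2⟩)⟩
  rintro rfl
  omega

lemma low_free (K m M k : ℕ) (hk : k = K + 3) (hm : 6 ≤ m) (hM : M = K + (5 * m - 4))
    (A : Finset (Fin M)) (hA : A ⊆ lowA K m M) :
    ¬ IsMonoCopy (addVertex M ↑A) (lowC K m M k hk) (starPlusG (2 * m)) := by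
  rintro ⟨f, i, hf, h⟩
  have hg : Function.Injective (fun j => codeN M (f j)) := (codeN_inj M).comp hf
  have hc : ∀ a b, (starPlusG (2 * m)).Adj a b → colN K m (codeN M (f a)) (codeN M (f b)) = i.val := by
    intro a b hab
    have := (h a b hab).2
    rw [← this]
    rfl
  have hadj : ∀ a b, (starPlusG (2 * m)).Adj a b → codeN M (f b) = K + (5 * m - 4) →
      labN K m (codeN M (f a)) ≠ 3 := by
    intro a b hab hb
    have hG := (h a b hab).1
    have hb' : f b = none := codeN_inj M (by rw [hb, ← hM]; rfl)
    rw [hb'] at hG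
    rcases hG with ⟨_, _, _, h2, _⟩ | ⟨j, hj, ⟨h1, _⟩ | ⟨_, h2⟩⟩
    · cases h2
    · rw [h1]
      exact (Finset.mem_filter.1 (hA hj)).2
    · cases h2
  by_cases hi : i.val < 3
  · have h1 := low_deg K m hm i.val (codeN M (f 0)) hi
      ((Finset.univ.filter (fun j : Fin (2 * m + 2) => 1 ≤ j.val ∧ j.val ≤ 2 * m)).image
        (fun j => codeN M (f j))) (by
        intro y hy
        obtain ⟨j, hj, rfl⟩ := Finset.mem_image.1 hy
        have hj := (Finset.mem_filter.1 hj).2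
        have hj' := starPlus_adj0 (2 * m) j hj.1 hj.2
        refine ⟨hM ▸ codeN_le M _, hc 0 j hj', ?_⟩
        rintro ⟨h1, h2⟩
        exact hadj 0 j hj' h1 h2)
    rw [Finset.card_image_of_injective _ hg] at h1
    have h2 : (Finset.Icc 1 (2 * m)).card ≤
        (Finset.univ.filter (fun j : Fin (2 * m + 2) => 1 ≤ j.val ∧ j.val ≤ 2 * m)).card := by
      refine Finset.card_le_card_of_surjOn (fun j => j.val) ?_
      intro x hx
      have hx := Finset.mem_Icc.1 hx
      exact ⟨⟨x, by omega⟩, by simp; omega, rfl⟩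
    rw [Nat.card_Icc] at h2
    omega
  · have hmin : ∀ x y, colN K m x y = i.val → x = i.val - 3 ∨ y = i.val - 3 := by
      intro x y hxy
      unfold colN at hxy
      split_ifs at hxy with h1
      · rcases min_choice x y with h2 | h2 <;> rw [h2] at hxy <;> omega
      · have := labC_lt (labN K m x) (labN K m y); omega
    have e1 := hmin _ _ (hc 0 ⟨1, by omega⟩ (starPlus_adj0 _ _ (by simp) (by simp; omega)))
    have e2 := hmin _ _ (hc 0 ⟨2, by omega⟩ (starPlus_adj0 _ _ (by simp) (by simp; omega)))
    have e3 := hmin _ _ (hc ⟨2 * m, by omega⟩ ⟨2 * m + 1, by omega⟩ (starPlus_adj1 _ _ _ rfl rfl))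
    have ne : ∀ a b : Fin (2 * m + 2), a.val ≠ b.val → codeN M (f a) ≠ codeN M (f b) := by
      intro a b hab h
      exact hab (congrArg Fin.val (hg h))
    have n1 := ne ⟨1, by omega⟩ ⟨2, by omega⟩ (by simp)
    have n2 := ne 0 ⟨2 * m, by omega⟩ (by simp; omega)
    have n3 := ne 0 ⟨2 * m + 1, by omega⟩ (by simp)
    omega


lemma triOK_of {V : Type*} {k : ℕ} {G : SimpleGraph V} {c : V → V → Fin k}
    (h : NoRainbowTriangle G c) : TriOK G c := by
  intro x y z h1 h2 h3
  by_contra hc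
  push Not at hc
  exact h ⟨x, y, z, h1, h2, h3, hc.1, hc.2.1, hc.2.2⟩

lemma freeC_of {V : Type*} {k n : ℕ} (hn : 2 ≤ n) {G : SimpleGraph V} {c : V → V → Fin k}
    (hs : ∀ x y, c x y = c y x)
    (h : ¬ IsMonoCopy G c (starPlusG n)) : FreeC G c n := by
  intro e x s z T hT hx hsT hz hxz hxT hxs hcs hsz hcz
  apply h
  let g : Fin (n - 1) ≃ T := (Fintype.equivFinOfCardEq (by simpa using hT)).symm
  let f : Fin (n + 2) → V := fun j =>
    if j.val = 0 then x else if j.val = n then s else if j.val = n + 1 then z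
    else if hj : j.val - 1 < n - 1 then (g ⟨j.val - 1, hj⟩ : V) else x
  have f0 : ∀ j : Fin (n + 2), j.val = 0 → f j = x := by
    intro j hj; simp only [f, if_pos hj]
  have fn : ∀ j : Fin (n + 2), j.val = n → f j = s := by
    intro j hj
    have : ¬ j.val = 0 := by omega
    simp only [f, if_neg this, if_pos hj]
  have fz : ∀ j : Fin (n + 2), j.val = n + 1 → f j = z := by
    intro j hj
    have h1 : ¬ j.val = 0 := by omega
    have h2 : ¬ j.val = n := by omega
    simp only [f, if_neg h1, if_neg h2, if_pos hj]
  have fg : ∀ (j : Fin (n + 2)) (h1 : 1 ≤ j.val) (h2 : j.val < n),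
      f j = (g ⟨j.val - 1, by omega⟩ : V) := by
    intro j h1 h2
    have h1' : ¬ j.val = 0 := by omega
    have h2' : ¬ j.val = n := by omega
    have h3 : ¬ j.val = n + 1 := by omega
    have h4 : j.val - 1 < n - 1 := by omega
    simp only [f, if_neg h1', if_neg h2', if_neg h3, dif_pos h4]
  have ft : ∀ (j : Fin (n + 2)), 1 ≤ j.val → j.val < n → f j ∈ T := by
    intro j h1 h2
    rw [fg j h1 h2]
    exact (g _).2
  have cases4 : ∀ j : Fin (n + 2), j.val = 0 ∨ j.val = n ∨ j.val = n + 1 ∨ (1 ≤ j.val ∧ j.val < n) := by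
    intro j; omega
  have hxs' := hxs.ne
  have hsz' := hsz.ne
  refine ⟨f, e, ?_, ?_⟩
  · intro a b hab
    apply Fin.ext
    rcases cases4 a with ha | ha | ha | ha <;> rcases cases4 b with hb | hb | hb | hb
    · omega
    · rw [f0 a ha, fn b hb] at hab; exact absurd hab hxs'
    · rw [f0 a ha, fz b hb] at hab; exact absurd hab hxz
    · have := ft b hb.1 hb.2; rw [← hab, f0 a ha] at this; exact absurd this hx
    · rw [fn a ha, f0 b hb] at hab; exact absurd hab.symm hxs'
    · omega
    · rw [fn a ha, fz b hb] at hab; exact absurd hab hsz'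
    · have := ft b hb.1 hb.2; rw [← hab, fn a ha] at this; exact absurd this hsT
    · rw [fz a ha, f0 b hb] at hab; exact absurd hab.symm hxz
    · rw [fz a ha, fn b hb] at hab; exact absurd hab.symm hsz'
    · omega
    · have := ft b hb.1 hb.2; rw [← hab, fz a ha] at this; exact absurd this hz
    · have := ft a ha.1 ha.2; rw [hab, f0 b hb] at this; exact absurd this hx
    · have := ft a ha.1 ha.2; rw [hab, fn b hb] at this; exact absurd this hsT
    · have := ft a ha.1 ha.2; rw [hab, fz b hb] at this; exact absurd this hz
    · rw [fg a ha.1 ha.2, fg b hb.1 hb.2] at hab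
      have h1 := g.injective (Subtype.ext hab)
      have h2 := congrArg Fin.val h1
      dsimp only at h2
      omega
  · have key : ∀ a b : Fin (n + 2), a ≠ b → ((a = 0 ∧ b.val ≤ n) ∨ (a.val = n ∧ b.val = n + 1)) →
        G.Adj (f a) (f b) ∧ c (f a) (f b) = e := by
      rintro a b hab (⟨ha, hb⟩ | ⟨ha, hb⟩)
      · have ha0 : a.val = 0 := by rw [ha]; rfl
        have hb0 : b.val ≠ 0 := fun h => hab (Fin.ext (by omega))
        rw [f0 a ha0]
        by_cases hbn : b.val = n
        · rw [fn b hbn]; exact ⟨hxs, hcs⟩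
        · exact hxT _ (ft b (by omega) (by omega))
      · rw [fn a ha, fz b hb]; exact ⟨hsz, hcz⟩
    intro a b hab
    unfold starPlusG at hab
    rw [SimpleGraph.fromRel_adj] at hab
    obtain ⟨hne, h1 | h1⟩ := hab
    · exact key a b hne h1
    · have := key b a hne.symm h1
      exact ⟨this.1.symm, by rw [hs]; exact this.2⟩

lemma noRainbow_comap {V W : Type*} {k : ℕ} {G : SimpleGraph V} {G' : SimpleGraph W}
    (φ : V → W) (hφ : ∀ x y, G.Adj x y → G'.Adj (φ x) (φ y)) {c : W → W → Fin k}
    (h : NoRainbowTriangle G' c) : NoRainbowTriangle G (fun x y => c (φ x) (φ y)) := by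
  rintro ⟨x, y, z, h1, h2, h3, h4⟩
  exact h ⟨φ x, φ y, φ z, hφ _ _ h1, hφ _ _ h2, hφ _ _ h3, h4⟩

lemma isMonoCopy_map {V W α : Type*} {k : ℕ} {G : SimpleGraph V} {G' : SimpleGraph W}
    (φ : V → W) (hi : Function.Injective φ) (hφ : ∀ x y, G.Adj x y → G'.Adj (φ x) (φ y))
    {c : W → W → Fin k} {H : SimpleGraph α}
    (h : IsMonoCopy G (fun x y => c (φ x) (φ y)) H) : IsMonoCopy G' c H := by
  obtain ⟨f, i, hf, h⟩ := h
  exact ⟨φ ∘ f, i, hi.comp hf, fun a b hab => ⟨hφ _ _ (h a b hab).1, (h a b hab).2⟩⟩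

lemma part_one (k m M : ℕ) (hk : 3 ≤ k) (hm : 6 ≤ m) (hM : M = 5 * m + k - 7)
    (A : Finset (Fin M)) (hA : A.card = 4 * m + k - 5) (c : Option (Fin M) → Option (Fin M) → Fin k)
    (hs : ∀ x y, c x y = c y x) (hc : NoRainbowTriangle (addVertex M ↑A) c) :
    IsMonoCopy (addVertex M ↑A) c (starPlusG (2 * m)) := by
  classical
  by_contra hno
  refine upper_main (addVertex M ↑A) c hs (triOK_of hc) none m hm (freeC_of (by omega) hs hno)
    Finset.univ Finset.univ (Finset.mem_univ _) ?_ ?_ ?_ (fun _ _ _ _ _ => Finset.mem_univ _)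
  · intro x _ y _ hx hy hxy
    obtain ⟨a, rfl⟩ := Option.ne_none_iff_exists'.1 hx
    obtain ⟨b, rfl⟩ := Option.ne_none_iff_exists'.1 hy
    exact Or.inl ⟨a, b, rfl, rfl, fun h => hxy (h ▸ rfl)⟩
  · have h1 : (((Finset.univ : Finset (Option (Fin M))).erase none).filter
        (fun y => ¬ (addVertex M ↑A).Adj none y)) ⊆ (Finset.univ \ A).image some := by
      intro y hy
      rw [Finset.mem_filter, Finset.mem_erase] at hy
      obtain ⟨b, rfl⟩ := Option.ne_none_iff_exists'.1 hy.1.1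
      refine Finset.mem_image.2 ⟨b, ?_, rfl⟩
      rw [Finset.mem_sdiff]
      exact ⟨Finset.mem_univ _, fun hb => hy.2 (Or.inr ⟨b, hb, Or.inr ⟨rfl, rfl⟩⟩)⟩
    have h2 := (Finset.card_le_card h1).trans Finset.card_image_le
    have h3 := Finset.card_sdiff_of_subset (Finset.subset_univ A)
    rw [Finset.card_univ, Fintype.card_fin] at h3
    refine le_trans (le_of_eq ?_) (h2.trans (by omega : _ ≤ m - 2))
    congr!
  · rw [Finset.card_univ, Finset.card_univ, Fintype.card_option, Fintype.card_fin, Fintype.card_fin]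
    omega

/-- the vertex map from the extended graph -/
def optSucc (M : ℕ) : Option (Fin M) → Fin (M + 1)
  | none => 0
  | some j => j.succ

lemma optSucc_inj (M : ℕ) : Function.Injective (optSucc M) := by
  intro x y h
  rcases x with _ | x <;> rcases y with _ | y
  · rfl
  · exact absurd h.symm (Fin.succ_ne_zero _)
  · exact absurd h (Fin.succ_ne_zero _)
  · exact congrArg some (Fin.succ_injective _ h)

lemma gallaiRamsey_eq (k m : ℕ) (hk : 3 ≤ k) (hm : 6 ≤ m) :
    GallaiRamsey k (starPlusG (2 * m)) = 5 * m + k - 7 + 1 := by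
  unfold GallaiRamsey
  set M := 5 * m + k - 7 with hM
  apply le_antisymm
  · apply Nat.sInf_le
    intro c hs hc
    obtain ⟨A, -, hA⟩ := Finset.exists_subset_card_eq
      (show 4 * m + k - 5 ≤ (Finset.univ : Finset (Fin M)).card by
        rw [Finset.card_univ, Fintype.card_fin]; omega)
    have hφ : ∀ x y, (addVertex M ↑A).Adj x y →
        (⊤ : SimpleGraph (Fin (M + 1))).Adj (optSucc M x) (optSucc M y) :=
      fun x y h => fun h' => h.ne (optSucc_inj M h')
    exact isMonoCopy_map (optSucc M) (optSucc_inj M) hφ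
      (part_one k m M hk hm hM A hA _ (fun _ _ => hs _ _) (noRainbow_comap _ hφ hc))
  · have hne : {N | ∀ c : Fin N → Fin N → Fin k, (∀ x y, c x y = c y x) →
        NoRainbowTriangle (⊤ : SimpleGraph (Fin N)) c →
        IsMonoCopy (⊤ : SimpleGraph (Fin N)) c (starPlusG (2 * m))}.Nonempty := by
      refine ⟨M + 1, ?_⟩
      intro c hs hc
      obtain ⟨A, -, hA⟩ := Finset.exists_subset_card_eq
        (show 4 * m + k - 5 ≤ (Finset.univ : Finset (Fin M)).card by
          rw [Finset.card_univ, Fintype.card_fin]; omega)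
      have hφ : ∀ x y, (addVertex M ↑A).Adj x y →
          (⊤ : SimpleGraph (Fin (M + 1))).Adj (optSucc M x) (optSucc M y) :=
        fun x y h => fun h' => h.ne (optSucc_inj M h')
      exact isMonoCopy_map (optSucc M) (optSucc_inj M) hφ
        (part_one k m M hk hm hM A hA _ (fun _ _ => hs _ _) (noRainbow_comap _ hφ hc))
    refine le_csInf hne ?_
    intro N hN
    by_contra hlt
    have hNM : N ≤ M := by omega
    have hinj : Function.Injective (fun j : Fin N => some (Fin.castLE hNM j)) := by
      intro a b h
      exact Fin.castLE_injective hNM (Option.some_injective _ h)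
    have hφ : ∀ x y : Fin N, (⊤ : SimpleGraph (Fin N)).Adj x y →
        (addVertex M ↑(lowA (k - 3) m M)).Adj (some (Fin.castLE hNM x)) (some (Fin.castLE hNM y)) := by
      intro x y h
      exact Or.inl ⟨_, _, rfl, rfl, fun h' => h (Fin.castLE_injective hNM h')⟩
    have h1 := hN (fun x y => lowC (k - 3) m M k (by omega) (some (Fin.castLE hNM x)) (some (Fin.castLE hNM y)))
      (fun x y => lowC_symm _ _ _ _ _ _ _)
      (noRainbow_comap (G := (⊤ : SimpleGraph (Fin N))) (G' := ⊤) (fun j : Fin N => some (Fin.castLE hNM j))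
        (fun x y h => fun h' => h (hinj h')) (lowC_tri (k - 3) m M k (by omega) _))
    exact low_free (k - 3) m M k (by omega) hm (by omega) _ (Finset.Subset.refl _)
      (isMonoCopy_map (fun j : Fin N => some (Fin.castLE hNM j)) hinj hφ h1)

lemma part_two (k m : ℕ) (hk : 3 ≤ k) (hm : 6 ≤ m) :
    GRstar k (starPlusG (2 * m)) = 4 * m + k - 5 := by
  unfold GRstar
  have hG : GallaiRamsey k (starPlusG (2 * m)) - 1 = 5 * m + k - 7 := by
    rw [gallaiRamsey_eq k m hk hm]; omega
  generalize GallaiRamsey k (starPlusG (2 * m)) - 1 = M at hG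
  apply le_antisymm
  · apply Nat.sInf_le
    intro A hA c hs hc
    exact part_one k m M hk hm hG A hA c hs hc
  · refine le_csInf ⟨4 * m + k - 5, fun A hA c hs hc => part_one k m M hk hm hG A hA c hs hc⟩ ?_
    intro s hsm
    by_contra hlt
    have hc0 := lowA_card (k - 3) m M hm (by omega)
    obtain ⟨A, hA, hAc⟩ := Finset.exists_subset_card_eq
      (show s ≤ (lowA (k - 3) m M).card by omega)
    exact low_free (k - 3) m M k (by omega) hm (by omega) A hA
      (hsm A hAc (lowC (k - 3) m M k (by omega)) (lowC_symm _ _ _ _ _) (lowC_tri _ _ _ _ _ _))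

lemma part_three (k m : ℕ) (hk : 3 ≤ k) (hm : 6 ≤ m) :
    ¬ GallaiRamseyFull k (starPlusG (2 * m)) := by
  unfold GallaiRamseyFull
  rw [gallaiRamsey_eq k m hk hm]
  obtain ⟨M, hM⟩ : ∃ M, M = 5 * m + k - 7 := ⟨_, rfl⟩
  rw [← hM]
  rintro ⟨c, hs, hc, hno⟩
  apply hno
  have h0 : 0 < M := by omega
  obtain ⟨A, hA0, hA⟩ := Finset.exists_subset_card_eq
    (show 4 * m + k - 5 ≤ ((Finset.univ : Finset (Fin M)).erase ⟨0, h0⟩).card by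
      rw [Finset.card_erase_of_mem (Finset.mem_univ _), Finset.card_univ, Fintype.card_fin]; omega)
  have hA1 : ∀ a ∈ A, a.val ≠ 0 := by
    intro a ha h
    exact (Finset.mem_erase.1 (hA0 ha)).1 (Fin.ext h)
  have hφ : ∀ x y, (addVertex M ↑A).Adj x y →
      (compMinusEdge (M + 1)).Adj (optSucc M x) (optSucc M y) := by
    intro x y h
    refine ⟨fun h' => h.ne (optSucc_inj M h'), ?_, ?_⟩
    · rintro ⟨h1, h2⟩
      rcases h with ⟨a, b, rfl, rfl, -⟩ | ⟨a, ha, ⟨rfl, rfl⟩ | ⟨rfl, rfl⟩⟩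
      · simp [optSucc] at h1
      · simp [optSucc] at h1
      · have := hA1 a ha; simp [optSucc] at h2; omega
    · rintro ⟨h1, h2⟩
      rcases h with ⟨a, b, rfl, rfl, -⟩ | ⟨a, ha, ⟨rfl, rfl⟩ | ⟨rfl, rfl⟩⟩
      · simp [optSucc] at h2
      · have := hA1 a ha; simp [optSucc] at h1; omega
      · simp [optSucc] at h2
  exact isMonoCopy_map (optSucc M) (optSucc_inj M) hφ
    (part_one k m M hk hm hM A hA _ (fun _ _ => hs _ _) (noRainbow_comap _ hφ hc))

/-- For every `k ≥ 3` and even `n ≥ 12`, every rainbow-triangle-free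
`k`-coloring of the complete graph on `5n/2 + k − 7` vertices plus one extra
vertex joined to exactly `2n + k − 5` of them contains a monochromatic copy of
`K⁺_{1,n}`; consequently `GR*_k(K⁺_{1,n}) = 2n + k − 5` and `K⁺_{1,n}` is not
Gallai-Ramsey-full. -/
theorem starPlus_star_critical_upper (k n : ℕ) (hk : 3 ≤ k) (hn : 12 ≤ n)
    (hne : n % 2 = 0) :
    (∀ A : Finset (Fin (5 * n / 2 + k - 7)), A.card = 2 * n + k - 5 →
      ∀ c : Option (Fin (5 * n / 2 + k - 7)) → Option (Fin (5 * n / 2 + k - 7)) → Fin k,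
        (∀ x y, c x y = c y x) →
        NoRainbowTriangle (addVertex (5 * n / 2 + k - 7) (↑A)) c →
        IsMonoCopy (addVertex (5 * n / 2 + k - 7) (↑A)) c (starPlusG n)) ∧
    GRstar k (starPlusG n) = 2 * n + k - 5 ∧
    ¬ GallaiRamseyFull k (starPlusG n) := by
  obtain ⟨m, rfl⟩ : ∃ m, n = 2 * m := ⟨n / 2, by omega⟩
  have hm : 6 ≤ m := by omega
  refine ⟨?_, ?_, part_three k m hk hm⟩
  · intro A hA c hs hc
    exact part_one k m _ hk hm (by omega) A (by omega) c hs hc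
  · rw [part_two k m hk hm]; omega
end
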